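/- arXiv:1607.05246 — 4 statements merged into one kernel-verified Lean document; each statement's English description precedes it below -/
import Mathlib

section
/- For complex z with |z| < 1, the generating function of the Favard constants satisfies Σ_{r=0}^∞ K_r z^r = tan(πz/2) + sec(πz/2), where K_0 = 1. -/
noncomputable def favardK (r : ℕ) : ℝ :=
  (4 / Real.pi) * ∑' k : ℕ,
    (1 / (4 * (k:ℝ) + 1) ^ (r + 1) + (-1) ^ (r + 1) / (4 * (k:ℝ) + 3) ^ (r + 1))

/-!
Put `u k = 1 / (4 * k + 1)` and `v k = -1 / (4 * k + 3)`, so that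
`K_r = (4 / π) * ∑ k, (u k ^ (r + 1) + v k ^ (r + 1))`. The double series
`∑ r, ∑ k, (u k ^ (r + 1) + v k ^ (r + 1)) * z ^ r` converges absolutely once the terms are kept
paired: for `r = 0` because `∑ k, (u k + v k)` does, for `r ≥ 1` because `u` and `v` are
square-summable. Summing the geometric series in `r` first leaves
`∑ k, (1 / (4 * k + 1 - z) - 1 / (4 * k + 3 + z))`, which is the Mittag-Leffler expansion of the
cotangent at `x = (1 - z) / 4` with its poles `-k` and `k + 1` paired, and
`cot (π / 4 - w / 2) = tan w + sec w` at `w = π * z / 2`.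
-/

open Filter Topology

section PowerSums

theorem norm_pow_succ_add_pow_succ_le {R : Type*} [SeminormedRing R] {a b : R}
    (ha : ‖a‖ ≤ 1) (hb : ‖b‖ ≤ 1) (r : ℕ) :
    ‖a ^ (r + 1) + b ^ (r + 1)‖ ≤ ‖a + b‖ + (‖a‖ ^ 2 + ‖b‖ ^ 2) := by
  rcases r with _ | r
  · simpa using by positivity
  have norm_pow_le_sq {c : R} (hc : ‖c‖ ≤ 1) : ‖c ^ (r + 1 + 1)‖ ≤ ‖c‖ ^ 2 :=
    (norm_pow_le' c (by lia)).trans (pow_le_pow_of_le_one (norm_nonneg c) hc (by lia))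
  calc ‖a ^ (r + 1 + 1) + b ^ (r + 1 + 1)‖
      ≤ ‖a‖ ^ 2 + ‖b‖ ^ 2 := norm_add_le_of_le (norm_pow_le_sq ha) (norm_pow_le_sq hb)
    _ ≤ ‖a + b‖ + (‖a‖ ^ 2 + ‖b‖ ^ 2) := le_add_of_nonneg_left (norm_nonneg _)

variable {𝕜 : Type*} [NormedField 𝕜]

theorem hasSum_pow_succ_mul_pow {w z : 𝕜} (hwz : ‖w * z‖ < 1) :
    HasSum (fun r : ℕ => w ^ (r + 1) * z ^ r) (w / (1 - w * z)) := by
  simpa only [div_eq_mul_inv, mul_pow, pow_succ', mul_assoc] using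
    (hasSum_geometric_of_norm_lt_one hwz).mul_left w

variable [CompleteSpace 𝕜] {ι : Type*} {u v : ι → 𝕜} {z : 𝕜}

theorem summable_pow_succ_add_pow_succ_mul_pow (hu : ∀ k, ‖u k‖ ≤ 1) (hv : ∀ k, ‖v k‖ ≤ 1)
    (huv : Summable fun k => ‖u k + v k‖) (hu_sq : Summable fun k => ‖u k‖ ^ 2)
    (hv_sq : Summable fun k => ‖v k‖ ^ 2) (hz : ‖z‖ < 1) :
    Summable fun p : ℕ × ι => (u p.2 ^ (p.1 + 1) + v p.2 ^ (p.1 + 1)) * z ^ p.1 := by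
  refine .of_norm_bounded
    ((summable_geometric_of_lt_one (norm_nonneg z) hz).mul_of_nonneg (huv.add (hu_sq.add hv_sq))
      (fun r => by positivity) (fun k => by positivity)) fun ⟨r, k⟩ => ?_
  rw [norm_mul, norm_pow, mul_comm]
  gcongr
  exact norm_pow_succ_add_pow_succ_le (hu k) (hv k) r

theorem hasSum_tsum_pow_succ_add_pow_succ_mul_pow (hu : ∀ k, ‖u k‖ ≤ 1) (hv : ∀ k, ‖v k‖ ≤ 1)
    (huv : Summable fun k => ‖u k + v k‖) (hu_sq : Summable fun k => ‖u k‖ ^ 2)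
    (hv_sq : Summable fun k => ‖v k‖ ^ 2) (hz : ‖z‖ < 1) :
    HasSum (fun r : ℕ => (∑' k, (u k ^ (r + 1) + v k ^ (r + 1))) * z ^ r)
      (∑' k, (u k / (1 - u k * z) + v k / (1 - v k * z))) := by
  have double_summable := summable_pow_succ_add_pow_succ_mul_pow hu hv huv hu_sq hv_sq hz
  have norm_mul_lt_one {w : 𝕜} (hw : ‖w‖ ≤ 1) : ‖w * z‖ < 1 := by
    rw [norm_mul]
    exact mul_lt_one_of_nonneg_of_lt_one_right hw (norm_nonneg z) hz
  have sum_over_r (k : ι) : HasSum (fun r : ℕ => (u k ^ (r + 1) + v k ^ (r + 1)) * z ^ r)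
      (u k / (1 - u k * z) + v k / (1 - v k * z)) := by
    simpa only [add_mul] using (hasSum_pow_succ_mul_pow (norm_mul_lt_one (hu k))).add
      (hasSum_pow_succ_mul_pow (norm_mul_lt_one (hv k)))
  have sum_exchange : ∑' r : ℕ, ∑' k, (u k ^ (r + 1) + v k ^ (r + 1)) * z ^ r =
      ∑' k, (u k / (1 - u k * z) + v k / (1 - v k * z)) := by
    rw [← Summable.tsum_comm (f := fun r k => (u k ^ (r + 1) + v k ^ (r + 1)) * z ^ r)
      double_summable]
    exact tsum_congr fun k => (sum_over_r k).tsum_eq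
  rw [← sum_exchange]
  simpa only [tsum_mul_right] using double_summable.prod.hasSum

end PowerSums

section Cotangent

theorem hasSum_sub_succ {G : Type*} [AddCommGroup G] [TopologicalSpace G] [T2Space G]
    [IsTopologicalAddGroup G] {f : ℕ → G} {l : G} (hf : Summable fun k => f k - f (k + 1))
    (hl : Tendsto f atTop (𝓝 l)) : HasSum (fun k => f k - f (k + 1)) (f 0 - l) := by
  rw [hf.hasSum_iff_tendsto_nat]
  simpa only [Finset.sum_range_sub'] using hl.const_sub (f 0)

theorem mem_integerComplement_of_re_pos_of_re_lt_one {x : ℂ} (hx₀ : 0 < x.re) (hx₁ : x.re < 1) :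
    x ∈ Complex.integerComplement := by
  rintro ⟨m, rfl⟩
  rw [Complex.intCast_re] at hx₀ hx₁
  norm_cast at hx₀ hx₁
  lia

variable {x : ℂ}

theorem hasSum_inv_add_sub_inv_add_succ (hx : ∀ n : ℕ, x + n ≠ 0) :
    HasSum (fun k : ℕ => (x + k)⁻¹ - (x + (k + 1 : ℕ))⁻¹) x⁻¹ := by
  have summable_inv_mul : Summable fun k : ℕ => ((x + k + 1) * (x + k))⁻¹ := by
    simpa [Function.comp_def] using
      (EisensteinSeries.summable_linear_right_add_one_mul_linear_right x 1 1).comp_injective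
        Nat.cast_injective
  have summable_sub : Summable fun k : ℕ => (x + k)⁻¹ - (x + (k + 1 : ℕ))⁻¹ := by
    refine summable_inv_mul.congr fun k => ?_
    rw [inv_sub_inv (hx k) (hx (k + 1))]
    push_cast
    ring
  have tendsto_inv : Tendsto (fun k : ℕ => (x + k)⁻¹) atTop (𝓝 0) := by
    simpa using EisensteinSeries.tendsto_zero_inv_linear x 1
  simpa using hasSum_sub_succ summable_sub tendsto_inv

theorem hasSum_cotTerm (hx : x ∈ Complex.integerComplement) :
    HasSum (cotTerm x) (Real.pi * Complex.cot (Real.pi * x) - 1 / x) := by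
  rw [cot_series_rep' hx]
  exact (summable_cotTerm hx).hasSum

-- Moving `1 / x` into the cotangent series shifts its pairing `±(k + 1)` of poles to `-k, k + 1`.
theorem hasSum_inv_add_sub_inv_succ_sub (hx : x ∈ Complex.integerComplement) :
    HasSum (fun k : ℕ => (x + k)⁻¹ - (k + 1 - x)⁻¹) (Real.pi * Complex.cot (Real.pi * x)) := by
  have add_natCast_ne_zero (n : ℕ) : x + n ≠ 0 := by
    exact_mod_cast Complex.integerComplement_add_ne_zero hx n
  convert (hasSum_cotTerm hx).add (hasSum_inv_add_sub_inv_add_succ add_natCast_ne_zero) using 1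
  · funext k
    rw [cotTerm, ← neg_sub x ((k : ℂ) + 1), inv_neg]
    push_cast
    ring
  · ring

theorem cot_eq_cos_two_mul_add_one_div_sin_two_mul (y : ℂ) :
    Complex.cot y = (Complex.cos (2 * y) + 1) / Complex.sin (2 * y) := by
  rw [Complex.cot_eq_cos_div_sin, Complex.cos_two_mul, Complex.sin_two_mul]
  by_cases hy : Complex.cos y = 0
  · simp [hy]
  · field

theorem cot_pi_div_four_sub_half (w : ℂ) :
    Complex.cot (Real.pi / 4 - w / 2) = Complex.tan w + 1 / Complex.cos w := by
  have two_mul_angle : 2 * (Real.pi / 4 - w / 2) = Real.pi / 2 - w := by ring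
  rw [cot_eq_cos_two_mul_add_one_div_sin_two_mul, two_mul_angle, Complex.cos_pi_div_two_sub,
    Complex.sin_pi_div_two_sub, add_div, Complex.tan_eq_sin_div_cos]

end Cotangent

section Reciprocals

theorem inv_div_one_sub_inv_mul {K : Type*} [Field K] {w : K} (hw : w ≠ 0) (z : K) :
    w⁻¹ / (1 - w⁻¹ * z) = (w - z)⁻¹ := by
  rw [inv_div_left, sub_mul, one_mul, mul_right_comm, inv_mul_cancel₀ hw, one_mul]

theorem norm_inv_natCast_le_one (n : ℕ) : ‖(n : ℂ)⁻¹‖ ≤ 1 := by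
  rw [norm_inv, Complex.norm_natCast]
  exact Nat.cast_inv_le_one n

theorem summable_norm_inv_natCast_mul_add_sq {m : ℕ} (hm : m ≠ 0) (a : ℕ) :
    Summable fun k : ℕ => ‖((m * k + a : ℕ) : ℂ)⁻¹‖ ^ 2 := by
  have injective_mul_add : Function.Injective fun k => m * k + a :=
    (add_left_injective a).comp (mul_right_injective₀ hm)
  simpa only [norm_inv, Complex.norm_natCast, inv_pow, Function.comp_def] using
    (Real.summable_nat_pow_inv.2 one_lt_two).comp_injective injective_mul_add

end Reciprocals

section Favard

variable {z : ℂ}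

theorem one_sub_div_four_mem_integerComplement (hz : ‖z‖ < 1) :
    (1 - z) / 4 ∈ Complex.integerComplement := by
  have re_bounds := abs_lt.1 ((Complex.abs_re_le_norm z).trans_lt hz)
  have re_eq : ((1 - z) / 4).re = (1 - z.re) / 4 := by simp
  exact mem_integerComplement_of_re_pos_of_re_lt_one (by linarith) (by linarith)

theorem hasSum_pi_div_four_mul_tan_add_sec (hz : (1 - z) / 4 ∈ Complex.integerComplement) :
    HasSum (fun k : ℕ => (4 * k + 1 - z)⁻¹ - (4 * k + 3 + z)⁻¹)
      (Real.pi / 4 * (Complex.tan (Real.pi * z / 2) + 1 / Complex.cos (Real.pi * z / 2))) := by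
  have angle_eq : Real.pi * ((1 - z) / 4) = Real.pi / 4 - Real.pi * z / 2 / 2 := by ring
  have hasSum_div_four := (hasSum_inv_add_sub_inv_succ_sub hz).div_const 4
  rw [angle_eq, cot_pi_div_four_sub_half, mul_div_right_comm] at hasSum_div_four
  refine hasSum_div_four.congr_fun fun k => ?_
  rw [sub_div, inv_div_left, inv_div_left]
  ring_nf

theorem favardK_eq_tsum_pow (r : ℕ) :
    (favardK r : ℂ) = 4 / Real.pi *
      ∑' k : ℕ, (((4 * k + 1 : ℕ) : ℂ)⁻¹ ^ (r + 1) + (-((4 * k + 3 : ℕ) : ℂ)⁻¹) ^ (r + 1)) := by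
  simp only [favardK, Complex.ofReal_mul, Complex.ofReal_tsum]
  push_cast
  congr! 4 with k
  · rw [one_div, inv_pow]
  · rw [neg_pow (4 * (k : ℂ) + 3)⁻¹, inv_pow, div_eq_mul_inv]

theorem hasSum_favardK_mul_pow (hz : ‖z‖ < 1) :
    HasSum (fun r : ℕ => (favardK r : ℂ) * z ^ r)
      (4 / Real.pi * ∑' k : ℕ, ((4 * k + 1 - z)⁻¹ - (4 * k + 3 + z)⁻¹)) := by
  let u : ℕ → ℂ := fun k => ((4 * k + 1 : ℕ) : ℂ)⁻¹
  let v : ℕ → ℂ := fun k => -((4 * k + 3 : ℕ) : ℂ)⁻¹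
  have hu (k : ℕ) : ‖u k‖ ≤ 1 := norm_inv_natCast_le_one _
  have hv (k : ℕ) : ‖v k‖ ≤ 1 := (norm_neg _).trans_le (norm_inv_natCast_le_one _)
  have huv : Summable fun k => ‖u k + v k‖ := by
    have hasSum_at_zero := hasSum_pi_div_four_mul_tan_add_sec
      (one_sub_div_four_mem_integerComplement (norm_zero.trans_lt one_pos))
    simpa [u, v, sub_eq_add_neg] using hasSum_at_zero.summable.norm
  have hu_sq : Summable fun k => ‖u k‖ ^ 2 := summable_norm_inv_natCast_mul_add_sq four_ne_zero 1
  have hv_sq : Summable fun k => ‖v k‖ ^ 2 := by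
    simpa only [v, norm_neg] using summable_norm_inv_natCast_mul_add_sq four_ne_zero 3
  have closed_form (k : ℕ) : u k / (1 - u k * z) + v k / (1 - v k * z) =
      (4 * k + 1 - z)⁻¹ - (4 * k + 3 + z)⁻¹ := by
    simp only [u, v, ← inv_neg]
    rw [inv_div_one_sub_inv_mul (by norm_cast), inv_div_one_sub_inv_mul (by norm_cast),
      ← neg_add', inv_neg, ← sub_eq_add_neg]
    push_cast
    rfl
  have generating_function :=
    (hasSum_tsum_pow_succ_add_pow_succ_mul_pow hu hv huv hu_sq hv_sq hz).mul_left
      (4 / Real.pi : ℂ)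
  simpa only [closed_form, favardK_eq_tsum_pow, mul_assoc] using generating_function

end Favard

/-- Generating function of the Favard constants:
`Σ_{r≥0} K_r z^r = tan(πz/2) + sec(πz/2)` for `|z| < 1` (note `K_0 = 1`). -/
theorem favard_generating_function (z : ℂ) (hz : ‖z‖ < 1) :
    HasSum (fun r : ℕ => (favardK r : ℂ) * z ^ r)
      (Complex.tan (Real.pi * z / 2) + 1 / Complex.cos (Real.pi * z / 2)) := by
  have tan_add_sec_eq := (hasSum_pi_div_four_mul_tan_add_sec
    (one_sub_div_four_mem_integerComplement hz)).tsum_eq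
  have pi_ne_zero : (Real.pi : ℂ) ≠ 0 := Complex.ofReal_ne_zero.2 Real.pi_ne_zero
  convert hasSum_favardK_mul_pow hz using 1
  rw [tan_add_sec_eq]
  field
end

section
/- For fixed natural numbers n, m ≥ 1 and any h with 1/(2mn) ≤ h < 1, the best L¹ approximation of χ_h^m by trigonometric polynomials of degree ≤ n−1 satisfies E_{n−1}(χ_h^m)_{L¹} ≤ K_m/(πhn)^m. -/
noncomputable def chi (h : ℝ) : ℝ → ℝ := fun θ =>
  if |θ - 2 * Real.pi * (round (θ / (2 * Real.pi)) : ℤ)| ≤ Real.pi * h then 1 / h else 0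

/-- Convolution on the circle, normalized by \`1/(2π)\`. -/
noncomputable def conv (f g : ℝ → ℝ) : ℝ → ℝ := fun θ =>
  (1 / (2 * Real.pi)) * ∫ φ in (0:ℝ)..(2 * Real.pi), f (θ - φ) * g φ

/-- \`chiConv h m\` is the \`m\`-fold self-convolution \`χ_h ∗ ⋯ ∗ χ_h\` (for \`m ≥ 1\`). -/
noncomputable def chiConv (h : ℝ) : ℕ → ℝ → ℝ
  | 0 => fun _ => 0
  | 1 => chi h
  | (m + 2) => conv (chi h) (chiConv h (m + 1))

/-- Trigonometric polynomials of degree at most \`n\` (complex coefficients). -/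
def trigPoly (n : ℕ) : Set (ℝ → ℂ) :=
  {t | ∃ c : ℤ → ℂ, t = fun θ : ℝ =>
    ∑ k ∈ Finset.Icc (-(n:ℤ)) (n:ℤ), c k * Complex.exp (k * (θ:ℂ) * Complex.I)}

noncomputable def L1norm (f : ℝ → ℂ) : ℝ :=
  (1 / (2 * Real.pi)) * ∫ φ in (0:ℝ)..(2 * Real.pi), ‖f φ‖

/-- Best approximation in \`L¹(𝕋)\` by trigonometric polynomials of degree at most \`n\`. -/
noncomputable def bestApprox (n : ℕ) (f : ℝ → ℂ) : ℝ :=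
  sInf ((fun t : ℝ → ℂ => L1norm (fun θ => f θ - t θ)) '' (trigPoly n))

/-!
Let `B_m` be the `2π`-periodic Bernoulli kernel `∑ 2 cos (kx - mπ/2) / kᵐ` (over `k ≥ 1`). Its
Favard bound comes from Nagy's construction: subtracting a suitable trigonometric polynomial of
degree `< n` from `∑ 2 sᵏ cos (kx - mπ/2)` leaves a multiple of the Poisson kernel times
`cos (nx - mπ/2)`. As the Poisson kernel is positive, the `L¹` norm of this error is its integral
against the square wave `sgn cos (nx - mπ/2)`, which annihilates degrees `< n`, so it is a series
of powers of `s`. Integrating over a measure in `s` whose `k`-th moment is `1/kᵐ` turns the kernel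
into `B_m` and the series into `K_m/nᵐ`.

Let `δf(x) = f(x + πh) - f(x - πh)`. Since `χ_h = 1 + (2πh)⁻¹ δB_1` almost everywhere, and
convolution with `χ_h` is `(2πh)⁻¹ δ` applied to a primitive, `χ_h^m = 1 + (2πh)⁻ᵐ δᵐ B_m`. Each
`δ` at most doubles the error of best approximation.
-/

namespace Favard

open Real MeasureTheory Set Filter
open scoped ComplexConjugate Topology

section PeriodicIntegral

variable {T : ℝ}

lemma integral_comp_add_right_of_periodic {E : Type*} [NormedAddCommGroup E] [NormedSpace ℝ E]
    {f : ℝ → E} (hf : Function.Periodic f T) (a : ℝ) :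
    ∫ x in (0 : ℝ)..T, f (x + a) = ∫ x in (0 : ℝ)..T, f x := by
  rw [intervalIntegral.integral_comp_add_right, zero_add, add_comm T a,
    hf.intervalIntegral_add_eq a 0, zero_add]

lemma integral_eq_zero_of_periodic_of_comp_add_right {f : ℝ → ℂ} (hf : Function.Periodic f T)
    {a : ℝ} {c : ℂ} (hc : c ≠ 1) (hfa : ∀ x, f (x + a) = c * f x) :
    ∫ x in (0 : ℝ)..T, f x = 0 := by
  have hshift := integral_comp_add_right_of_periodic hf a
  simp_rw [hfa, intervalIntegral.integral_const_mul] at hshift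
  have hzero : (c - 1) * ∫ x in (0 : ℝ)..T, f x = 0 := by linear_combination hshift
  exact (mul_eq_zero.mp hzero).resolve_left (sub_ne_zero.mpr hc)

end PeriodicIntegral

section CosSign

lemma measurable_real_sign : Measurable Real.sign :=
  Measurable.ite measurableSet_Iio measurable_const
    (Measurable.ite measurableSet_Ioi measurable_const measurable_const)

lemma abs_real_sign_le_one (r : ℝ) : |Real.sign r| ≤ 1 := by
  rcases Real.sign_apply_eq r with h | h | h <;> simp [h]

lemma mul_real_sign (r : ℝ) : r * Real.sign r = |r| := by
  rcases lt_trichotomy r 0 with h | rfl | h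
  · rw [Real.sign_of_neg h, abs_of_neg h, mul_neg_one]
  · simp
  · rw [Real.sign_of_pos h, abs_of_pos h, mul_one]

/-- The square wave `sgn cos (n x - φ)`, orthogonal to all trigonometric polynomials of degree
less than `n`. -/
noncomputable def cosSign (n : ℕ) (φ x : ℝ) : ℝ := Real.sign (cos (n * x - φ))

variable {n : ℕ}

@[fun_prop]
lemma measurable_cosSign (n : ℕ) (φ : ℝ) : Measurable (cosSign n φ) :=
  measurable_real_sign.comp (by fun_prop)

lemma abs_cosSign_le_one (n : ℕ) (φ x : ℝ) : |cosSign n φ x| ≤ 1 := abs_real_sign_le_one _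

lemma cosSign_add_pi_div (hn : n ≠ 0) (φ x : ℝ) : cosSign n φ (x + π / n) = -cosSign n φ x := by
  have hangle : n * (x + π / n) - φ = (n * x - φ) + π := by field_simp; ring
  rw [cosSign, hangle, cos_add_pi, Real.sign_neg, cosSign]

lemma periodic_cosSign (n : ℕ) (φ : ℝ) : Function.Periodic (cosSign n φ) (2 * π) := fun x ↦ by
  have hangle : n * (x + 2 * π) - φ = (n * x - φ) + n * (2 * π) := by ring
  rw [cosSign, hangle, cos_add_nat_mul_two_pi, cosSign]

lemma abs_cos_mul_cosSign_le_one (k n : ℕ) (ψ φ x : ℝ) :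
    |cos (k * x - ψ) * cosSign n φ x| ≤ 1 := by
  rw [abs_mul]
  exact mul_le_one₀ (abs_cos_le_one _) (abs_nonneg _) (abs_cosSign_le_one n φ x)

lemma intervalIntegrable_cos_mul_cosSign (k n : ℕ) (ψ φ a b : ℝ) :
    IntervalIntegrable (fun x ↦ cos (k * x - ψ) * cosSign n φ x) volume a b :=
  (intervalIntegrable_const (c := (1 : ℝ))).mono_fun' (by fun_prop)
    (.of_forall (abs_cos_mul_cosSign_le_one k n ψ φ))

lemma exists_odd_multiple_of_circleMap_eq_neg_one (hn : n ≠ 0) {k : ℕ}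
    (h : circleMap 0 1 (k * (π / n)) = -1) : ∃ l : ℕ, k = n * (2 * l + 1) := by
  have hpi : circleMap 0 1 π = -1 := by simp [circleMap]
  obtain ⟨j, hj⟩ := (circleMap_eq_circleMap_iff 0 one_ne_zero).mp (h.trans hpi.symm)
  have hreal : (k : ℝ) * (π / n) = π + j * (2 * π) := by
    have hj' : ((k * (π / n) : ℝ) : ℂ) * Complex.I = ((π + j * (2 * π) : ℝ) : ℂ) * Complex.I := by
      rw [hj]; push_cast; ring
    exact_mod_cast mul_right_cancel₀ Complex.I_ne_zero hj'
  have hk : (k : ℤ) = n * (2 * j + 1) := by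
    have : (k : ℝ) = n * (2 * j + 1) := by
      field_simp at hreal
      linarith
    exact_mod_cast this
  have hj0 : 0 ≤ j := by
    by_contra! hneg
    have : (n : ℤ) * (2 * j + 1) < 0 :=
      mul_neg_of_pos_of_neg (by exact_mod_cast Nat.pos_of_ne_zero hn) (by omega)
    omega
  lift j to ℕ using hj0
  exact ⟨j, by exact_mod_cast hk⟩

lemma integral_circleMap_mul_cosSign_eq_zero (hn : n ≠ 0) {k : ℕ}
    (hk : ∀ l : ℕ, k ≠ n * (2 * l + 1)) (ψ φ : ℝ) :
    ∫ x in (0 : ℝ)..(2 * π), circleMap 0 1 (k * x - ψ) * (cosSign n φ x : ℂ) = 0 := by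
  have hadd : ∀ x a : ℝ,
      circleMap 0 1 (k * (x + a) - ψ) = circleMap 0 1 (k * a) * circleMap 0 1 (k * x - ψ) := by
    intro x a
    rw [circleMap_zero_mul, one_mul]
    congr 1
    ring
  have hne : -circleMap 0 1 (k * (π / n)) ≠ 1 := fun h ↦ by
    obtain ⟨l, hl⟩ := exists_odd_multiple_of_circleMap_eq_neg_one hn (neg_eq_iff_eq_neg.mp h)
    exact hk l hl
  refine integral_eq_zero_of_periodic_of_comp_add_right (a := π / n) (fun x ↦ ?_) hne (fun x ↦ ?_)
  · have hperiod : circleMap 0 1 (k * (2 * π)) = 1 := by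
      have := (periodic_circleMap 0 1).nat_mul_eq k
      simpa [circleMap] using this
    rw [hadd, hperiod, one_mul, periodic_cosSign]
  · rw [hadd, cosSign_add_pi_div hn]
    push_cast
    ring

lemma integral_cos_mul_cosSign_eq_zero (hn : n ≠ 0) {k : ℕ} (hk : ∀ l : ℕ, k ≠ n * (2 * l + 1))
    (ψ φ : ℝ) : ∫ x in (0 : ℝ)..(2 * π), cos (k * x - ψ) * cosSign n φ x = 0 := by
  have hint : IntervalIntegrable (fun x : ℝ ↦ circleMap 0 1 (k * x - ψ) * (cosSign n φ x : ℂ))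
      volume 0 (2 * π) := by
    refine (intervalIntegrable_const (c := (1 : ℝ))).mono_fun' ?_ (.of_forall fun x ↦ ?_)
    · have := measurable_circleMap 0 1
      fun_prop
    · simpa using abs_cosSign_le_one n φ x
  have hre := Complex.reCLM.intervalIntegral_comp_comm hint
  rw [integral_circleMap_mul_cosSign_eq_zero hn hk] at hre
  simpa [circleMap_zero_re] using hre

lemma integral_cos_odd_mul_sign_cos (l : ℕ) :
    ∫ y in (-(π / 2))..(-(π / 2) + 2 * π), cos ((2 * l + 1 : ℕ) * y) * Real.sign (cos y) =
      4 * (-1) ^ l / (2 * l + 1 : ℕ) := by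
  have hpi := pi_pos
  have hint : ∀ a b, IntervalIntegrable
      (fun y ↦ cos ((2 * l + 1 : ℕ) * y) * Real.sign (cos y)) volume a b := fun a b ↦ by
    simpa [cosSign] using intervalIntegrable_cos_mul_cosSign (2 * l + 1) 1 0 0 a b
  have hprim : ∀ a b, ∫ y in a..b, cos ((2 * l + 1 : ℕ) * y) =
      (sin ((2 * l + 1 : ℕ) * b) - sin ((2 * l + 1 : ℕ) * a)) / (2 * l + 1 : ℕ) := fun a b ↦ by
    rw [intervalIntegral.integral_comp_mul_left cos (by positivity), integral_cos, smul_eq_mul,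
      inv_mul_eq_div]
  have hsin : sin ((2 * l + 1 : ℕ) * (π / 2)) = (-1) ^ l := by
    rw [show ((2 * l + 1 : ℕ) : ℝ) * (π / 2) = l * π + π / 2 by push_cast; ring,
      sin_add_pi_div_two, cos_nat_mul_pi]
  have hpos : ∫ y in (-(π / 2))..(π / 2), cos ((2 * l + 1 : ℕ) * y) * Real.sign (cos y) =
      ∫ y in (-(π / 2))..(π / 2), cos ((2 * l + 1 : ℕ) * y) :=
    intervalIntegral.integral_congr_Ioo_of_le (by linarith) fun y hy ↦ by
      rw [Real.sign_of_pos (cos_pos_of_mem_Ioo hy), mul_one]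
  have hneg : ∫ y in (π / 2)..(-(π / 2) + 2 * π), cos ((2 * l + 1 : ℕ) * y) * Real.sign (cos y) =
      ∫ y in (π / 2)..(-(π / 2) + 2 * π), -cos ((2 * l + 1 : ℕ) * y) :=
    intervalIntegral.integral_congr_Ioo_of_le (by linarith) fun y hy ↦ by
      rw [Real.sign_of_neg (cos_neg_of_pi_div_two_lt_of_lt hy.1 (by linarith [hy.2])),
        mul_neg_one]
  rw [← intervalIntegral.integral_add_adjacent_intervals (hint _ (π / 2)) (hint (π / 2) _),
    hpos, hneg, intervalIntegral.integral_neg, hprim, hprim, mul_add _ (-(π / 2)), mul_neg,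
    sin_add_nat_mul_two_pi, sin_neg, hsin]
  ring

/-- The phase `mπ/2` by which the `m`-fold antiderivative of a cosine is shifted. -/
noncomputable def phase (m : ℕ) : ℝ := m * (π / 2)

lemma integral_cos_odd_multiple_mul_cosSign (hn : n ≠ 0) (m l : ℕ) :
    ∫ x in (0 : ℝ)..(2 * π), cos ((n * (2 * l + 1) : ℕ) * x - phase m) * cosSign n (phase m) x =
      4 * ((-1) ^ (m + 1)) ^ l / (2 * l + 1 : ℕ) := by
  set g : ℝ → ℝ := fun y ↦ cos ((2 * l + 1 : ℕ) * y) * Real.sign (cos y) with hg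
  have hper : Function.Periodic g (2 * π) := fun y ↦ by
    simp only [hg, cos_add_two_pi, mul_add, cos_add_nat_mul_two_pi]
  have hint : ∀ a b, IntervalIntegrable g volume a b := fun a b ↦ by
    simpa [cosSign, hg] using intervalIntegrable_cos_mul_cosSign (2 * l + 1) 1 0 0 a b
  have hsubst : ∀ x, cos ((n * (2 * l + 1) : ℕ) * x - phase m) * cosSign n (phase m) x =
      ((-1) ^ m) ^ l * g (n * x - phase m) := fun x ↦ by
    have hangle : ((n * (2 * l + 1) : ℕ) : ℝ) * x - phase m =
        (2 * l + 1 : ℕ) * (n * x - phase m) + (m * l : ℕ) * π := by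
      simp only [phase]; push_cast; ring
    rw [hangle, cos_add_nat_mul_pi, pow_mul, mul_assoc, cosSign]
  have hperiods : ∫ y in (n * 0 - phase m)..(n * (2 * π) - phase m), g y =
      n * (4 * (-1) ^ l / (2 * l + 1 : ℕ)) := by
    have := hper.intervalIntegral_add_zsmul_eq n (n * 0 - phase m) hint
    rw [hper.intervalIntegral_add_eq _ (-(π / 2)), integral_cos_odd_mul_sign_cos, zsmul_eq_mul,
      zsmul_eq_mul, Int.cast_natCast] at this
    rw [← this]
    congr 1
    ring
  simp_rw [hsubst]
  rw [intervalIntegral.integral_const_mul,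
    intervalIntegral.integral_comp_mul_sub g (by positivity), hperiods, smul_eq_mul, pow_succ,
    mul_pow]
  field_simp

end CosSign

section Kernel

lemma pow_mul_div_one_sub_mul_one_sub {z w : ℂ} (hz : 1 - z ≠ 0) (hw : 1 - w ≠ 0) (N : ℕ) :
    z ^ (N + 1) * ((1 - z * w) / ((1 - z) * (1 - w))) =
      z / (1 - z) - ∑ j ∈ Finset.range N, (1 - (z * w) ^ (N - j)) * z ^ (j + 1)
        + (z * w) ^ (N + 1) / (1 - w) := by
  induction N with
  | zero =>
    rw [Finset.sum_range_zero, zero_add, pow_one, pow_one, sub_zero]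
    field_simp
    ring
  | succ N ih =>
    have hsum : ∀ j ∈ Finset.range N, (1 - (z * w) ^ (N + 1 - (j + 1))) * z ^ (j + 1 + 1) =
        (1 - (z * w) ^ (N - j)) * z ^ (j + 1) * z := fun j _ ↦ by
      rw [Nat.add_sub_add_right]; ring
    rw [pow_succ, mul_right_comm, ih, Finset.sum_range_succ', Finset.sum_congr rfl hsum,
      ← Finset.sum_mul, Nat.sub_zero]
    field_simp
    ring

lemma ofReal_poissonKernel_zero_one (z : ℂ) :
    (poissonKernel 0 z 1 : ℂ) = (1 - z * conj z) / ((1 - z) * (1 - conj z)) := by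
  have hconj : 1 - conj z = conj (1 - z) := by simp
  rw [hconj, Complex.mul_conj', Complex.mul_conj']
  simp [poissonKernel]

lemma one_sub_circleMap_ne_zero {s : ℝ} (hs : s ∈ Ioo (0 : ℝ) 1) (x : ℝ) :
    1 - circleMap 0 s x ≠ 0 := fun h ↦ by
  have hnorm := congrArg norm (sub_eq_zero.mp h)
  rw [norm_one, norm_circleMap_zero, abs_of_pos hs.1] at hnorm
  exact hs.2.ne' hnorm

/-- The unit complex number `exp (-imπ/2)` carrying the phase of the kernels below. -/
noncomputable def phaseUnit (m : ℕ) : ℂ := circleMap 0 1 (-phase m)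

lemma re_phaseUnit_mul_circleMap_pow (m k : ℕ) (s x : ℝ) :
    (phaseUnit m * circleMap 0 s x ^ k).re = s ^ k * cos (k * x - phase m) := by
  rw [phaseUnit, circleMap_zero_pow, circleMap_zero_mul, circleMap_zero_re, one_mul, neg_add_eq_sub]

lemma re_phaseUnit (m : ℕ) : (phaseUnit m).re = cos (phase m) := by
  rw [phaseUnit, circleMap_zero_re, one_mul, cos_neg]

lemma conj_phaseUnit (m : ℕ) : conj (phaseUnit m) = ((-1) ^ m : ℝ) * phaseUnit m := by
  have hpi : circleMap 0 1 (m * π) = ((-1) ^ m : ℝ) := by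
    rw [← one_pow m, ← circleMap_zero_pow]; simp [circleMap]
  rw [phaseUnit, conj_circleMap_zero, ← hpi, circleMap_zero_mul, one_mul]
  congr 1
  rw [phase]; ring

lemma cos_phase_of_odd {m : ℕ} (hm : Odd m) : cos (phase m) = 0 := by
  obtain ⟨k, rfl⟩ := hm
  exact cos_eq_zero_iff.mpr ⟨k, by rw [phase]; push_cast; ring⟩

/-- The sum of `2 sᵏ cos (kx - mπ/2)` over `k ≥ 1`, in closed form. Superpositions of these kernels
over `s` give the Bernoulli kernels. -/
noncomputable def abelKernel (m : ℕ) (s x : ℝ) : ℝ :=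
  2 * (phaseUnit m * (circleMap 0 s x / (1 - circleMap 0 s x))).re

/-- The coefficients of the trigonometric polynomial of degree at most `N` which best approximates
`abelKernel m s` in `L¹`, with respect to the functions `cos (jx - mπ/2)`. For odd `m` the zeroth
function vanishes; the zeroth coefficient is then still chosen to be at most `2s` in size. -/
noncomputable def favardCoeff (N m : ℕ) (s : ℝ) : ℕ → ℝ
  | 0 => -(2 * (s ^ 2) ^ (N + 1) / (1 + (s ^ 2) ^ (N + 1)))
  | j + 1 => 2 * (1 - (s ^ 2) ^ (N - j)) * s ^ (j + 1) / (1 + (-1) ^ m * (s ^ 2) ^ (N + 1))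

/-- The error of that best approximation. Since the Poisson kernel is positive, it has the sign of
`cos ((N + 1) x - mπ/2)`. -/
noncomputable def errorKernel (N m : ℕ) (s x : ℝ) : ℝ :=
  2 * s ^ (N + 1) / (1 + (-1) ^ m * (s ^ 2) ^ (N + 1)) * poissonKernel 0 (circleMap 0 s x) 1 *
    cos ((N + 1 : ℕ) * x - phase m)

variable {s : ℝ}

lemma hasSum_abelKernel (hs : s ∈ Ioo (0 : ℝ) 1) (m : ℕ) (x : ℝ) :
    HasSum (fun k : ℕ ↦ 2 * s ^ (k + 1) * cos ((k + 1 : ℕ) * x - phase m))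
      (abelKernel m s x) := by
  have hnorm : ‖circleMap 0 s x‖ < 1 := by
    rw [norm_circleMap_zero, abs_of_pos hs.1]; exact hs.2
  have hgeom := (hasSum_geometric_of_norm_lt_one hnorm).mul_left
    (phaseUnit m * circleMap 0 s x)
  rw [abelKernel, div_eq_mul_inv, ← mul_assoc]
  refine ((Complex.hasSum_re hgeom).mul_left 2).congr_fun fun k ↦ ?_
  rw [mul_assoc, ← re_phaseUnit_mul_circleMap_pow, pow_succ', mul_assoc]

lemma one_add_neg_one_pow_mul_pos (hs : s ∈ Ioo (0 : ℝ) 1) (m N : ℕ) :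
    0 < 1 + (-1) ^ m * (s ^ 2) ^ (N + 1) := by
  have hpos : 0 < (s ^ 2) ^ (N + 1) := pow_pos (pow_pos hs.1 2) _
  have hlt : (s ^ 2) ^ (N + 1) < 1 :=
    pow_lt_one₀ (sq_nonneg s) (pow_lt_one₀ hs.1.le hs.2 two_ne_zero) N.succ_ne_zero
  rcases neg_one_pow_eq_or ℝ m with h | h <;> rw [h] <;> linarith

lemma favardCoeff_zero_mul_cos (N m : ℕ) (s : ℝ) :
    favardCoeff N m s 0 * cos (phase m) =
      -(2 * (s ^ 2) ^ (N + 1) * cos (phase m)) / (1 + (-1) ^ m * (s ^ 2) ^ (N + 1)) := by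
  rcases m.even_or_odd with hm | hm
  · rw [hm.neg_one_pow, one_mul, favardCoeff]; ring
  · simp [cos_phase_of_odd hm]

lemma re_phaseUnit_div_one_sub_conj (hs : s ∈ Ioo (0 : ℝ) 1) (m : ℕ) (x : ℝ) :
    (phaseUnit m / (1 - conj (circleMap 0 s x))).re =
      cos (phase m) + (-1) ^ m * (abelKernel m s x / 2) := by
  have hz := one_sub_circleMap_ne_zero hs x
  have hsplit : conj (phaseUnit m) / (1 - circleMap 0 s x) = conj (phaseUnit m) +
      ((-1) ^ m : ℝ) * (phaseUnit m * (circleMap 0 s x / (1 - circleMap 0 s x))) := by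
    rw [← mul_assoc, ← conj_phaseUnit]; field_simp; ring
  rw [← Complex.conj_re, map_div₀, map_sub, map_one, Complex.conj_conj, hsplit, Complex.add_re,
    Complex.conj_re, re_phaseUnit, Complex.re_ofReal_mul, abelKernel]
  ring

lemma poissonKernel_mul_cos (hs : s ∈ Ioo (0 : ℝ) 1) (N m : ℕ) (x : ℝ) :
    s ^ (N + 1) * poissonKernel 0 (circleMap 0 s x) 1 * cos ((N + 1 : ℕ) * x - phase m) =
      abelKernel m s x / 2
        - ∑ j ∈ Finset.range N, (1 - (s ^ 2) ^ (N - j)) * s ^ (j + 1) *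
            cos ((j + 1 : ℕ) * x - phase m)
        + (s ^ 2) ^ (N + 1) * (cos (phase m) + (-1) ^ m * (abelKernel m s x / 2)) := by
  set z := circleMap 0 s x
  have hz1 : 1 - z ≠ 0 := one_sub_circleMap_ne_zero hs x
  have hw1 : 1 - conj z ≠ 0 := by
    simpa using (map_ne_zero (starRingEnd ℂ)).mpr hz1
  have hzw : z * conj z = ((s ^ 2 : ℝ) : ℂ) := by
    rw [Complex.mul_conj', norm_circleMap_zero, ← Complex.ofReal_pow, sq_abs]
  have hgeom := congrArg (fun u ↦ (phaseUnit m * u).re) (pow_mul_div_one_sub_mul_one_sub hz1 hw1 N)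
  simp only [← ofReal_poissonKernel_zero_one] at hgeom
  simp only [hzw] at hgeom
  have hsum : (phaseUnit m * ∑ j ∈ Finset.range N,
      (1 - ((s ^ 2 : ℝ) : ℂ) ^ (N - j)) * z ^ (j + 1)).re =
      ∑ j ∈ Finset.range N, (1 - (s ^ 2) ^ (N - j)) * s ^ (j + 1) *
        cos ((j + 1 : ℕ) * x - phase m) := by
    rw [Finset.mul_sum, Complex.re_sum]
    refine Finset.sum_congr rfl fun j _ ↦ ?_
    rw [mul_assoc, ← re_phaseUnit_mul_circleMap_pow, ← Complex.re_ofReal_mul]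
    congr 1; push_cast; ring
  have hlast : (phaseUnit m * (((s ^ 2 : ℝ) : ℂ) ^ (N + 1) / (1 - conj z))).re =
      (s ^ 2) ^ (N + 1) * (cos (phase m) + (-1) ^ m * (abelKernel m s x / 2)) := by
    rw [← re_phaseUnit_div_one_sub_conj hs, ← Complex.re_ofReal_mul]
    congr 1; push_cast; ring
  rw [mul_add (phaseUnit m), mul_sub (phaseUnit m), Complex.add_re, Complex.sub_re, hsum, hlast,
    ← mul_assoc (phaseUnit m), Complex.re_mul_ofReal, re_phaseUnit_mul_circleMap_pow] at hgeom
  rw [mul_right_comm, hgeom, abelKernel, mul_div_cancel_left₀ _ two_ne_zero]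

lemma errorKernel_eq_abelKernel_sub (hs : s ∈ Ioo (0 : ℝ) 1) (N m : ℕ) (x : ℝ) :
    errorKernel N m s x = abelKernel m s x -
      ∑ j ∈ Finset.range (N + 1), favardCoeff N m s j * cos (j * x - phase m) := by
  have hden := (one_add_neg_one_pow_mul_pos hs m N).ne'
  have hsum : ∑ j ∈ Finset.range N, favardCoeff N m s (j + 1) * cos ((j + 1 : ℕ) * x - phase m) =
      2 / (1 + (-1) ^ m * (s ^ 2) ^ (N + 1)) * ∑ j ∈ Finset.range N,
        (1 - (s ^ 2) ^ (N - j)) * s ^ (j + 1) * cos ((j + 1 : ℕ) * x - phase m) := by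
    rw [Finset.mul_sum]
    refine Finset.sum_congr rfl fun j _ ↦ ?_
    rw [favardCoeff]; ring
  have herr : errorKernel N m s x = 2 / (1 + (-1) ^ m * (s ^ 2) ^ (N + 1)) *
      (s ^ (N + 1) * poissonKernel 0 (circleMap 0 s x) 1 * cos ((N + 1 : ℕ) * x - phase m)) := by
    rw [errorKernel]; ring
  rw [herr, poissonKernel_mul_cos hs, Finset.sum_range_succ', hsum, Nat.cast_zero, zero_mul,
    zero_sub, cos_neg, favardCoeff_zero_mul_cos]
  generalize ∑ j ∈ Finset.range N, (_ : ℝ) = S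
  field_simp
  ring

lemma abs_favardCoeff_le (hs : s ∈ Ioo (0 : ℝ) 1) (N m : ℕ) :
    ∀ j, |favardCoeff N m s j| ≤ 2 * s
  | 0 => by
    have hpos : 0 < (s ^ 2) ^ (N + 1) := pow_pos (pow_pos hs.1 2) _
    have hle : (s ^ 2) ^ (N + 1) ≤ s := by
      rw [← pow_mul]
      exact pow_le_of_le_one hs.1.le hs.2.le (by omega)
    rw [favardCoeff, abs_neg, abs_of_pos (by positivity)]
    exact (div_le_self (by positivity) (by linarith)).trans (by linarith)
  | j + 1 => by
    have hs0 := hs.1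
    have hden := one_add_neg_one_pow_mul_pos hs m N
    have hs2 : s ^ 2 ≤ 1 := pow_le_one₀ hs.1.le hs.2.le
    have hmono : (s ^ 2) ^ (N + 1) ≤ (s ^ 2) ^ (N - j) :=
      pow_le_pow_of_le_one (sq_nonneg s) hs2 (by omega)
    have hle_one : (s ^ 2) ^ (N - j) ≤ 1 := pow_le_one₀ (sq_nonneg s) hs2
    have hle : s ^ (j + 1) ≤ s := pow_le_of_le_one hs.1.le hs.2.le j.succ_ne_zero
    have hnum : 1 - (s ^ 2) ^ (N - j) ≤ 1 + (-1) ^ m * (s ^ 2) ^ (N + 1) := by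
      have hnonneg : 0 ≤ (s ^ 2) ^ (N + 1) := by positivity
      rcases neg_one_pow_eq_or ℝ m with h | h <;> rw [h] <;> linarith
    rw [favardCoeff, abs_of_nonneg (div_nonneg (mul_nonneg (by linarith) (by positivity)) hden.le),
      div_le_iff₀ hden]
    calc 2 * (1 - (s ^ 2) ^ (N - j)) * s ^ (j + 1)
        ≤ 2 * (1 + (-1) ^ m * (s ^ 2) ^ (N + 1)) * s := by gcongr
      _ = 2 * s * (1 + (-1) ^ m * (s ^ 2) ^ (N + 1)) := by ring

lemma continuous_abelKernel (hs : s ∈ Ioo (0 : ℝ) 1) (m : ℕ) : Continuous (abelKernel m s) := by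
  have hz := one_sub_circleMap_ne_zero hs
  have := continuous_circleMap 0 s
  unfold abelKernel
  fun_prop (disch := assumption)

lemma abs_errorKernel (hs : s ∈ Ioo (0 : ℝ) 1) (N m : ℕ) (x : ℝ) :
    |errorKernel N m s x| = errorKernel N m s x * cosSign (N + 1) (phase m) x := by
  have hpoisson : 0 ≤ poissonKernel 0 (circleMap 0 s x) 1 := by
    have : s ^ 2 ≤ 1 := pow_le_one₀ hs.1.le hs.2.le
    simp only [poissonKernel, sub_zero, norm_one, norm_circleMap_zero, sq_abs]
    exact div_nonneg (by linarith) (by positivity)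
  have hden := one_add_neg_one_pow_mul_pos hs m N
  have hs0 := hs.1
  rw [errorKernel, abs_mul, abs_of_nonneg (by positivity), ← mul_real_sign, cosSign, ← mul_assoc]

lemma hasSum_integral_abelKernel_mul_cosSign (hs : s ∈ Ioo (0 : ℝ) 1) (m n : ℕ) (φ : ℝ) :
    HasSum (fun k : ℕ ↦ 2 * s ^ (k + 1) *
        ∫ x in (0 : ℝ)..(2 * π), cos ((k + 1 : ℕ) * x - phase m) * cosSign n φ x)
      (∫ x in (0 : ℝ)..(2 * π), abelKernel m s x * cosSign n φ x) := by
  have hs0 := hs.1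
  simp_rw [← intervalIntegral.integral_const_mul]
  refine intervalIntegral.hasSum_integral_of_dominated_convergence
    (fun k _ ↦ 2 * s ^ (k + 1)) (fun k ↦ by fun_prop) (fun k ↦ .of_forall fun x _ ↦ ?_)
    (.of_forall fun x _ ↦ ?_) intervalIntegrable_const (.of_forall fun x _ ↦ ?_)
  · rw [norm_mul, norm_of_nonneg (by positivity)]
    exact mul_le_of_le_one_right (by positivity) (abs_cos_mul_cosSign_le_one _ _ _ _ _)
  · simp_rw [pow_succ]
    exact ((summable_geometric_of_lt_one hs.1.le hs.2).mul_right s).mul_left 2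
  · simpa only [mul_assoc] using (hasSum_abelKernel hs m x).mul_right (cosSign n φ x)

lemma integral_abs_errorKernel (hs : s ∈ Ioo (0 : ℝ) 1) (N m : ℕ) :
    ∫ x in (0 : ℝ)..(2 * π), |errorKernel N m s x| =
      ∫ x in (0 : ℝ)..(2 * π), abelKernel m s x * cosSign (N + 1) (phase m) x := by
  set σ := cosSign (N + 1) (phase m)
  have habel : IntervalIntegrable (fun x ↦ abelKernel m s x * σ x) volume 0 (2 * π) := by
    refine ((continuous_abelKernel hs m).abs.intervalIntegrable 0 (2 * π)).mono_fun' ?_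
      (.of_forall fun x ↦ ?_)
    · have := (continuous_abelKernel hs m).measurable
      fun_prop
    · simp only [norm_mul]
      exact mul_le_of_le_one_right (abs_nonneg _) (abs_cosSign_le_one _ _ _)
  have hcos : ∀ j ∈ Finset.range (N + 1), IntervalIntegrable
      (fun x ↦ favardCoeff N m s j * (cos (j * x - phase m) * σ x)) volume 0 (2 * π) :=
    fun j _ ↦ (intervalIntegrable_cos_mul_cosSign _ _ _ _ _ _).const_mul _
  have horth : ∀ j ∈ Finset.range (N + 1),
      ∫ x in (0 : ℝ)..(2 * π), favardCoeff N m s j * (cos (j * x - phase m) * σ x) = 0 := by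
    intro j hj
    rw [intervalIntegral.integral_const_mul,
      integral_cos_mul_cosSign_eq_zero (n := N + 1) N.succ_ne_zero (fun l ↦ ?_), mul_zero]
    have := Nat.le_mul_of_pos_right (N + 1) (show 0 < 2 * l + 1 by omega)
    have := Finset.mem_range.mp hj
    omega
  have hexpand : ∀ x, |errorKernel N m s x| = abelKernel m s x * σ x -
      ∑ j ∈ Finset.range (N + 1), favardCoeff N m s j * (cos (j * x - phase m) * σ x) := fun x ↦ by
    simp_rw [abs_errorKernel hs, errorKernel_eq_abelKernel_sub hs, sub_mul, Finset.sum_mul,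
      mul_assoc, σ]
  simp_rw [hexpand]
  rw [intervalIntegral.integral_sub habel
    (by simpa [Finset.sum_fn] using IntervalIntegrable.sum _ hcos),
    intervalIntegral.integral_finsetSum hcos, Finset.sum_eq_zero horth, sub_zero]

lemma hasSum_integral_abs_errorKernel (hs : s ∈ Ioo (0 : ℝ) 1) (N m : ℕ) :
    HasSum (fun l : ℕ ↦ 8 * ((-1) ^ (m + 1)) ^ l / (2 * l + 1 : ℕ) * s ^ ((N + 1) * (2 * l + 1)))
      (∫ x in (0 : ℝ)..(2 * π), |errorKernel N m s x|) := by
  have hsucc : ∀ l, (N + 1) * (2 * l + 1) - 1 + 1 = (N + 1) * (2 * l + 1) := fun l ↦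
    Nat.sub_add_cancel (Nat.mul_pos N.succ_pos (by omega))
  have hinj : Function.Injective (fun l : ℕ ↦ (N + 1) * (2 * l + 1) - 1) := fun a b hab ↦ by
    have hmul : (N + 1) * (2 * a + 1) = (N + 1) * (2 * b + 1) := by
      rw [← hsucc a, ← hsucc b]; exact congrArg (· + 1) hab
    have := Nat.eq_of_mul_eq_mul_left N.succ_pos hmul
    omega
  have hseries := hasSum_integral_abelKernel_mul_cosSign hs m (N + 1) (phase m)
  rw [integral_abs_errorKernel hs]
  rw [← hinj.hasSum_iff fun k hk ↦ ?_] at hseries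
  · refine hseries.congr_fun fun l ↦ ?_
    rw [Function.comp_apply, hsucc, integral_cos_odd_multiple_mul_cosSign N.succ_ne_zero]
    ring
  · rw [integral_cos_mul_cosSign_eq_zero N.succ_ne_zero (fun l hl ↦ ?_), mul_zero]
    exact hk ⟨l, by simp only [← hl]; omega⟩

end Kernel

section Superposition

lemma integrable_of_hasSum {α ι E : Type*} [MeasurableSpace α] {μ : Measure α} [Countable ι]
    [NormedAddCommGroup E] {F : ι → α → E} {G : α → E} (hF : ∀ i, Integrable (F i) μ)
    (hsum : Summable fun i ↦ ∫ a, ‖F i a‖ ∂μ) (hG : ∀ᵐ a ∂μ, HasSum (fun i ↦ F i a) (G a)) :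
    Integrable G μ := by
  refine ⟨aestronglyMeasurable_of_tendsto_ae atTop
    (f := fun (t : Finset ι) a ↦ ∑ i ∈ t, F i a)
    (fun t ↦ Finset.aestronglyMeasurable_fun_sum _ fun i _ ↦ (hF i).1) hG, ?_⟩
  calc ∫⁻ a, ‖G a‖ₑ ∂μ ≤ ∫⁻ a, ∑' i, ‖F i a‖ₑ ∂μ := lintegral_mono_ae <| by
        filter_upwards [hG] with a ha
        rw [← ha.tsum_eq]
        exact enorm_tsum_le_tsum_enorm
    _ = ENNReal.ofReal (∑' i, ∫ a, ‖F i a‖ ∂μ) := by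
        rw [lintegral_tsum fun i ↦ (hF i).1.enorm,
          ENNReal.ofReal_tsum_of_nonneg (fun i ↦ integral_nonneg fun a ↦ norm_nonneg _) hsum]
        simp_rw [fun i ↦ ofReal_integral_norm_eq_lintegral_enorm (hF i)]
    _ < ⊤ := ENNReal.ofReal_lt_top

lemma hasSum_integral_of_hasSum {α ι E : Type*} [MeasurableSpace α] {μ : Measure α} [Countable ι]
    [NormedAddCommGroup E] [NormedSpace ℝ E] {F : ι → α → E} {G : α → E}
    (hF : ∀ i, Integrable (F i) μ) (hsum : Summable fun i ↦ ∫ a, ‖F i a‖ ∂μ)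
    (hG : ∀ᵐ a ∂μ, HasSum (fun i ↦ F i a) (G a)) :
    HasSum (fun i ↦ ∫ a, F i a ∂μ) (∫ a, G a ∂μ) := by
  have htsum := hasSum_integral_of_summable_integral_norm hF hsum
  rwa [integral_congr_ae (g := G) (hG.mono fun a ha ↦ ha.tsum_eq)] at htsum

lemma integral_norm_integral_le {α β E : Type*} [MeasurableSpace α] [MeasurableSpace β]
    [NormedAddCommGroup E] [NormedSpace ℝ E] {μ : Measure α} [SFinite μ] {ν : Measure β}
    [SFinite ν] {F : α → β → E} (hF : Integrable (Function.uncurry F) (μ.prod ν)) :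
    ∫ y, ‖∫ x, F x y ∂μ‖ ∂ν ≤ ∫ x, ∫ y, ‖F x y‖ ∂ν ∂μ := by
  rw [integral_integral_swap hF.norm]
  exact integral_mono hF.integral_prod_right.norm hF.norm.integral_prod_right
    fun y ↦ norm_integral_le_integral_norm _

lemma measurable_favardCoeff (N m : ℕ) : ∀ j, Measurable fun s ↦ favardCoeff N m s j
  | 0 => by unfold favardCoeff; fun_prop
  | j + 1 => by unfold favardCoeff; fun_prop

lemma measurable_errorKernel (N m : ℕ) : Measurable (Function.uncurry (errorKernel N m)) := by
  unfold errorKernel poissonKernel circleMap Function.uncurry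
  fun_prop

variable {μ : Measure ℝ}

lemma integrable_pow_of_ae_mem_Ioo (hμ : ∀ᵐ s ∂μ, s ∈ Ioo (0 : ℝ) 1) (hid : Integrable id μ)
    {k : ℕ} (hk : k ≠ 0) : Integrable (fun s ↦ s ^ k) μ := by
  refine hid.mono (by fun_prop) ?_
  filter_upwards [hμ] with s hs
  rw [norm_pow]
  exact pow_le_of_le_one (norm_nonneg _) (by simpa [abs_of_pos hs.1] using hs.2.le) hk

lemma integrable_favardCoeff (hμ : ∀ᵐ s ∂μ, s ∈ Ioo (0 : ℝ) 1) (hid : Integrable id μ)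
    (N m j : ℕ) : Integrable (fun s ↦ favardCoeff N m s j) μ := by
  refine (hid.const_mul 2).mono' (measurable_favardCoeff N m j).aestronglyMeasurable ?_
  filter_upwards [hμ] with s hs using abs_favardCoeff_le hs N m j

lemma integral_errorKernel (hμ : ∀ᵐ s ∂μ, s ∈ Ioo (0 : ℝ) 1) (hid : Integrable id μ) {N m : ℕ}
    {x : ℝ} (hx : Integrable (fun s ↦ errorKernel N m s x) μ) :
    ∫ s, errorKernel N m s x ∂μ = ∫ s, abelKernel m s x ∂μ -
      ∑ j ∈ Finset.range (N + 1), (∫ s, favardCoeff N m s j ∂μ) * cos (j * x - phase m) := by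
  have hcoeff : ∀ j ∈ Finset.range (N + 1),
      Integrable (fun s ↦ favardCoeff N m s j * cos (j * x - phase m)) μ :=
    fun j _ ↦ (integrable_favardCoeff hμ hid N m j).mul_const _
  have habel : ∀ᵐ s ∂μ, abelKernel m s x = errorKernel N m s x +
      ∑ j ∈ Finset.range (N + 1), favardCoeff N m s j * cos (j * x - phase m) := by
    filter_upwards [hμ] with s hs
    rw [errorKernel_eq_abelKernel_sub hs, sub_add_cancel]
  rw [integral_congr_ae habel, integral_add hx (integrable_finsetSum _ hcoeff),
    integral_finsetSum _ hcoeff]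
  simp_rw [integral_mul_const, add_sub_cancel_right]

/-- The `l`-th term of the series for the `L¹` norm of a superposition of the kernels
`errorKernel N m s` over `s ∼ μ`. -/
noncomputable def errorTerm (N m : ℕ) (μ : Measure ℝ) (l : ℕ) : ℝ :=
  8 * ((-1) ^ (m + 1)) ^ l / (2 * l + 1 : ℕ) * ∫ s, s ^ ((N + 1) * (2 * l + 1)) ∂μ

lemma integral_norm_errorKernel_term (hμ : ∀ᵐ s ∂μ, s ∈ Ioo (0 : ℝ) 1) (N m l : ℕ) :
    ∫ s, ‖8 * ((-1) ^ (m + 1)) ^ l / (2 * l + 1 : ℕ) * s ^ ((N + 1) * (2 * l + 1))‖ ∂μ =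
      ‖errorTerm N m μ l‖ := by
  have hpow : (0 : ℝ → ℝ) ≤ᵐ[μ] fun s ↦ s ^ ((N + 1) * (2 * l + 1)) :=
    hμ.mono fun s hs ↦ pow_nonneg hs.1.le _
  simp_rw [norm_mul (8 * _ / _ : ℝ), errorTerm]
  rw [integral_const_mul, norm_mul, norm_of_nonneg (integral_nonneg_of_ae hpow)]
  congr 1
  exact integral_congr_ae (hpow.mono fun s hs ↦ norm_of_nonneg hs)

variable {N m : ℕ}

lemma integrable_integral_abs_errorKernel (hμ : ∀ᵐ s ∂μ, s ∈ Ioo (0 : ℝ) 1) (hid : Integrable id μ)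
    (hsum : Summable (errorTerm N m μ)) :
    Integrable (fun s ↦ ∫ x in (0 : ℝ)..(2 * π), |errorKernel N m s x|) μ :=
  integrable_of_hasSum
    (fun l ↦ (integrable_pow_of_ae_mem_Ioo hμ hid (by positivity)).const_mul _)
    (by simpa only [integral_norm_errorKernel_term hμ] using hsum.norm)
    (hμ.mono fun _ hs ↦ hasSum_integral_abs_errorKernel hs N m)

lemma integral_integral_abs_errorKernel (hμ : ∀ᵐ s ∂μ, s ∈ Ioo (0 : ℝ) 1) (hid : Integrable id μ)
    (hsum : Summable (errorTerm N m μ)) :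
    ∫ s, (∫ x in (0 : ℝ)..(2 * π), |errorKernel N m s x|) ∂μ = ∑' l, errorTerm N m μ l := by
  have hterms := hasSum_integral_of_hasSum
    (fun l ↦ (integrable_pow_of_ae_mem_Ioo hμ hid (by positivity)).const_mul _)
    (by simpa only [integral_norm_errorKernel_term hμ] using hsum.norm)
    (hμ.mono fun _ hs ↦ hasSum_integral_abs_errorKernel hs N m)
  simp_rw [integral_const_mul] at hterms
  simpa only [errorTerm] using hterms.tsum_eq.symm

lemma integrable_errorKernel_prod [SFinite μ]
    (hμ : ∀ᵐ s ∂μ, s ∈ Ioo (0 : ℝ) 1) (hid : Integrable id μ)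
    (hsum : Summable (errorTerm N m μ)) :
    Integrable (Function.uncurry (errorKernel N m))
      (μ.prod (volume.restrict (Ioc 0 (2 * π)))) := by
  refine (integrable_prod_iff (measurable_errorKernel N m).aestronglyMeasurable).mpr ⟨?_, ?_⟩
  · filter_upwards [hμ] with s hs
    have hcont : Continuous (errorKernel N m s) := by
      have := continuous_abelKernel hs m
      simp_rw [funext (errorKernel_eq_abelKernel_sub hs N m)]
      fun_prop
    exact (hcont.intervalIntegrable 0 (2 * π)).1
  · simpa [intervalIntegral.integral_of_le two_pi_pos.le] using
      integrable_integral_abs_errorKernel hμ hid hsum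

theorem integral_abs_integral_abelKernel_sub_le [SFinite μ]
    (hμ : ∀ᵐ s ∂μ, s ∈ Ioo (0 : ℝ) 1) (hid : Integrable id μ)
    (hsum : Summable (errorTerm N m μ)) :
    ∫ x in (0 : ℝ)..(2 * π), |∫ s, abelKernel m s x ∂μ -
        ∑ j ∈ Finset.range (N + 1), (∫ s, favardCoeff N m s j ∂μ) * cos (j * x - phase m)| ≤
      ∑' l, errorTerm N m μ l := by
  have hprod := integrable_errorKernel_prod hμ hid hsum
  rw [← integral_integral_abs_errorKernel hμ hid hsum]
  simp_rw [intervalIntegral.integral_of_le two_pi_pos.le, ← norm_eq_abs]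
  refine le_of_eq_of_le (integral_congr_ae ?_) (integral_norm_integral_le hprod)
  filter_upwards [hprod.prod_left_ae] with x hx
  rw [integral_errorKernel hμ hid hx]

end Superposition

section LogPowMeasure

/-- The measure `(-log s)ᵖ / p! · ds / s` on `(0, 1)`, whose `k`-th moment is `1 / kᵖ⁺¹`, written as
the image of `uᵖ / p! · du` on `(0, ∞)` under `u ↦ exp (-u)`. -/
noncomputable def logPowMeasure (p : ℕ) : Measure ℝ :=
  ((volume.restrict (Ioi 0)).withDensity fun u ↦ ENNReal.ofReal (u ^ p / p.factorial)).map
    fun u ↦ exp (-u)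

instance (p : ℕ) : SFinite (logPowMeasure p) := by
  unfold logPowMeasure; infer_instance

lemma ae_logPowMeasure_mem_Ioo (p : ℕ) : ∀ᵐ s ∂logPowMeasure p, s ∈ Ioo (0 : ℝ) 1 := by
  refine (ae_map_iff (by fun_prop) measurableSet_Ioo).mpr
    (withDensity_absolutelyContinuous _ _ ?_)
  filter_upwards [ae_restrict_mem measurableSet_Ioi] with u hu
  exact ⟨exp_pos _, exp_lt_one_iff.mpr (neg_lt_zero.mpr hu)⟩

lemma integral_logPowMeasure (p : ℕ) (f : ℝ → ℝ) :
    ∫ s, f s ∂logPowMeasure p = ∫ u in Ioi (0 : ℝ), u ^ p / p.factorial * f (exp (-u)) := by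
  have hemb : MeasurableEmbedding fun u : ℝ ↦ exp (-u) :=
    Continuous.measurableEmbedding (by fun_prop) (exp_injective.comp neg_injective)
  rw [logPowMeasure, hemb.integral_map, integral_withDensity_eq_integral_toReal_smul
    (by fun_prop) (.of_forall fun _ ↦ ENNReal.ofReal_lt_top)]
  refine setIntegral_congr_fun measurableSet_Ioi fun u (hu : 0 < u) ↦ ?_
  simp only [smul_eq_mul]
  rw [ENNReal.toReal_ofReal (by positivity)]

lemma integral_pow_logPowMeasure (p : ℕ) {k : ℕ} (hk : k ≠ 0) :
    ∫ s, s ^ k ∂logPowMeasure p = 1 / (k : ℝ) ^ (p + 1) := by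
  have hgamma := integral_rpow_mul_exp_neg_mul_Ioi (a := (p : ℝ) + 1) (r := k) (by positivity)
    (by positivity)
  rw [Gamma_nat_eq_factorial, ← Nat.cast_add_one, rpow_natCast, one_div_pow] at hgamma
  have hintegrand : ∀ u : ℝ, u ^ p / p.factorial * exp (-u) ^ k =
      (p.factorial : ℝ)⁻¹ * (u ^ (((p + 1 : ℕ) : ℝ) - 1) * exp (-(k * u))) := fun u ↦ by
    rw [Nat.cast_add_one, add_sub_cancel_right, rpow_natCast, ← exp_nat_mul, mul_neg]
    ring
  rw [integral_logPowMeasure]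
  simp_rw [hintegrand]
  rw [integral_const_mul, hgamma]
  field_simp

lemma integrable_id_logPowMeasure (p : ℕ) : Integrable id (logPowMeasure p) := by
  have hmoment := integral_pow_logPowMeasure p one_ne_zero
  simp only [pow_one, Nat.cast_one, one_pow, div_one] at hmoment
  exact .of_integral_ne_zero (by simp only [id, hmoment]; exact one_ne_zero)

end LogPowMeasure

section FavardConstant

lemma summable_neg_one_pow_div_odd_pow {r : ℕ} (hr : r ≠ 0) :
    Summable fun l : ℕ ↦ ((-1) ^ (r + 1)) ^ l / ((2 * l + 1 : ℕ) : ℝ) ^ (r + 1) := by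
  have hinj : Function.Injective fun l : ℕ ↦ 2 * l + 1 := fun a b hab ↦ by simpa using hab
  refine .of_norm ((summable_one_div_nat_pow (p := r + 1) |>.mpr (by omega)).comp_injective
    hinj |>.congr fun l ↦ ?_)
  have : |(2 * l + 1 : ℝ)| = 2 * l + 1 := abs_of_pos (by positivity)
  simp [this]

lemma tsum_even_add_odd_of_summable {E : Type*} [NormedAddCommGroup E] [CompleteSpace E]
    {c : ℕ → E} (hc : Summable c) :
    ∑' k, (c (2 * k) + c (2 * k + 1)) = ∑' l, c l := by
  have heven : Summable fun k ↦ c (2 * k) :=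
    hc.comp_injective (i := fun k ↦ 2 * k) fun a b hab ↦ by simpa using hab
  have hodd : Summable fun k ↦ c (2 * k + 1) :=
    hc.comp_injective (i := fun k ↦ 2 * k + 1) fun a b hab ↦ by simpa using hab
  rw [heven.tsum_add hodd, tsum_even_add_odd heven hodd]

lemma favardK_eq_tsum {r : ℕ} (hr : r ≠ 0) :
    favardK r = 4 / π * ∑' l : ℕ, ((-1) ^ (r + 1)) ^ l / ((2 * l + 1 : ℕ) : ℝ) ^ (r + 1) := by
  rw [favardK, ← tsum_even_add_odd_of_summable (summable_neg_one_pow_div_odd_pow hr)]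
  congr 1
  refine tsum_congr fun k ↦ ?_
  have hsq : ((-1 : ℝ) ^ (r + 1)) ^ (2 * k) = 1 := by rw [pow_right_comm, pow_mul]; simp
  have hone : ((2 * (2 * k) + 1 : ℕ) : ℝ) = 4 * k + 1 := by push_cast; ring
  have hthree : ((2 * (2 * k + 1) + 1 : ℕ) : ℝ) = 4 * k + 3 := by push_cast; ring
  rw [pow_succ _ (2 * k), hsq, hone, hthree, one_mul]

lemma errorTerm_logPowMeasure (N p l : ℕ) :
    errorTerm N (p + 1) (logPowMeasure p) l = 8 / ((N + 1 : ℕ) : ℝ) ^ (p + 1) *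
      (((-1) ^ (p + 1 + 1)) ^ l / ((2 * l + 1 : ℕ) : ℝ) ^ (p + 1 + 1)) := by
  rw [errorTerm, integral_pow_logPowMeasure p (by positivity), Nat.cast_mul, mul_pow]
  field_simp
  ring

lemma summable_errorTerm_logPowMeasure (N p : ℕ) :
    Summable (errorTerm N (p + 1) (logPowMeasure p)) := by
  simp_rw [funext (errorTerm_logPowMeasure N p)]
  exact (summable_neg_one_pow_div_odd_pow p.succ_ne_zero).mul_left _

lemma tsum_errorTerm_logPowMeasure (N p : ℕ) :
    ∑' l, errorTerm N (p + 1) (logPowMeasure p) l =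
      2 * π * (favardK (p + 1) / ((N + 1 : ℕ) : ℝ) ^ (p + 1)) := by
  simp_rw [errorTerm_logPowMeasure, tsum_mul_left, favardK_eq_tsum p.succ_ne_zero]
  field_simp
  ring

end FavardConstant

section BernoulliKernel

/-- The `2π`-periodic Bernoulli kernel, with Fourier series `∑ 2 cos (kx - mπ/2) / kᵐ` over
`k ≥ 1`. -/
noncomputable def bernoulliKernel (m : ℕ) (x : ℝ) : ℝ :=
  -(2 * π) ^ m / m.factorial * bernoulliFun m (Int.fract (x / (2 * π)))

lemma phaseUnit_mul_I_pow (m : ℕ) : phaseUnit m * Complex.I ^ m = 1 := by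
  have hI : Complex.I = circleMap 0 1 (π / 2) := by
    simp [circleMap, Complex.exp_pi_div_two_mul_I]
  rw [hI, circleMap_zero_pow, phaseUnit, circleMap_zero_mul, phase, neg_add_cancel]
  simp [circleMap]

lemma fourier_div_two_pi (k : ℕ) (x : ℝ) :
    fourier k ((x / (2 * π) : ℝ) : UnitAddCircle) = circleMap 0 1 x ^ k := by
  have hpi : (π : ℂ) ≠ 0 := Complex.ofReal_ne_zero.mpr pi_ne_zero
  rw [fourier_coe_apply, circleMap_zero_pow, circleMap_zero, one_pow, Complex.ofReal_one, one_mul]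
  congr 1
  push_cast
  field_simp

lemma fract_div_two_pi {x : ℝ} (hx : x ∈ Ico 0 (2 * π)) :
    Int.fract (x / (2 * π)) = x / (2 * π) :=
  Int.fract_eq_self.mpr ⟨div_nonneg hx.1 two_pi_pos.le, (div_lt_one two_pi_pos).mpr hx.2⟩

lemma two_mul_cos_sub_phase (m k : ℕ) (x : ℝ) :
    ((2 * cos (k * x - phase m) : ℝ) : ℂ) =
      phaseUnit m * (circleMap 0 1 x ^ k + (-1) ^ m * conj (circleMap 0 1 x ^ k)) := by
  have hre := re_phaseUnit_mul_circleMap_pow m k 1 x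
  rw [one_pow, one_mul] at hre
  rw [← hre, ← Complex.add_conj, map_mul, conj_phaseUnit]
  push_cast
  ring

lemma hasSum_bernoulliKernel {m : ℕ} (hm : 2 ≤ m) {x : ℝ} (hx : x ∈ Ico 0 (2 * π)) :
    HasSum (fun k : ℕ ↦ 2 * cos (k * x - phase m) / (k : ℝ) ^ m) (bernoulliKernel m x) := by
  have hmem : x / (2 * π) ∈ Icc (0 : ℝ) 1 :=
    fract_div_two_pi hx ▸ ⟨Int.fract_nonneg _, (Int.fract_lt_one _).le⟩
  have hfourier := (hasSum_one_div_nat_pow_mul_fourier hm hmem).mul_left (phaseUnit m)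
  have hvalue : phaseUnit m * (-(2 * π * Complex.I) ^ m / m.factorial *
      bernoulliFun m (x / (2 * π))) = bernoulliKernel m x := by
    rw [bernoulliKernel, fract_div_two_pi hx]
    push_cast
    rw [mul_pow _ Complex.I]
    linear_combination (-(2 * π : ℂ) ^ m / m.factorial * bernoulliFun m (x / (2 * π))) *
      phaseUnit_mul_I_pow m
  rw [hvalue] at hfourier
  refine Complex.hasSum_ofReal.mp (hfourier.congr_fun fun k ↦ ?_)
  rw [fourier_neg, fourier_div_two_pi, Complex.ofReal_div, two_mul_cos_sub_phase]
  push_cast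
  ring

variable {x : ℝ}

lemma cos_lt_one_of_mem_Ioo (hx : x ∈ Ioo 0 (2 * π)) : cos x < 1 := by
  refine (cos_le_one x).lt_of_ne fun h ↦ hx.1.ne' ?_
  exact (cos_eq_one_iff_of_lt_of_lt (by linarith [hx.1, two_pi_pos]) hx.2).mp h

lemma one_sub_circleMap_mem_slitPlane (hx : x ∈ Ioo 0 (2 * π)) {s : ℝ} (hs : s ∈ Icc (0 : ℝ) 1) :
    1 - circleMap 0 s x ∈ Complex.slitPlane := by
  refine .inl ?_
  rw [Complex.sub_re, Complex.one_re, circleMap_zero_re]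
  rcases hs.1.eq_or_lt with rfl | hs0
  · simp
  · linarith [mul_lt_of_lt_one_right hs0 (cos_lt_one_of_mem_Ioo hx), hs.2]

lemma one_sub_circleMap_exp_neg_mem_slitPlane (hx : x ∈ Ioo 0 (2 * π)) {u : ℝ} (hu : 0 ≤ u) :
    1 - circleMap 0 (exp (-u)) x ∈ Complex.slitPlane :=
  one_sub_circleMap_mem_slitPlane hx ⟨(exp_pos _).le, exp_le_one_iff.mpr (neg_nonpos.mpr hu)⟩

lemma hasDerivAt_log_one_sub_circleMap_exp_neg (hx : x ∈ Ioo 0 (2 * π)) {u : ℝ} (hu : 0 ≤ u) :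
    HasDerivAt (fun u : ℝ ↦ Complex.log (1 - circleMap 0 (exp (-u)) x))
      (circleMap 0 (exp (-u)) x / (1 - circleMap 0 (exp (-u)) x)) u := by
  refine HasDerivAt.clog_real ?_ (one_sub_circleMap_exp_neg_mem_slitPlane hx hu)
  simp only [circleMap_zero]
  have hexp : HasDerivAt (fun u : ℝ ↦ exp (-u)) (-exp (-u)) u := by
    simpa using (hasDerivAt_neg u).exp
  convert! (hexp.ofReal_comp.mul_const (Complex.exp (x * Complex.I))).const_sub 1 using 1
  push_cast
  ring

lemma tendsto_circleMap_exp_neg (x : ℝ) :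
    Tendsto (fun u : ℝ ↦ circleMap 0 (exp (-u)) x) atTop (𝓝 0) := by
  refine tendsto_zero_iff_norm_tendsto_zero.mpr ?_
  simpa using tendsto_exp_neg_atTop_nhds_zero

lemma integrableOn_circleMap_exp_neg_div_one_sub (hx : x ∈ Ioo 0 (2 * π)) :
    IntegrableOn (fun u ↦ circleMap 0 (exp (-u)) x / (1 - circleMap 0 (exp (-u)) x)) (Ioi 0) := by
  have hcont : Continuous fun u : ℝ ↦ circleMap 0 (exp (-u)) x := by
    simp only [circleMap_zero]; fun_prop
  have hcontOn : ContinuousOn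
      (fun u ↦ circleMap 0 (exp (-u)) x / (1 - circleMap 0 (exp (-u)) x)) (Ici 0) :=
    hcont.continuousOn.div (by fun_prop) fun u hu ↦
      Complex.slitPlane_ne_zero (one_sub_circleMap_exp_neg_mem_slitPlane hx hu)
  have hnum : (fun u : ℝ ↦ circleMap 0 (exp (-u)) x) =O[atTop] fun u ↦ exp (-1 * u) :=
    .of_norm_le fun u ↦ by simp
  have hden : Tendsto (fun u : ℝ ↦ (1 - circleMap 0 (exp (-u)) x)⁻¹) atTop (𝓝 1) := by
    simpa using ((tendsto_circleMap_exp_neg x).const_sub 1).inv₀ (by simp)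
  have hdecay := hnum.mul (hden.isBigO_one ℝ)
  simp only [← div_eq_mul_inv, mul_one] at hdecay
  exact ((hcontOn.locallyIntegrableOn measurableSet_Ici).integrableOn_of_isBigO_atTop hdecay
    ⟨Ioi 0, Ioi_mem_atTop 0, exp_neg_integrableOn_Ioi 0 one_pos⟩).mono_set Ioi_subset_Ici_self

lemma integral_circleMap_exp_neg_div_one_sub (hx : x ∈ Ioo 0 (2 * π)) :
    ∫ u in Ioi (0 : ℝ), circleMap 0 (exp (-u)) x / (1 - circleMap 0 (exp (-u)) x) =
      -Complex.log (1 - circleMap 0 1 x) := by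
  have hlim : Tendsto (fun u : ℝ ↦ Complex.log (1 - circleMap 0 (exp (-u)) x)) atTop (𝓝 0) := by
    have hone : Tendsto (fun u : ℝ ↦ 1 - circleMap 0 (exp (-u)) x) atTop (𝓝 1) := by
      simpa using (tendsto_circleMap_exp_neg x).const_sub 1
    simpa using hone.clog Complex.one_mem_slitPlane
  rw [integral_Ioi_of_hasDerivAt_of_tendsto
    (hasDerivAt_log_one_sub_circleMap_exp_neg hx le_rfl).continuousAt.continuousWithinAt
    (fun u hu ↦ hasDerivAt_log_one_sub_circleMap_exp_neg hx (le_of_lt hu))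
    (integrableOn_circleMap_exp_neg_div_one_sub hx) hlim, neg_zero, exp_zero, zero_sub]

lemma one_sub_circleMap_zero_one (x : ℝ) :
    1 - circleMap 0 1 x = circleMap 0 (2 * sin (x / 2)) ((x - π) / 2) := by
  have hcos := cos_sq' (x / 2)
  obtain ⟨y, rfl⟩ : ∃ y, x = 2 * y := ⟨x / 2, by ring⟩
  have hy : (2 * y - π) / 2 = y - π / 2 := by ring
  rw [mul_div_cancel_left₀ y two_ne_zero] at hcos ⊢
  apply Complex.ext
  · rw [hy, Complex.sub_re, Complex.one_re, circleMap_zero_re, circleMap_zero_re,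
      cos_sub_pi_div_two, cos_two_mul, hcos]
    ring
  · rw [hy, Complex.sub_im, Complex.one_im, circleMap_zero_im, circleMap_zero_im,
      sin_sub_pi_div_two, sin_two_mul]
    ring

lemma arg_one_sub_circleMap_zero_one (hx : x ∈ Ioo 0 (2 * π)) :
    (1 - circleMap 0 1 x).arg = (x - π) / 2 := by
  have hsin : 0 < sin (x / 2) :=
    sin_pos_of_pos_of_lt_pi (by linarith [hx.1]) (by linarith [hx.2])
  rw [one_sub_circleMap_zero_one, circleMap_zero, Complex.exp_mul_I]
  exact Complex.arg_mul_cos_add_sin_mul_I (by positivity)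
    ⟨by linarith [hx.1, pi_pos], by linarith [hx.2, pi_pos]⟩

lemma integral_abelKernel_one_logPowMeasure_zero (hx : x ∈ Ioo 0 (2 * π)) :
    ∫ s, abelKernel 1 s x ∂logPowMeasure 0 = bernoulliKernel 1 x := by
  have hunit : phaseUnit 1 = -Complex.I := by
    have h := phaseUnit_mul_I_pow 1
    rw [pow_one] at h
    linear_combination -Complex.I * h + phaseUnit 1 * Complex.I_mul_I
  have hint := (integrableOn_circleMap_exp_neg_div_one_sub hx).const_mul (phaseUnit 1)
  calc ∫ s, abelKernel 1 s x ∂logPowMeasure 0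
      = ∫ u in Ioi (0 : ℝ), 2 * Complex.reCLM
          (phaseUnit 1 * (circleMap 0 (exp (-u)) x / (1 - circleMap 0 (exp (-u)) x))) := by
        simp [integral_logPowMeasure, abelKernel]
    _ = 2 * (phaseUnit 1 * -Complex.log (1 - circleMap 0 1 x)).re := by
        rw [integral_const_mul, Complex.reCLM.integral_comp_comm hint, integral_const_mul,
          integral_circleMap_exp_neg_div_one_sub hx, Complex.reCLM_apply]
    _ = π - x := by
        rw [hunit, neg_mul_neg, Complex.I_mul_re, Complex.log_im,
          arg_one_sub_circleMap_zero_one hx]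
        ring
    _ = bernoulliKernel 1 x := by
        rw [bernoulliKernel, fract_div_two_pi (Ioo_subset_Ico_self hx), bernoulliFun_one]
        simp only [pow_one, Nat.factorial_one, Nat.cast_one, div_one]
        field_simp
        ring

lemma summable_integral_norm_abelKernel_term {p : ℕ} (hp : p ≠ 0) (x : ℝ) :
    Summable fun k : ℕ ↦ ∫ s, ‖2 * s ^ (k + 1) * cos ((k + 1 : ℕ) * x - phase (p + 1))‖
      ∂logPowMeasure p := by
  have hmajorant : Summable fun k : ℕ ↦ 2 * (1 / ((k + 1 : ℕ) : ℝ) ^ (p + 1)) :=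
    ((summable_nat_add_iff 1).mpr (summable_one_div_nat_pow.mpr (by omega))).mul_left 2
  refine hmajorant.of_nonneg_of_le (fun k ↦ integral_nonneg fun _ ↦ norm_nonneg _) fun k ↦ ?_
  rw [← integral_pow_logPowMeasure p k.succ_ne_zero, ← integral_const_mul]
  refine integral_mono_of_nonneg (.of_forall fun _ ↦ norm_nonneg _)
    ((integrable_pow_of_ae_mem_Ioo (ae_logPowMeasure_mem_Ioo p) (integrable_id_logPowMeasure p)
      k.succ_ne_zero).const_mul 2) ?_
  filter_upwards [ae_logPowMeasure_mem_Ioo p] with s hs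
  have hs0 := hs.1
  rw [norm_mul, norm_of_nonneg (by positivity)]
  exact mul_le_of_le_one_right (by positivity) (abs_cos_le_one _)

lemma integral_abelKernel_logPowMeasure (p : ℕ) (hx : x ∈ Ioo 0 (2 * π)) :
    ∫ s, abelKernel (p + 1) s x ∂logPowMeasure p = bernoulliKernel (p + 1) x := by
  rcases eq_or_ne p 0 with rfl | hp
  · exact integral_abelKernel_one_logPowMeasure_zero hx
  have hpow := fun k : ℕ ↦ integrable_pow_of_ae_mem_Ioo (ae_logPowMeasure_mem_Ioo p)
    (integrable_id_logPowMeasure p) k.succ_ne_zero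
  have habel := hasSum_integral_of_hasSum (fun k ↦ ((hpow k).const_mul 2).mul_const _)
    (summable_integral_norm_abelKernel_term hp x)
    ((ae_logPowMeasure_mem_Ioo p).mono fun s hs ↦ hasSum_abelKernel hs (p + 1) x)
  have hbernoulli := hasSum_bernoulliKernel (m := p + 1) (by omega) (Ioo_subset_Ico_self hx)
  rw [← hasSum_nat_add_iff' 1] at hbernoulli
  simp only [Finset.sum_range_one, Nat.cast_zero, zero_pow p.succ_ne_zero, div_zero, sub_zero]
    at hbernoulli
  refine habel.unique (hbernoulli.congr_fun fun k ↦ ?_)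
  rw [integral_mul_const, integral_const_mul, integral_pow_logPowMeasure p k.succ_ne_zero]
  ring

theorem integral_abs_bernoulliKernel_sub_le (N p : ℕ) :
    ∫ x in (0 : ℝ)..(2 * π), |bernoulliKernel (p + 1) x - ∑ j ∈ Finset.range (N + 1),
        (∫ s, favardCoeff N (p + 1) s j ∂logPowMeasure p) * cos (j * x - phase (p + 1))| ≤
      2 * π * (favardK (p + 1) / ((N + 1 : ℕ) : ℝ) ^ (p + 1)) := by
  rw [← tsum_errorTerm_logPowMeasure]
  refine le_of_eq_of_le ?_ (integral_abs_integral_abelKernel_sub_le (ae_logPowMeasure_mem_Ioo p)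
    (integrable_id_logPowMeasure p) (summable_errorTerm_logPowMeasure N p))
  simp_rw [intervalIntegral.integral_of_le two_pi_pos.le, integral_Ioc_eq_integral_Ioo]
  exact setIntegral_congr_fun measurableSet_Ioo fun x hx ↦ by
    simp only [integral_abelKernel_logPowMeasure p hx]

lemma periodic_bernoulliKernel (m : ℕ) : Function.Periodic (bernoulliKernel m) (2 * π) := fun x ↦ by
  rw [bernoulliKernel, add_div, div_self two_pi_pos.ne', Int.fract_add_one, bernoulliKernel]

lemma intervalIntegrable_bernoulliKernel (m : ℕ) (a b : ℝ) :
    IntervalIntegrable (bernoulliKernel m) volume a b := by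
  refine (periodic_bernoulliKernel m).intervalIntegrable₀ two_pi_pos.ne' ?_ a b
  have hcont : Continuous fun x ↦ -(2 * π) ^ m / m.factorial * bernoulliFun m (x / (2 * π)) := by
    have := continuous_bernoulliFun m
    fun_prop
  refine (hcont.intervalIntegrable 0 (2 * π)).congr_uIoo fun x hx ↦ ?_
  rw [uIoo_of_le two_pi_pos.le] at hx
  simp only [bernoulliKernel, fract_div_two_pi (Ioo_subset_Ico_self hx)]

lemma continuous_bernoulliKernel {m : ℕ} (hm : m ≠ 1) : Continuous (bernoulliKernel m) :=
  (((continuous_bernoulliFun m).continuousOn.comp_fract''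
    (bernoulliFun_endpoints_eq_of_ne_one hm).symm).comp
      (continuous_id.div_const (2 * π))).const_mul _

lemma hasDerivAt_bernoulliKernel (m : ℕ) {x : ℝ} (hx : x / (2 * π) ∉ range ((↑) : ℤ → ℝ)) :
    HasDerivAt (bernoulliKernel (m + 1)) (bernoulliKernel m x) x := by
  set k := ⌊x / (2 * π)⌋ with hk
  have hlt : (k : ℝ) < x / (2 * π) := (Int.floor_le _).lt_of_ne fun h ↦ hx ⟨k, h⟩
  have hcont : Continuous fun y : ℝ ↦ y / (2 * π) := by fun_prop
  have hlocal : bernoulliKernel (m + 1) =ᶠ[𝓝 x] fun y ↦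
      -(2 * π) ^ (m + 1) / (m + 1).factorial * bernoulliFun (m + 1) (y / (2 * π) - k) := by
    filter_upwards [hcont.continuousAt.eventually (lt_mem_nhds hlt),
      hcont.continuousAt.eventually (gt_mem_nhds (Int.lt_floor_add_one _))] with y hky hyk
    rw [bernoulliKernel, Int.fract, Int.floor_eq_iff.mpr ⟨hky.le, hyk⟩]
  have hinner : HasDerivAt (fun y : ℝ ↦ y / (2 * π) - k) (1 / (2 * π)) x :=
    ((hasDerivAt_id x).div_const _).sub_const _
  refine HasDerivAt.congr_of_eventuallyEq ?_ hlocal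
  convert! ((hasDerivAt_bernoulliFun (m + 1) _).comp x hinner).const_mul
    (-(2 * π) ^ (m + 1) / ((m + 1).factorial : ℝ)) using 1
  rw [bernoulliKernel, Int.fract, ← hk, Nat.factorial_succ, Nat.add_sub_cancel]
  push_cast
  field_simp
  ring

lemma integral_bernoulliKernel {m : ℕ} (hm : m ≠ 0) (a b : ℝ) :
    ∫ x in a..b, bernoulliKernel m x = bernoulliKernel (m + 1) b - bernoulliKernel (m + 1) a := by
  have hcountable : ((· / (2 * π)) ⁻¹' range ((↑) : ℤ → ℝ)).Countable :=
    (countable_range _).preimage fun x y hxy ↦ by simpa using hxy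
  exact integral_eq_of_hasDerivAt_off_countable _ _ hcountable
    (continuous_bernoulliKernel (by omega)).continuousOn
    (fun x hx ↦ hasDerivAt_bernoulliKernel m hx.2) (intervalIntegrable_bernoulliKernel m a b)

end BernoulliKernel

section BestApprox

/-- The trigonometric polynomials of degree at most `N`, as a complex vector space of functions. -/
def trigPolySubmodule (N : ℕ) : Submodule ℂ (ℝ → ℂ) where
  carrier := trigPoly N
  zero_mem' := ⟨0, funext fun x ↦ by simp⟩
  add_mem' := by
    rintro _ _ ⟨c, rfl⟩ ⟨d, rfl⟩
    exact ⟨c + d, funext fun x ↦ by simp [add_mul, Finset.sum_add_distrib]⟩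
  smul_mem' := by
    rintro a _ ⟨c, rfl⟩
    exact ⟨a • c, funext fun x ↦ by simp [Finset.mul_sum, mul_assoc]⟩

variable {N : ℕ} {f g t : ℝ → ℂ}

lemma exp_mem_trigPolySubmodule {k : ℤ} (hk : k ∈ Finset.Icc (-(N : ℤ)) N) :
    (fun x : ℝ ↦ Complex.exp (k * x * Complex.I)) ∈ trigPolySubmodule N :=
  ⟨Pi.single k 1, funext fun x ↦ by simp [Pi.single_apply, Finset.mem_Icc.mp hk]⟩

lemma const_mem_trigPolySubmodule (a : ℂ) : (fun _ : ℝ ↦ a) ∈ trigPolySubmodule N := by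
  convert! (trigPolySubmodule N).smul_mem a (exp_mem_trigPolySubmodule (k := 0) (by simp)) using 1
  ext
  simp

lemma cos_mem_trigPolySubmodule {j : ℕ} (hj : j ≤ N) (φ : ℝ) :
    (fun x : ℝ ↦ (cos (j * x - φ) : ℂ)) ∈ trigPolySubmodule N := by
  convert! (trigPolySubmodule N).add_mem
    ((trigPolySubmodule N).smul_mem (Complex.exp (-φ * Complex.I) / 2)
      (exp_mem_trigPolySubmodule (k := j) (by rw [Finset.mem_Icc]; omega)))
    ((trigPolySubmodule N).smul_mem (Complex.exp (φ * Complex.I) / 2)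
      (exp_mem_trigPolySubmodule (k := -j) (by rw [Finset.mem_Icc]; omega))) using 1
  ext x
  simp only [Pi.add_apply, Pi.smul_apply, smul_eq_mul, div_mul_eq_mul_div, ← Complex.exp_add,
    ← add_div]
  push_cast
  rw [Complex.cos]
  congr 3 <;> ring

lemma comp_add_right_mem_trigPolySubmodule (ht : t ∈ trigPolySubmodule N) (a : ℝ) :
    (fun x ↦ t (x + a)) ∈ trigPolySubmodule N := by
  obtain ⟨c, rfl⟩ := ht
  refine ⟨fun k ↦ c k * Complex.exp (k * a * Complex.I), funext fun x ↦
    Finset.sum_congr rfl fun k _ ↦ ?_⟩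
  rw [mul_assoc (c k), ← Complex.exp_add]
  push_cast
  ring_nf

lemma continuous_of_mem_trigPolySubmodule (ht : t ∈ trigPolySubmodule N) : Continuous t := by
  obtain ⟨c, rfl⟩ := ht
  fun_prop

lemma periodic_of_mem_trigPolySubmodule (ht : t ∈ trigPolySubmodule N) :
    Function.Periodic t (2 * π) := by
  obtain ⟨c, rfl⟩ := ht
  refine fun x ↦ Finset.sum_congr rfl fun k _ ↦ ?_
  have hexponent : (k : ℂ) * ((x + 2 * π : ℝ) : ℂ) * Complex.I =
      k * x * Complex.I + k * (2 * π * Complex.I) := by push_cast; ring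
  rw [hexponent, Complex.exp_add, Complex.exp_int_mul_two_pi_mul_I, mul_one]

lemma L1norm_nonneg (f : ℝ → ℂ) : 0 ≤ L1norm f :=
  mul_nonneg (by positivity)
    (intervalIntegral.integral_nonneg two_pi_pos.le fun _ _ ↦ norm_nonneg _)

lemma L1norm_congr_ae (hfg : f =ᵐ[volume] g) : L1norm f = L1norm g := by
  rw [L1norm, L1norm, intervalIntegral.integral_congr_ae (hfg.mono fun x hx _ ↦ by rw [hx])]

lemma L1norm_smul (c : ℂ) (f : ℝ → ℂ) : L1norm (c • f) = ‖c‖ * L1norm f := by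
  simp_rw [L1norm, Pi.smul_apply, norm_smul, intervalIntegral.integral_const_mul]
  ring

lemma L1norm_sub_le (hf : IntervalIntegrable f volume 0 (2 * π))
    (hg : IntervalIntegrable g volume 0 (2 * π)) : L1norm (f - g) ≤ L1norm f + L1norm g := by
  rw [L1norm, L1norm, L1norm, ← mul_add, ← intervalIntegral.integral_add hf.norm hg.norm]
  gcongr
  exact intervalIntegral.integral_mono_on two_pi_pos.le (hf.sub hg).norm (hf.norm.add hg.norm)
    fun x _ ↦ norm_sub_le _ _

lemma L1norm_comp_add_right (hf : Function.Periodic f (2 * π)) (a : ℝ) :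
    L1norm (fun x ↦ f (x + a)) = L1norm f := by
  have hnorm := integral_comp_add_right_of_periodic (hf.comp norm) a
  simp only [Function.comp_apply] at hnorm
  rw [L1norm, L1norm, hnorm]

lemma bestApprox_le (ht : t ∈ trigPolySubmodule N) : bestApprox N f ≤ L1norm (f - t) :=
  csInf_le ⟨0, forall_mem_image.mpr fun _ _ ↦ L1norm_nonneg _⟩ (mem_image_of_mem _ ht)

lemma le_bestApprox {C : ℝ} (hC : ∀ t ∈ trigPolySubmodule N, C ≤ L1norm (f - t)) :
    C ≤ bestApprox N f :=
  le_csInf ⟨_, mem_image_of_mem _ (trigPolySubmodule N).zero_mem⟩ (forall_mem_image.mpr hC)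

lemma bestApprox_congr_ae (hfg : f =ᵐ[volume] g) : bestApprox N f = bestApprox N g := by
  unfold bestApprox
  congr 1
  exact image_congr fun t _ ↦ L1norm_congr_ae (hfg.sub (ae_eq_refl t))

lemma bestApprox_add_le (ht : t ∈ trigPolySubmodule N) (f : ℝ → ℂ) :
    bestApprox N (t + f) ≤ bestApprox N f := by
  refine le_bestApprox fun u hu ↦ ?_
  rw [← add_sub_add_left_eq_sub f u t]
  exact bestApprox_le ((trigPolySubmodule N).add_mem ht hu)

lemma bestApprox_smul_le {c : ℂ} (hc : c ≠ 0) (f : ℝ → ℂ) :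
    bestApprox N (c • f) ≤ ‖c‖ * bestApprox N f := by
  rw [← div_le_iff₀' (norm_pos_iff.mpr hc)]
  refine le_bestApprox fun t ht ↦ ?_
  rw [div_le_iff₀' (norm_pos_iff.mpr hc), ← L1norm_smul, smul_sub]
  exact bestApprox_le ((trigPolySubmodule N).smul_mem c ht)

lemma bestApprox_sub_le (hf : IntervalIntegrable f volume 0 (2 * π))
    (hg : IntervalIntegrable g volume 0 (2 * π)) :
    bestApprox N (f - g) ≤ bestApprox N f + bestApprox N g := by
  rw [← sub_le_iff_le_add]
  refine le_bestApprox fun t ht ↦ ?_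
  rw [sub_le_comm]
  refine le_bestApprox fun u hu ↦ ?_
  rw [sub_le_iff_le_add']
  have hint {v : ℝ → ℂ} (hv : v ∈ trigPolySubmodule N) : IntervalIntegrable v volume 0 (2 * π) :=
    (continuous_of_mem_trigPolySubmodule hv).intervalIntegrable _ _
  calc bestApprox N (f - g) ≤ L1norm (f - g - (t - u)) :=
        bestApprox_le ((trigPolySubmodule N).sub_mem ht hu)
    _ = L1norm (f - t - (g - u)) := by rw [sub_sub_sub_comm]
    _ ≤ L1norm (f - t) + L1norm (g - u) := L1norm_sub_le (hf.sub (hint ht)) (hg.sub (hint hu))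

lemma bestApprox_comp_add_right_le (hf : Function.Periodic f (2 * π)) (a : ℝ) :
    bestApprox N (fun x ↦ f (x + a)) ≤ bestApprox N f := by
  refine le_bestApprox fun t ht ↦ ?_
  rw [← L1norm_comp_add_right (hf.sub (periodic_of_mem_trigPolySubmodule ht)) a]
  exact bestApprox_le (comp_add_right_mem_trigPolySubmodule ht a)

theorem bestApprox_bernoulliKernel_le (N p : ℕ) :
    bestApprox N (fun x ↦ (bernoulliKernel (p + 1) x : ℂ)) ≤
      favardK (p + 1) / ((N + 1 : ℕ) : ℝ) ^ (p + 1) := by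
  set a : ℕ → ℝ := fun j ↦ ∫ s, favardCoeff N (p + 1) s j ∂logPowMeasure p
  have hmem : ∑ j ∈ Finset.range (N + 1),
      (a j : ℂ) • (fun x : ℝ ↦ (cos (j * x - phase (p + 1)) : ℂ)) ∈ trigPolySubmodule N :=
    Submodule.sum_mem _ fun j hj ↦ Submodule.smul_mem _ _
      (cos_mem_trigPolySubmodule (Finset.mem_range_succ_iff.mp hj) _)
  refine (bestApprox_le hmem).trans ?_
  rw [L1norm, one_div_mul_eq_div, div_le_iff₀' two_pi_pos]
  refine le_of_eq_of_le ?_ (integral_abs_bernoulliKernel_sub_le N p)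
  congr 1 with x
  rw [← norm_eq_abs, ← Complex.norm_real]
  simp [a]

end BestApprox

section CentralDiff

/-- The central difference `δf(x) = f(x + a) - f(x - a)`. -/
def centralDiff {E : Type*} [Sub E] (a : ℝ) (f : ℝ → E) (x : ℝ) : E :=
  f (x + a) - f (x - a)

lemma ofReal_centralDiff_iterate (a : ℝ) (k : ℕ) (f : ℝ → ℝ) (x : ℝ) :
    (((centralDiff a)^[k] f x : ℝ) : ℂ) = (centralDiff a)^[k] (fun y ↦ (f y : ℂ)) x := by
  have hsemiconj : Function.Semiconj (fun (f : ℝ → ℝ) y ↦ (f y : ℂ)) (centralDiff a)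
      (centralDiff a) := fun f ↦ funext fun y ↦ Complex.ofReal_sub _ _
  exact congrFun (hsemiconj.iterate_right k f) x

variable {E : Type*} [NormedAddCommGroup E] {f F : ℝ → E}

lemma periodic_centralDiff_iterate {T : ℝ} (hf : Function.Periodic f T) (a : ℝ) (k : ℕ) :
    Function.Periodic ((centralDiff a)^[k] f) T := by
  induction k with
  | zero => exact hf
  | succ k ih =>
    intro x
    simp only [Function.iterate_succ_apply', centralDiff, add_right_comm x T,
      add_sub_right_comm x T, ih _]

lemma intervalIntegrable_centralDiff_iterate (hf : ∀ b c, IntervalIntegrable f volume b c)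
    (a : ℝ) (k : ℕ) (b c : ℝ) : IntervalIntegrable ((centralDiff a)^[k] f) volume b c := by
  induction k generalizing b c with
  | zero => exact hf b c
  | succ k ih =>
    rw [Function.iterate_succ_apply']
    refine IntervalIntegrable.sub ?_ ?_
    · simpa using (ih (b + a) (c + a)).comp_add_right a
    · simpa using (ih (b - a) (c - a)).comp_sub_right a

lemma integral_centralDiff_iterate [NormedSpace ℝ E] (hf : ∀ b c, IntervalIntegrable f volume b c)
    (hF : ∀ b c, ∫ x in b..c, f x = F c - F b) (a : ℝ) (k : ℕ) (b c : ℝ) :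
    ∫ x in b..c, (centralDiff a)^[k] f x =
      (centralDiff a)^[k] F c - (centralDiff a)^[k] F b := by
  induction k generalizing b c with
  | zero => exact hF b c
  | succ k ih =>
    have hint := intervalIntegrable_centralDiff_iterate hf a k
    simp only [Function.iterate_succ_apply', centralDiff]
    rw [intervalIntegral.integral_sub (by simpa using (hint (b + a) (c + a)).comp_add_right a)
      (by simpa using (hint (b - a) (c - a)).comp_sub_right a),
      intervalIntegral.integral_comp_add_right, intervalIntegral.integral_comp_sub_right, ih, ih]
    abel

lemma bestApprox_centralDiff_le {N : ℕ} {f : ℝ → ℂ} (hper : Function.Periodic f (2 * π))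
    (hint : ∀ b c, IntervalIntegrable f volume b c) (a : ℝ) :
    bestApprox N (centralDiff a f) ≤ 2 * bestApprox N f := by
  have hshift (b : ℝ) : IntervalIntegrable (fun x ↦ f (x + b)) volume 0 (2 * π) := by
    simpa using (hint (0 + b) (2 * π + b)).comp_add_right b
  calc bestApprox N (centralDiff a f)
      ≤ bestApprox N (fun x ↦ f (x + a)) + bestApprox N (fun x ↦ f (x + -a)) :=
        bestApprox_sub_le (hshift a) (hshift (-a))
    _ ≤ bestApprox N f + bestApprox N f := add_le_add
        (bestApprox_comp_add_right_le hper a) (bestApprox_comp_add_right_le hper (-a))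
    _ = 2 * bestApprox N f := (two_mul _).symm

lemma bestApprox_centralDiff_iterate_le {N : ℕ} {f : ℝ → ℂ} (hper : Function.Periodic f (2 * π))
    (hint : ∀ b c, IntervalIntegrable f volume b c) (a : ℝ) (k : ℕ) :
    bestApprox N ((centralDiff a)^[k] f) ≤ 2 ^ k * bestApprox N f := by
  induction k with
  | zero => simp
  | succ k ih =>
    rw [Function.iterate_succ_apply', pow_succ', mul_assoc]
    exact (bestApprox_centralDiff_le (periodic_centralDiff_iterate hper a k)
      (intervalIntegrable_centralDiff_iterate hint a k) a).trans (by gcongr)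

end CentralDiff

lemma bestApprox_centralDiff_iterate_bernoulliKernel_le (N p : ℕ) (a : ℝ) (k : ℕ) :
    bestApprox N ((centralDiff a)^[k] (fun x ↦ (bernoulliKernel (p + 1) x : ℂ))) ≤
      2 ^ k * (favardK (p + 1) / ((N + 1 : ℕ) : ℝ) ^ (p + 1)) := by
  refine (bestApprox_centralDiff_iterate_le ((periodic_bernoulliKernel _).comp Complex.ofReal)
    (fun b c ↦ ?_) a k).trans (by gcongr; exact bestApprox_bernoulliKernel_le N p)
  have hint := intervalIntegrable_bernoulliKernel (p + 1) b c
  exact ⟨hint.1.ofReal, hint.2.ofReal⟩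

section ChiConv

lemma floor_add_sub_floor_sub {a u : ℝ} (ha : a ∈ Icc 0 (1 / 2)) (hu : u - round u ≠ a) :
    ⌊u + a⌋ - ⌊u - a⌋ = if |u - round u| ≤ a then 1 else 0 := by
  have ⟨ha0, ha1⟩ := ha
  have ⟨hlower, hupper⟩ := abs_le.mp (abs_sub_round u)
  split_ifs with hnear
  · have ⟨hleft, hright⟩ := abs_le.mp hnear
    have hright' := hright.lt_of_ne hu
    rw [show ⌊u + a⌋ = round u from Int.floor_eq_iff.mpr ⟨by linarith, by linarith⟩,
      show ⌊u - a⌋ = round u - 1 from Int.floor_eq_iff.mpr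
        ⟨by push_cast; linarith, by push_cast; linarith⟩, sub_sub_cancel]
  · rw [sub_eq_zero]
    rcases lt_abs.mp (not_le.mp hnear) with hfar | hfar
    · rw [show ⌊u + a⌋ = round u from Int.floor_eq_iff.mpr ⟨by linarith, by linarith⟩,
        show ⌊u - a⌋ = round u from Int.floor_eq_iff.mpr ⟨by linarith, by linarith⟩]
    · rw [show ⌊u + a⌋ = round u - 1 from Int.floor_eq_iff.mpr
          ⟨by push_cast; linarith, by push_cast; linarith⟩,
        show ⌊u - a⌋ = round u - 1 from Int.floor_eq_iff.mpr
          ⟨by push_cast; linarith, by push_cast; linarith⟩]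

variable {h : ℝ}

lemma periodic_chi (h : ℝ) : Function.Periodic (chi h) (2 * π) := by
  intro x
  have hdiv : (x + 2 * π) / (2 * π) = x / (2 * π) + 1 := by field_simp
  simp only [chi, hdiv, round_add_one]
  push_cast
  ring_nf

lemma chi_of_mem_Ico {x : ℝ} (hx : x ∈ Ico (-π) π) :
    chi h x = if |x| ≤ π * h then 1 / h else 0 := by
  have hround : round (x / (2 * π)) = 0 := by
    rw [round_eq_zero_iff, mem_Ico, le_div_iff₀ two_pi_pos, div_lt_iff₀ two_pi_pos]
    constructor <;> linarith [hx.1, hx.2]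
  simp only [chi, hround, Int.cast_zero, mul_zero, sub_zero]

lemma conv_chi (hh : h ∈ Ioc 0 1) {g : ℝ → ℝ} (hg : Function.Periodic g (2 * π)) (x : ℝ) :
    conv (chi h) g x = 1 / (2 * π * h) * ∫ y in (x - π * h)..(x + π * h), g y := by
  have hpos : 0 < π * h := mul_pos pi_pos hh.1
  have hle : π * h ≤ π := mul_le_of_le_one_right pi_pos.le hh.2
  have hper : Function.Periodic (fun y ↦ chi h (x - y) * g y) (2 * π) := fun y ↦ by
    simp only [hg y, ← sub_sub, (periodic_chi h).sub_eq]
  have hperiod := hper.intervalIntegral_add_eq 0 (x - π)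
  rw [zero_add, show x - π + 2 * π = x + π by ring] at hperiod
  have hindicator : ∀ y ∈ Ioc (x - π) (x + π), chi h (x - y) * g y =
      (Icc (x - π * h) (x + π * h)).indicator (fun y ↦ 1 / h * g y) y := fun y hy ↦ by
    rw [chi_of_mem_Ico ⟨by linarith [hy.2], by linarith [hy.1]⟩, indicator_apply, ite_mul, zero_mul]
    exact if_congr mem_Icc_iff_abs_le rfl rfl
  have hinter : (Ioc (x - π) (x + π) ∩ Icc (x - π * h) (x + π * h) : Set ℝ) =ᵐ[volume]
      Ioc (x - π * h) (x + π * h) := by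
    have hsub : Ioc (x - π * h) (x + π * h) ⊆ Ioc (x - π) (x + π) :=
      Ioc_subset_Ioc (by linarith) (by linarith)
    conv_rhs => rw [← inter_eq_right.mpr hsub]
    exact (ae_eq_refl _).inter Ioc_ae_eq_Icc.symm
  rw [conv, hperiod, intervalIntegral.integral_of_le (by linarith [pi_pos]),
    setIntegral_congr_fun measurableSet_Ioc hindicator, setIntegral_indicator measurableSet_Icc,
    setIntegral_congr_set hinter, integral_const_mul,
    ← intervalIntegral.integral_of_le (by linarith)]
  field_simp

lemma chi_eq_ite_abs_sub_round (h x : ℝ) : chi h x =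
    (if |x / (2 * π) - round (x / (2 * π))| ≤ h / 2 then 1 else 0) / h := by
  have hscale : |x - 2 * π * round (x / (2 * π))| =
      2 * π * |x / (2 * π) - round (x / (2 * π))| := by
    rw [← abs_of_pos two_pi_pos, ← abs_mul, abs_of_pos two_pi_pos]
    field_simp
  rw [chi, hscale, ite_div, zero_div]
  refine if_congr ?_ rfl rfl
  rw [mul_comm 2 π, mul_assoc, mul_le_mul_iff_right₀ pi_pos, le_div_iff₀' two_pos]

lemma centralDiff_bernoulliKernel_one (h x : ℝ) :
    centralDiff (π * h) (bernoulliKernel 1) x =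
      2 * π * (⌊x / (2 * π) + h / 2⌋ - ⌊x / (2 * π) - h / 2⌋ - h) := by
  have hadd : (x + π * h) / (2 * π) = x / (2 * π) + h / 2 := by field_simp
  have hsub : (x - π * h) / (2 * π) = x / (2 * π) - h / 2 := by field_simp
  simp only [centralDiff, bernoulliKernel, bernoulliFun_one, hadd, hsub, Int.fract, pow_one,
    Nat.factorial_one, Nat.cast_one, div_one]
  ring

lemma chi_ae_eq (hh : h ∈ Ioc 0 1) : chi h =ᵐ[volume] fun x ↦
    1 + 1 / (2 * π * h) * centralDiff (π * h) (bernoulliKernel 1) x := by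
  have hjumps : (range fun k : ℤ ↦ 2 * π * (h / 2 + k)).Countable := countable_range _
  filter_upwards [hjumps.ae_notMem volume] with x hx
  have hne : x / (2 * π) - round (x / (2 * π)) ≠ h / 2 := fun hjump ↦
    hx ⟨round (x / (2 * π)), by simp only [← hjump]; field_simp; ring⟩
  have hfloor := floor_add_sub_floor_sub ⟨by linarith [hh.1], by linarith [hh.2]⟩ hne
  have hh0 := hh.1.ne'
  rw [chi_eq_ite_abs_sub_round, centralDiff_bernoulliKernel_one, ← Int.cast_sub, hfloor]
  push_cast
  field_simp
  ring

lemma chiConv_succ_ae_eq (hh : h ∈ Ioc 0 1) (p : ℕ) : chiConv h (p + 1) =ᵐ[volume] fun x ↦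
    1 + (1 / (2 * π * h)) ^ (p + 1) *
      (centralDiff (π * h))^[p + 1] (bernoulliKernel (p + 1)) x := by
  induction p with
  | zero => simpa using! chi_ae_eq hh
  | succ p ih =>
    refine Eventually.of_forall fun x ↦ ?_
    have hint := intervalIntegrable_bernoulliKernel (p + 1)
    have hper : Function.Periodic (fun y ↦ 1 + (1 / (2 * π * h)) ^ (p + 1) *
        (centralDiff (π * h))^[p + 1] (bernoulliKernel (p + 1)) y) (2 * π) := fun y ↦ by
      simp only [periodic_centralDiff_iterate (periodic_bernoulliKernel (p + 1)) _ _ y]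
    have hconv : chiConv h (p + 1 + 1) x = conv (chi h) (fun y ↦ 1 + (1 / (2 * π * h)) ^ (p + 1) *
        (centralDiff (π * h))^[p + 1] (bernoulliKernel (p + 1)) y) x := by
      rw [chiConv, conv, conv, intervalIntegral.integral_congr_ae (ih.mono fun y hy _ ↦ by rw [hy])]
    have hh0 := hh.1.ne'
    rw [hconv, conv_chi hh hper, intervalIntegral.integral_add intervalIntegrable_const
      ((intervalIntegrable_centralDiff_iterate hint _ _ _ _).const_mul _),
      intervalIntegral.integral_const_mul, integral_centralDiff_iterate hint
      (integral_bernoulliKernel (Nat.succ_ne_zero p)), Function.iterate_succ_apply' _ (p + 1),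
      intervalIntegral.integral_const, smul_eq_mul, pow_succ _ (p + 1)]
    simp only [centralDiff]
    field_simp
    ring

end ChiConv

end Favard

open Favard in
theorem bestApprox_chiConv_le_general (n m : ℕ) (hn : 1 ≤ n) (hm : 1 ≤ m) (h : ℝ)
    (hh : h ∈ Set.Ioc 0 1) :
    bestApprox (n - 1) (fun θ => (chiConv h m θ : ℂ)) ≤
      favardK m / (Real.pi * h * n) ^ m := by
  obtain ⟨N, rfl⟩ := Nat.exists_eq_add_of_le' hn
  obtain ⟨p, rfl⟩ := Nat.exists_eq_add_of_le' hm
  have hcpos : 0 < (1 / (2 * Real.pi * h)) ^ (p + 1) := by have := hh.1; positivity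
  set c : ℝ := (1 / (2 * Real.pi * h)) ^ (p + 1) with hc
  set D : ℝ → ℂ := (centralDiff (Real.pi * h))^[p + 1] (fun x ↦ (bernoulliKernel (p + 1) x : ℂ))
  have hchi : (fun θ => (chiConv h (p + 1) θ : ℂ)) =ᵐ[MeasureTheory.volume]
      (fun _ ↦ 1) + (c : ℂ) • D := by
    filter_upwards [chiConv_succ_ae_eq hh p] with x hx
    rw [hx, Complex.ofReal_add, Complex.ofReal_mul, ofReal_centralDiff_iterate, Complex.ofReal_one]
    rfl
  calc bestApprox N (fun θ => (chiConv h (p + 1) θ : ℂ))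
      = bestApprox N ((fun _ ↦ 1) + (c : ℂ) • D) := bestApprox_congr_ae hchi
    _ ≤ bestApprox N ((c : ℂ) • D) := bestApprox_add_le (const_mem_trigPolySubmodule 1) _
    _ ≤ ‖(c : ℂ)‖ * bestApprox N D := bestApprox_smul_le (mod_cast hcpos.ne') D
    _ ≤ c * (2 ^ (p + 1) * (favardK (p + 1) / ((N + 1 : ℕ) : ℝ) ^ (p + 1))) := by
        rw [Complex.norm_real, Real.norm_of_nonneg hcpos.le]
        gcongr
        exact bestApprox_centralDiff_iterate_bernoulliKernel_le N p (Real.pi * h) (p + 1)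
    _ = favardK (p + 1) / (Real.pi * h * (N + 1 : ℕ)) ^ (p + 1) := by
        simp only [hc, div_pow, one_pow, mul_pow]
        field_simp

/-- For `1/(2mn) ≤ h < 1`, `E_{n−1}(χ_h^m)_{L¹} ≤ K_m/(πhn)^m`. -/
theorem bestApprox_chiConv_le (n m : ℕ) (hn : 1 ≤ n) (hm : 1 ≤ m) (h : ℝ)
    (hlow : 1 / (2 * (m:ℝ) * (n:ℝ)) ≤ h) (hup : h < 1) :
    bestApprox (n - 1) (fun θ => (chiConv h m θ : ℂ)) ≤
      favardK m / (Real.pi * h * n) ^ m :=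
  bestApprox_chiConv_le_general n m hn hm h
    ⟨lt_of_lt_of_le (by positivity) hlow, hup.le⟩
end

section
/- For h ∈ {1/(2n), 3/(2n), …, (2n−1)/(2n)} and every m ≥ 1, the best L¹ approximation by trigonometric polynomials of degree ≤ n−1 satisfies E_{n−1}(χ_h^m)_{L¹} = K_m/(πhn)^m exactly. -/
/-!
If `g` differs from `f` by a trigonometric polynomial of degree at most `n - 1`, and a function `s`
bounded by `1` annihilates these polynomials and satisfies `∫ g s = ∫ |g|`, then `g` is the error of
best approximation of `f`. All sign functions here are square waves
`s_m(θ) = sign (cos (nθ - mπ/2))`.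

For the Bernoulli kernels, such a `g` is an average over radii `r = e^{-t}`, with the Laplace weight
`t^{m-1} / (m-1)!` turning `r^{|l|}` into `|l|^{-m}`, of Sz.-Nagy's kernels: the Poisson kernel
times a cosine wave. Each of them has the sign of the wave, hence so does `g`, and pairing with the
Fourier series of `s_m` gives `∫ |g| = K_m / n^m`.

The multiplier `sin (πhl) / (πhl)` of `χ_h` is that of a central difference of step `πh` divided by
that of `πh · d/dθ`. So `χ_h^m` is, up to low frequencies, `(πh)^{-m}` times the `m`-th central
difference of `g`. When `nπh` is an odd multiple of `π/2`, the difference maps `s_j` to `± s_{j+1}`,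
and so loses nothing in the pairing with `s_0`.
-/

open AddCircle MeasureTheory Filter Topology
open scoped Real

theorem ae_eq_zero_of_forall_integral_continuousMap_smul_eq_zero {X E : Type*}
    [TopologicalSpace X] [HasOuterApproxClosed X] [MeasurableSpace X] [BorelSpace X]
    [NormedAddCommGroup E] [NormedSpace ℝ E] [CompleteSpace E] {μ : Measure X} {f : X → E}
    (hf : Integrable f μ) (h : ∀ φ : C(X, ℝ), ∫ x, φ x • f x ∂μ = 0) : f =ᵐ[μ] 0 := by
  refine ae_eq_zero_of_forall_setIntegral_isClosed_eq_zero hf fun F hF => ?_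
  let φ : ℕ → C(X, ℝ) := fun k => ⟨fun x => hF.apprSeq k x, by fun_prop⟩
  have hφ_le (k : ℕ) (x : X) : ‖φ k x‖ ≤ 1 := by
    simpa [φ] using HasOuterApproxClosed.apprSeq_apply_le_one hF k x
  have hφ_lim (x : X) :
      Tendsto (fun k => φ k x • f x) atTop (𝓝 (F.indicator (1 : X → ℝ) x • f x)) := by
    have hlim := tendsto_pi_nhds.mp (HasOuterApproxClosed.tendsto_apprSeq hF) x
    have hind : F.indicator (1 : X → ℝ) x = F.indicator (fun _ => (1 : NNReal)) x := by
      by_cases hx : x ∈ F <;> simp [hx]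
    rw [hind]
    exact ((NNReal.continuous_coe.tendsto _).comp hlim).smul_const (f x)
  have hlim : Tendsto (fun k => ∫ x, φ k x • f x ∂μ) atTop
      (𝓝 (∫ x, F.indicator (1 : X → ℝ) x • f x ∂μ)) := by
    refine tendsto_integral_of_dominated_convergence (fun x => ‖f x‖)
      (fun k => (φ k).continuous.aestronglyMeasurable.smul hf.1) hf.norm
      (fun k => .of_forall fun x => ?_) (.of_forall hφ_lim)
    rw [norm_smul]
    exact mul_le_of_le_one_left (norm_nonneg _) (hφ_le k x)
  simp only [h] at hlim
  rw [← integral_indicator hF.measurableSet, tendsto_nhds_unique tendsto_const_nhds hlim]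
  congr 1 with x
  by_cases hx : x ∈ F <;> simp [hx]

section FourierCoefficients

variable {T : ℝ}

theorem fourier_apply_add (l : ℤ) (x y : AddCircle T) :
    fourier l (x + y) = fourier l x * fourier l y := by
  simp only [fourier_apply, smul_add, toCircle_add, Circle.coe_mul]

theorem fourier_apply_neg (l : ℤ) (x : AddCircle T) : fourier l (-x) = fourier (-l) x := by
  simp only [fourier_apply, smul_neg, neg_smul]

theorem fourier_apply_zsmul (l n : ℤ) (x : AddCircle T) :
    fourier l (n • x) = fourier (l * n) x := by
  simp only [fourier_apply, mul_smul]

theorem norm_fourier_apply (l : ℤ) (x : AddCircle T) : ‖fourier l x‖ = 1 :=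
  Circle.norm_coe _

variable [Fact (0 < T)] {E : Type*} [NormedAddCommGroup E] [NormedSpace ℂ E]

theorem ae_eq_zero_of_fourierCoeff_eq_zero [CompleteSpace E] {f : AddCircle T → E}
    (hf : Integrable f haarAddCircle) (h : ∀ l, fourierCoeff f l = 0) :
    f =ᵐ[haarAddCircle] 0 := by
  have smul_integrable (φ : C(AddCircle T, ℂ)) :
      Integrable (fun x => φ x • f x) haarAddCircle :=
    hf.bdd_smul ‖φ‖ φ.continuous.aestronglyMeasurable (.of_forall φ.norm_coe_le_norm)
  let pairing : C(AddCircle T, ℂ) →ₗ[ℂ] E :=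
    { toFun φ := ∫ x, φ x • f x ∂haarAddCircle
      map_add' φ ψ := by
        simp only [ContinuousMap.add_apply, add_smul]
        exact integral_add (smul_integrable φ) (smul_integrable ψ)
      map_smul' c φ := by
        simp only [ContinuousMap.smul_apply, smul_assoc, RingHom.id_apply]
        exact integral_smul c _ }
  have pairing_le (φ : C(AddCircle T, ℂ)) :
      ‖pairing φ‖ ≤ (∫ x, ‖f x‖ ∂haarAddCircle) * ‖φ‖ := by
    rw [mul_comm, ← integral_const_mul]
    refine norm_integral_le_of_norm_le (hf.norm.const_mul _) (.of_forall fun x => ?_)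
    rw [norm_smul]
    exact mul_le_mul_of_nonneg_right (φ.norm_coe_le_norm x) (norm_nonneg _)
  have pairing_eq_zero : pairing.mkContinuous _ pairing_le = 0 := by
    refine ContinuousLinearMap.ext_on
      (Submodule.dense_iff_topologicalClosure_eq_top.mpr span_fourier_closure_eq_top) ?_
    rintro _ ⟨l, rfl⟩
    change ∫ x, fourier l x • f x ∂haarAddCircle = 0
    simpa only [fourierCoeff, neg_neg] using h (-l)
  refine ae_eq_zero_of_forall_integral_continuousMap_smul_eq_zero hf fun φ => ?_
  simpa [pairing] using DFunLike.congr_fun pairing_eq_zero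
    ((⟨Complex.ofReal, Complex.continuous_ofReal⟩ : C(ℝ, ℂ)).comp φ)

theorem integrable_fourier (l : ℤ) : Integrable (fourier (T := T) l) haarAddCircle :=
  (fourier l).continuous.integrable_of_hasCompactSupport (.of_compactSpace _)

theorem fourierCoeff_comp_add_right (f : AddCircle T → E) (y : AddCircle T) (l : ℤ) :
    fourierCoeff (fun x => f (x + y)) l = fourier l y • fourierCoeff f l := by
  rw [fourierCoeff, fourierCoeff,
    ← integral_add_right_eq_self (fun x => fourier (-l) x • f x) y, ← integral_smul]
  congr 1 with x
  rw [fourier_apply_add, smul_smul, mul_left_comm, ← fourier_add]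
  simp

theorem fourierCoeff_sub {f g : AddCircle T → E} (hf : Integrable f haarAddCircle)
    (hg : Integrable g haarAddCircle) (l : ℤ) :
    fourierCoeff (fun x => f x - g x) l = fourierCoeff f l - fourierCoeff g l := by
  simp only [fourierCoeff, smul_sub]
  exact integral_sub (hf.fourier_smul _) (hg.fourier_smul _)

theorem integrable_of_hasSum_fourier {c : ℤ → ℂ} (hc : Summable fun l => ‖c l‖)
    {f : AddCircle T → ℂ} (hf : ∀ x, HasSum (fun l => c l * fourier l x) (f x)) :
    Integrable f haarAddCircle := by
  have hcont : Continuous fun x => ∑' l, c l * fourier (T := T) l x :=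
    continuous_tsum (fun l => continuous_const.mul (fourier l).continuous) hc fun l x => by
      rw [norm_mul, norm_fourier_apply, mul_one]
  simp only [(hf _).tsum_eq] at hcont
  exact hcont.integrable_of_hasCompactSupport (.of_compactSpace _)

theorem hasSum_integral_mul_of_hasSum_fourier {c : ℤ → ℂ} (hc : Summable fun l => ‖c l‖)
    {f g : AddCircle T → ℂ} (hf : ∀ x, HasSum (fun l => c l * fourier l x) (f x))
    (hg : Integrable g haarAddCircle) :
    HasSum (fun l => c l * fourierCoeff g (-l)) (∫ x, f x * g x ∂haarAddCircle) := by
  have term_integrable (l : ℤ) :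
      Integrable (fun x => c l * (fourier l x * g x)) haarAddCircle :=
    (hg.fourier_smul l).const_mul (c l)
  have norm_term (l : ℤ) : (∫ x, ‖c l * (fourier l x * g x)‖ ∂haarAddCircle) =
      ‖c l‖ * ∫ x, ‖g x‖ ∂haarAddCircle := by
    simp only [norm_mul, norm_fourier_apply, one_mul]
    exact integral_const_mul _ _
  have hsum := hasSum_integral_of_summable_integral_norm term_integrable
    (by simpa only [norm_term] using hc.mul_right _)
  have tsum_term (x : AddCircle T) : ∑' l, c l * (fourier l x * g x) = f x * g x := by
    simpa only [mul_assoc] using ((hf x).mul_right (g x)).tsum_eq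
  simpa only [tsum_term, integral_const_mul, fourierCoeff, neg_neg, smul_eq_mul] using hsum

theorem fourierCoeff_eq_of_hasSum_fourier {c : ℤ → ℂ} (hc : Summable fun l => ‖c l‖)
    {f : AddCircle T → ℂ} (hf : ∀ x, HasSum (fun l => c l * fourier l x) (f x)) (l : ℤ) :
    fourierCoeff f l = c l := by
  have hsum := hasSum_integral_mul_of_hasSum_fourier hc hf
    (integrable_fourier (-l))
  have hsingle := hasSum_single (f := fun k => c k * fourierCoeff (fourier (T := T) (-l)) (-k)) l
    fun k hk => by simp [fourierCoeff_fourier, hk]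
  simp only [fourierCoeff_fourier, Pi.single_eq_same, mul_one] at hsingle
  rw [fourierCoeff_fourier] at hsum
  rw [← hsum.unique hsingle, fourierCoeff]
  simp only [smul_eq_mul, mul_comm]

theorem fourierCoeff_convolution {f g : AddCircle T → ℂ} (hf : Integrable f haarAddCircle)
    (hg : Integrable g haarAddCircle) (l : ℤ) :
    fourierCoeff (convolution f g (ContinuousLinearMap.mul ℂ ℂ) haarAddCircle) l =
      fourierCoeff f l * fourierCoeff g l := by
  have hmodulate (x : AddCircle T) :
      fourier (-l) x • convolution f g (ContinuousLinearMap.mul ℂ ℂ) haarAddCircle x =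
        convolution (fun y => fourier (-l) y • f y) (fun y => fourier (-l) y • g y)
          (ContinuousLinearMap.mul ℂ ℂ) haarAddCircle x := by
    simp only [convolution, ← integral_smul]
    congr 1 with y
    simp only [ContinuousLinearMap.mul_apply', smul_eq_mul]
    rw [mul_mul_mul_comm, ← fourier_apply_add, add_sub_cancel]
  simp only [fourierCoeff, hmodulate]
  exact integral_convolution _ (hf.fourier_smul _) (hg.fourier_smul _)

end FourierCoefficients

section BestApproximation

theorem integrable_sum_mul_fourier {T : ℝ} [Fact (0 < T)] (S : Finset ℤ) (c : ℤ → ℂ) :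
    Integrable (fun x => ∑ k ∈ S, c k * fourier (T := T) k x) haarAddCircle :=
  integrable_finsetSum S fun k _ => (integrable_fourier k).const_mul _

theorem fourierCoeff_sum_mul_fourier {T : ℝ} [Fact (0 < T)] (S : Finset ℤ) (c : ℤ → ℂ) (l : ℤ) :
    fourierCoeff (fun x => ∑ k ∈ S, c k * fourier (T := T) k x) l = if l ∈ S then c l else 0 := by
  refine fourierCoeff_eq_of_hasSum_fourier (c := fun k => if k ∈ S then c k else 0)
    (summable_of_ne_finset_zero (s := S) fun k hk => by simp [hk]) (fun x => ?_) l
  simpa [ite_mul] using hasSum_sum_of_ne_finset_zero (s := S)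
    (f := fun k => (if k ∈ S then c k else 0) * fourier k x) fun k hk => by simp [hk]

theorem ae_eq_sum_fourierCoeff_mul_fourier {T : ℝ} [Fact (0 < T)] {f : AddCircle T → ℂ}
    (hf : Integrable f haarAddCircle) {S : Finset ℤ} (h : ∀ l ∉ S, fourierCoeff f l = 0) :
    f =ᵐ[haarAddCircle] fun x => ∑ k ∈ S, fourierCoeff f k * fourier k x := by
  have hsum := integrable_sum_mul_fourier (T := T) S (fourierCoeff f)
  refine (ae_eq_zero_of_fourierCoeff_eq_zero (hf.sub hsum) fun l => ?_).mono
    fun x hx => sub_eq_zero.mp hx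
  refine (fourierCoeff_sub hf hsum l).trans (sub_eq_zero.mpr ?_)
  rw [fourierCoeff_sum_mul_fourier]
  split_ifs with hl
  exacts [rfl, h l hl]

theorem integral_mul_eq_zero_of_disjoint_fourierCoeff {T : ℝ} [Fact (0 < T)]
    {f s : AddCircle T → ℂ} (hf : Integrable f haarAddCircle) (hs : Integrable s haarAddCircle)
    {S : Finset ℤ} (hfS : ∀ l ∉ S, fourierCoeff f l = 0)
    (hsS : ∀ l ∈ S, fourierCoeff s (-l) = 0) :
    ∫ x, f x * s x ∂haarAddCircle = 0 := by
  calc ∫ x, f x * s x ∂haarAddCircle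
      = ∫ x, ∑ k ∈ S, fourierCoeff f k * (fourier k x * s x) ∂haarAddCircle := by
        refine integral_congr_ae ((ae_eq_sum_fourierCoeff_mul_fourier hf hfS).mono fun x hx => ?_)
        simp only [hx, Finset.sum_mul, mul_assoc]
    _ = ∑ k ∈ S, fourierCoeff f k * fourierCoeff s (-k) := by
        have term_integrable (k : ℤ) :
            Integrable (fun x => fourierCoeff f k * (fourier k x * s x)) haarAddCircle :=
          (hs.fourier_smul k).const_mul _
        rw [integral_finsetSum S fun k _ => term_integrable k]
        simp only [integral_const_mul, fourierCoeff.eq_1 s, neg_neg, smul_eq_mul]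
    _ = 0 := Finset.sum_eq_zero fun k hk => by rw [hsS k hk, mul_zero]

instance fact_two_pi_pos : Fact (0 < 2 * π) := ⟨Real.two_pi_pos⟩

theorem intervalIntegral_comp_coe {E : Type*} [NormedAddCommGroup E] [NormedSpace ℝ E]
    (f : AddCircle (2 * π) → E) (a : ℝ) :
    (1 / (2 * π)) • ∫ θ in a..a + 2 * π, f θ = ∫ x, f x ∂haarAddCircle := by
  rw [AddCircle.intervalIntegral_preimage, integral_haarAddCircle, one_div]

theorem L1norm_comp_coe (f : AddCircle (2 * π) → ℂ) :
    L1norm (fun θ : ℝ => f θ) = ∫ x, ‖f x‖ ∂haarAddCircle := by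
  simpa [L1norm] using intervalIntegral_comp_coe (fun x => ‖f x‖) 0

theorem fourier_two_pi_coe (l : ℤ) (θ : ℝ) :
    fourier l (θ : AddCircle (2 * π)) = Complex.exp (l * θ * Complex.I) := by
  rw [fourier_coe_apply]
  push_cast
  congr 1
  field [Real.pi_ne_zero]

theorem mem_trigPoly_iff {n : ℕ} {t : ℝ → ℂ} :
    t ∈ trigPoly n ↔ ∃ c : ℤ → ℂ, t = fun θ : ℝ =>
      ∑ k ∈ Finset.Icc (-(n : ℤ)) n, c k * fourier k (θ : AddCircle (2 * π)) := by
  simp only [trigPoly, Set.mem_ofPred_eq, fourier_two_pi_coe]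

theorem norm_integral_mul_le_integral_norm_of_fourierCoeff_eq {T : ℝ} [Fact (0 < T)]
    {f g s : AddCircle T → ℂ} {S : Finset ℤ} (hf : Integrable f haarAddCircle)
    (hg : Integrable g haarAddCircle) (hfg : ∀ l ∉ S, fourierCoeff f l = fourierCoeff g l)
    (hs : AEStronglyMeasurable s haarAddCircle) (hs_le : ∀ x, ‖s x‖ ≤ 1)
    (hs_orth : ∀ l ∈ S, fourierCoeff s (-l) = 0) :
    ‖∫ x, g x * s x ∂haarAddCircle‖ ≤ ∫ x, ‖f x‖ ∂haarAddCircle := by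
  have hs_int : Integrable s haarAddCircle := .of_bound hs 1 (.of_forall hs_le)
  have mul_s_integrable {u : AddCircle T → ℂ} (hu : Integrable u haarAddCircle) :
      Integrable (fun x => u x * s x) haarAddCircle := hu.mul_bdd hs (.of_forall hs_le)
  have hsub : ∫ x, (f x - g x) * s x ∂haarAddCircle = 0 :=
    integral_mul_eq_zero_of_disjoint_fourierCoeff (hf.sub hg) hs_int
      (fun l hl => (fourierCoeff_sub hf hg l).trans (sub_eq_zero.mpr (hfg l hl))) hs_orth
  simp only [sub_mul, integral_sub (mul_s_integrable hf) (mul_s_integrable hg), sub_eq_zero] at hsub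
  rw [← hsub]
  refine norm_integral_le_of_norm_le hf.norm (.of_forall fun x => ?_)
  rw [norm_mul]
  exact mul_le_of_le_one_right (norm_nonneg _) (hs_le x)

theorem bestApprox_eq_integral_norm_of_dual {n : ℕ} {f g s : AddCircle (2 * π) → ℂ}
    (hf : Integrable f haarAddCircle) (hg : Integrable g haarAddCircle)
    (hfg : ∀ l ∉ Finset.Icc (-(n : ℤ)) n, fourierCoeff f l = fourierCoeff g l)
    (hs : AEStronglyMeasurable s haarAddCircle) (hs_le : ∀ x, ‖s x‖ ≤ 1)
    (hs_orth : ∀ l ∈ Finset.Icc (-(n : ℤ)) n, fourierCoeff s (-l) = 0)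
    (hgs : ∫ x, ‖g x‖ ∂haarAddCircle ≤ ‖∫ x, g x * s x ∂haarAddCircle‖) :
    bestApprox n (fun θ : ℝ => f θ) = ∫ x, ‖g x‖ ∂haarAddCircle := by
  set S := Finset.Icc (-(n : ℤ)) n
  refine IsLeast.csInf_eq ⟨⟨_, mem_trigPoly_iff.mpr ⟨fourierCoeff (f - g), rfl⟩, ?_⟩, ?_⟩
  · have hfg_sub (l : ℤ) (hl : l ∉ S) : fourierCoeff (f - g) l = 0 :=
      (fourierCoeff_sub hf hg l).trans (sub_eq_zero.mpr (hfg l hl))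
    refine (L1norm_comp_coe fun x => f x - ∑ k ∈ S, fourierCoeff (f - g) k * fourier k x).trans
      (integral_congr_ae
        ((ae_eq_sum_fourierCoeff_mul_fourier (hf.sub hg) hfg_sub).mono fun x hx => ?_))
    simp only [← hx, Pi.sub_apply, sub_sub_cancel]
  · rintro _ ⟨t, ht, rfl⟩
    obtain ⟨c, rfl⟩ := mem_trigPoly_iff.mp ht
    have hp := integrable_sum_mul_fourier (T := 2 * π) S c
    refine (hgs.trans (norm_integral_mul_le_integral_norm_of_fourierCoeff_eq (hf.sub hp) hg
      (fun l hl => ?_) hs hs_le hs_orth)).trans_eq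
        (L1norm_comp_coe fun x => f x - ∑ k ∈ S, c k * fourier k x).symm
    exact (fourierCoeff_sub hf hp l).trans (by
      rw [fourierCoeff_sum_mul_fourier, if_neg hl, sub_zero, hfg l hl])

end BestApproximation

section BoxKernel

/-- The kernel `χ_h` on the circle `ℝ / 2πℤ`, complex-valued so as to have Fourier coefficients. -/
noncomputable def boxKernel (h : ℝ) : AddCircle (2 * π) → ℂ :=
  (Metric.closedBall 0 (π * h)).indicator fun _ => (1 / h : ℂ)

/-- The `(m + 1)`-fold convolution power of `boxKernel h`; the shift avoids the power `0`, which is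
not a function. -/
noncomputable def boxKernelConv (h : ℝ) : ℕ → AddCircle (2 * π) → ℂ
  | 0 => boxKernel h
  | m + 1 => convolution (boxKernelConv h m) (boxKernel h) (ContinuousLinearMap.mul ℂ ℂ)
      haarAddCircle

theorem ofReal_chi (h θ : ℝ) : (chi h θ : ℂ) = boxKernel h (θ : AddCircle (2 * π)) := by
  have hnorm : ‖(θ : AddCircle (2 * π))‖ = |θ - 2 * π * round (θ / (2 * π))| := by
    rw [AddCircle.norm_eq, inv_mul_eq_div, mul_comm (2 * π)]
  simp only [chi, boxKernel, Set.indicator, mem_closedBall_zero_iff, hnorm]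
  split_ifs <;> simp

theorem ofReal_chiConv_succ (h : ℝ) (m : ℕ) (θ : ℝ) :
    (chiConv h (m + 1) θ : ℂ) = boxKernelConv h m (θ : AddCircle (2 * π)) := by
  induction m generalizing θ with
  | zero => exact ofReal_chi h θ
  | succ m ih =>
    have hlift := intervalIntegral_comp_coe
      (fun x => boxKernelConv h m x * boxKernel h ((θ : AddCircle (2 * π)) - x)) 0
    simp only [boxKernelConv, convolution, ContinuousLinearMap.mul_apply', ← hlift, chiConv, conv,
      Complex.ofReal_mul, ← intervalIntegral.integral_ofReal, ih, ofReal_chi, zero_add,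
      QuotientAddGroup.mk_sub, Complex.real_smul, mul_comm (boxKernel _ _)]

theorem integrable_boxKernel (h : ℝ) : Integrable (boxKernel h) haarAddCircle :=
  (integrable_const _).indicator Metric.isClosed_closedBall.measurableSet

theorem integrable_boxKernelConv (h : ℝ) (m : ℕ) :
    Integrable (boxKernelConv h m) haarAddCircle := by
  induction m with
  | zero => exact integrable_boxKernel h
  | succ m ih => exact ih.integrable_convolution _ (integrable_boxKernel h)

theorem integral_exp_neg_int_mul_I {l : ℤ} (hl : l ≠ 0) (a : ℝ) :
    ∫ θ in -a..a, Complex.exp (-l * θ * Complex.I) = 2 * Complex.sin (a * l) / l := by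
  have hc : -(l : ℂ) * Complex.I ≠ 0 := by simp [hl]
  have hl' : (l : ℂ) ≠ 0 := mod_cast hl
  simp only [mul_right_comm _ _ Complex.I]
  rw [integral_exp_mul_complex hc, Complex.sin]
  push_cast
  rw [div_eq_div_iff hc hl']
  ring_nf
  simp only [Complex.I_sq]
  ring_nf

theorem fourierCoeff_boxKernel {h : ℝ} (h_pos : 0 < h) (h_lt : h < 1) {l : ℤ} (hl : l ≠ 0) :
    fourierCoeff (boxKernel h) l = Complex.sin (π * h * l) / (π * h * l) := by
  have hπh : π * h < π := mul_lt_of_lt_one_right Real.pi_pos h_lt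
  have integrand_eq : ∀ θ ∈ Set.Ioc (-π) π, fourier (-l) (θ : AddCircle (2 * π)) • boxKernel h θ =
      (Set.Icc (-(π * h)) (π * h)).indicator
        (fun θ : ℝ => Complex.exp (-l * θ * Complex.I) * (1 / h)) θ := by
    intro θ hθ
    have hnorm : ‖(θ : AddCircle (2 * π))‖ = |θ| := by
      rw [AddCircle.norm_coe_eq_abs_iff _ Real.two_pi_pos.ne', abs_of_pos Real.two_pi_pos]
      exact (abs_le.mpr ⟨hθ.1.le, hθ.2⟩).trans_eq (by ring)
    simp only [boxKernel, Set.indicator, mem_closedBall_zero_iff, hnorm, abs_le, Set.mem_Icc,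
      fourier_two_pi_coe, smul_eq_mul, mul_ite, mul_zero, Int.cast_neg]
  rw [fourierCoeff_eq_intervalIntegral _ _ (-π), show -π + 2 * π = π by ring,
    intervalIntegral.integral_of_le (by linarith [Real.pi_pos]),
    setIntegral_congr_fun measurableSet_Ioc integrand_eq, setIntegral_indicator measurableSet_Icc,
    Set.inter_eq_right.mpr (Set.Icc_subset_Ioc (by linarith) hπh.le),
    integral_Icc_eq_integral_Ioc, ← intervalIntegral.integral_of_le (by nlinarith [Real.pi_pos]),
    intervalIntegral.integral_mul_const, integral_exp_neg_int_mul_I hl]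
  have : (l : ℂ) ≠ 0 := mod_cast hl
  have : (h : ℂ) ≠ 0 := mod_cast h_pos.ne'
  have : (π : ℂ) ≠ 0 := mod_cast Real.pi_ne_zero
  simp only [Complex.real_smul]
  push_cast
  field

theorem fourierCoeff_boxKernelConv {h : ℝ} (h_pos : 0 < h) (h_lt : h < 1) (m : ℕ) {l : ℤ}
    (hl : l ≠ 0) :
    fourierCoeff (boxKernelConv h m) l = (Complex.sin (π * h * l) / (π * h * l)) ^ (m + 1) := by
  induction m with
  | zero => rw [zero_add, pow_one]; exact fourierCoeff_boxKernel h_pos h_lt hl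
  | succ m ih =>
    rw [boxKernelConv, fourierCoeff_convolution (integrable_boxKernelConv h m)
      (integrable_boxKernel h), ih, fourierCoeff_boxKernel h_pos h_lt hl, ← pow_succ]

end BoxKernel

section PhaseWave

variable {T : ℝ} (n m : ℕ)

/-- The cosine wave `θ ↦ cos (nθ - mπ/2)` of frequency `n`, delayed by `m` quarter periods. -/
noncomputable def phaseCos (x : AddCircle T) : ℝ := ((-Complex.I) ^ m * fourier n x).re

/-- The square wave `θ ↦ sign (cos (nθ - mπ/2))`. -/
noncomputable def phaseSign (x : AddCircle T) : ℂ := ((SignType.sign (phaseCos n m x) : ℝ) : ℂ)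

theorem norm_signType_cast_le_one (a : SignType) : ‖((a : ℝ) : ℂ)‖ ≤ 1 := by
  cases a <;> simp

theorem norm_phaseSign_le_one (x : AddCircle T) : ‖phaseSign n m x‖ ≤ 1 :=
  norm_signType_cast_le_one _

theorem measurable_phaseSign : Measurable (phaseSign (T := T) n m) := by
  have hsign : Measurable fun a : ℝ => ((SignType.sign a : ℝ) : ℂ) := by
    have hite : (fun a : ℝ => ((SignType.sign a : ℝ) : ℂ)) =
        fun a => if 0 < a then 1 else if a < 0 then -1 else 0 := by
      ext a
      rw [sign_apply]
      split_ifs <;> simp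
    rw [hite]
    exact Measurable.ite measurableSet_Ioi measurable_const
      (Measurable.ite measurableSet_Iio measurable_const measurable_const)
  have hcos : Measurable (phaseCos (T := T) n m) := by
    unfold phaseCos
    fun_prop
  exact hsign.comp hcos

theorem phaseCos_mul_phaseSign (x : AddCircle T) :
    phaseCos n m x * phaseSign n m x = ((|phaseCos n m x| : ℝ) : ℂ) := by
  rw [phaseSign, ← Complex.ofReal_mul, self_mul_sign]

variable {n m} in
theorem phaseSign_add_of_fourier_eq_neg_one {y : AddCircle T} (hy : fourier n y = -1)
    (x : AddCircle T) : phaseSign n m (x + y) = -phaseSign n m x := by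
  have hcos : phaseCos n m (x + y) = -phaseCos n m x := by
    rw [phaseCos, phaseCos, fourier_apply_add, hy, mul_neg_one, mul_neg, Complex.neg_re]
  simp only [phaseSign, hcos, Left.sign_neg]
  simp

variable {n} in
theorem phaseSign_add_of_fourier_eq_I {y : AddCircle T} {ε : ℤˣ}
    (hy : fourier n y = (ε : ℤ) * Complex.I) (x : AddCircle T) :
    phaseSign n m (x + y) = -(ε : ℤ) * phaseSign n (m + 1) x := by
  have hcos : phaseCos n m (x + y) = -(ε : ℤ) * phaseCos n (m + 1) x := by
    rw [phaseCos, phaseCos, fourier_apply_add, hy, ← Complex.re_ofReal_mul]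
    push_cast
    ring_nf
  rcases Int.units_eq_one_or ε with rfl | rfl <;> simp [phaseSign, hcos, Left.sign_neg]

theorem phaseSign_eq_phaseSign_one_nsmul (x : AddCircle T) :
    phaseSign n m x = phaseSign 1 m (n • x) := by
  rw [phaseSign, phaseSign, phaseCos, phaseCos, ← natCast_zsmul, fourier_apply_zsmul, Nat.cast_one,
    one_mul]

variable [hT : Fact (0 < T)]

theorem integrable_phaseSign : Integrable (phaseSign (T := T) n m) haarAddCircle :=
  .of_bound (measurable_phaseSign n m).aestronglyMeasurable 1
    (.of_forall (norm_phaseSign_le_one n m))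

variable {n}

theorem fourierCoeff_phaseSign_eq_zero (hn : n ≠ 0) {l : ℤ} (hl : ∀ j : ℤ, (2 * j + 1) * n ≠ l) :
    fourierCoeff (phaseSign (T := T) n m) l = 0 := by
  let y : AddCircle T := ↑(T / 2 / n)
  have hy : fourier n y = -1 := by
    simpa [y] using fourier_add_half_inv_index (T := T) (mod_cast hn : (n : ℤ) ≠ 0) hT.out 0
  have hly : fourier l y ≠ -1 := by
    intro h
    rw [fourier_coe_apply, ← Complex.exp_pi_mul_I, Complex.exp_eq_exp_iff_exists_int] at h
    obtain ⟨j, hj⟩ := h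
    refine hl j ?_
    have : (T : ℂ) ≠ 0 := mod_cast hT.out.ne'
    have : (n : ℂ) ≠ 0 := mod_cast hn
    have : (π : ℂ) ≠ 0 := mod_cast Real.pi_ne_zero
    push_cast at hj
    field_simp at hj
    exact mod_cast (by linear_combination -hj : ((2 * j + 1) * n : ℂ) = l)
  have hshift := fourierCoeff_comp_add_right (phaseSign (T := T) n m) y l
  simp only [phaseSign_add_of_fourier_eq_neg_one hy] at hshift
  have hneg := fourierCoeff.const_mul (phaseSign (T := T) n m) (-1) l
  simp only [neg_one_mul] at hneg
  rw [hneg, smul_eq_mul] at hshift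
  have : (fourier l y + 1) * fourierCoeff (phaseSign (T := T) n m) l = 0 := by
    linear_combination -hshift
  exact (mul_eq_zero.mp this).resolve_left fun h => hly (eq_neg_of_add_eq_zero_left h)

theorem fourierCoeff_phaseSign_eq_zero_of_abs_lt {l : ℤ} (hl : |l| < n) :
    fourierCoeff (phaseSign (T := T) n m) l = 0 := by
  have hn : n ≠ 0 := by
    rintro rfl
    exact (abs_nonneg l).not_gt hl
  refine fourierCoeff_phaseSign_eq_zero m hn fun j hj => ?_
  rw [Int.eq_zero_of_abs_lt_dvd ⟨2 * j + 1, by rw [← hj, mul_comm]⟩ hl] at hj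
  rcases mul_eq_zero.mp hj with hj | hj <;> omega

theorem fourierCoeff_comp_nsmul (hn : n ≠ 0) {f : AddCircle T → ℂ} (hf : Measurable f) (l : ℤ) :
    fourierCoeff (fun x => f (n • x)) (l * n) = fourierCoeff f l := by
  have hmp : MeasurePreserving (fun x : AddCircle T => (n : ℤ) • x) haarAddCircle haarAddCircle :=
    Measure.measurePreserving_zsmul haarAddCircle (mod_cast hn)
  have hmap : ∫ x, fourier (-l) x • f x ∂(haarAddCircle.map fun x : AddCircle T => (n : ℤ) • x) =
      ∫ x, fourier (-l) ((n : ℤ) • x) • f ((n : ℤ) • x) ∂haarAddCircle :=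
    integral_map hmp.measurable.aemeasurable
      ((fourier (-l)).continuous.measurable.smul hf).aestronglyMeasurable
  rw [hmp.map_eq] at hmap
  simp only [fourier_apply_zsmul] at hmap
  simpa only [fourierCoeff, neg_mul, natCast_zsmul] using hmap.symm

theorem re_fourier_one_eq_cos_norm (x : AddCircle (2 * π)) :
    (fourier 1 x).re = Real.cos ‖x‖ := by
  induction x using QuotientAddGroup.induction_on with
  | H θ =>
    rw [AddCircle.norm_eq, Real.cos_abs, Real.cos_sub_int_mul_two_pi, fourier_two_pi_coe,
      Int.cast_one, one_mul, Complex.exp_ofReal_mul_I_re]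

theorem phaseSign_one_zero_ae_eq :
    phaseSign (T := 2 * π) 1 0 =ᵐ[haarAddCircle] fun x => boxKernel (1 / 2) x - 1 := by
  have hball : Metric.closedBall (0 : AddCircle (2 * π)) (π / 2) =ᵐ[haarAddCircle]
      Metric.ball 0 (π / 2) := by
    refine Measure.AbsolutelyContinuous.ae_eq ?_ AddCircle.closedBall_ae_eq_ball
    rw [volume_eq_smul_haarAddCircle]
    exact Measure.absolutelyContinuous_smul (by simp [Real.pi_pos])
  refine hball.mem_iff.mono fun x hx => ?_
  rw [mem_closedBall_zero_iff, mem_ball_zero_iff] at hx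
  have hcos : phaseCos 1 0 x = Real.cos ‖x‖ := by
    rw [phaseCos, pow_zero, one_mul, Nat.cast_one, re_fourier_one_eq_cos_norm]
  have norm_le : ‖x‖ ≤ π := by
    simpa [abs_of_pos Real.pi_pos] using norm_le_half_period (2 * π) (x := x) Real.two_pi_pos.ne'
  simp only [phaseSign, hcos, boxKernel, mul_one_div]
  by_cases hnorm : ‖x‖ < π / 2
  · rw [sign_pos (Real.cos_pos_of_mem_Ioo ⟨by linarith [norm_nonneg x, Real.pi_pos], hnorm⟩),
      Set.indicator_of_mem (mem_closedBall_zero_iff.mpr hnorm.le)]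
    norm_num
  · have hlt : π / 2 < ‖x‖ := not_le.mp fun hle => hnorm (hx.mp hle)
    rw [sign_neg (Real.cos_neg_of_pi_div_two_lt_of_lt hlt (by linarith [Real.pi_pos])),
      Set.indicator_of_notMem (mt mem_closedBall_zero_iff.mp hlt.not_ge)]
    norm_num

theorem fourier_pi_div_two (j : ℤ) :
    fourier (2 * j + 1) ((π / 2 : ℝ) : AddCircle (2 * π)) = Complex.I * (-1) ^ j := by
  have hphase : ((2 * j + 1 : ℤ) : ℂ) * (π / 2 : ℝ) * Complex.I =
      π / 2 * Complex.I + j * (π * Complex.I) := by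
    push_cast
    ring
  rw [fourier_two_pi_coe, hphase, Complex.exp_add, Complex.exp_int_mul, Complex.exp_pi_mul_I,
    Complex.exp_pi_div_two_mul_I]

theorem fourierCoeff_phaseSign_one_zero (j : ℤ) :
    fourierCoeff (phaseSign (T := 2 * π) 1 0) (2 * j + 1) = 2 * (-1) ^ j / (π * (2 * j + 1)) := by
  have hodd : 2 * j + 1 ≠ 0 := by omega
  have hone : fourierCoeff (fun _ : AddCircle (2 * π) => (1 : ℂ)) (2 * j + 1) = 0 := by
    have hfourier_zero : ⇑(fourier (T := 2 * π) 0) = fun _ => 1 := funext fun _ => fourier_zero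
    rw [← hfourier_zero, fourierCoeff_fourier, Pi.single_eq_of_ne hodd]
  rw [fourierCoeff_congr_ae phaseSign_one_zero_ae_eq,
    fourierCoeff_sub (integrable_boxKernel _) (integrable_const _), hone, sub_zero,
    fourierCoeff_boxKernel (by norm_num) (by norm_num) hodd]
  have hangle : (π : ℂ) * (1 / 2 : ℝ) * (2 * j + 1 : ℤ) = π / 2 + j * π := by
    push_cast
    ring
  have hsin : Complex.sin (π / 2 + j * π) = (-1) ^ j := by
    have hreal := Real.sin_add_int_mul_pi (π / 2) j
    rw [Real.sin_pi_div_two, mul_one] at hreal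
    simpa using congrArg Complex.ofReal hreal
  rw [hangle, hsin,
    show (π : ℂ) / 2 + j * π = π * (2 * j + 1) / 2 by ring, div_div_eq_mul_div, mul_comm]

theorem fourierCoeff_phaseSign (hn : n ≠ 0) (j : ℤ) :
    fourierCoeff (phaseSign (T := 2 * π) n m) ((2 * j + 1) * n) =
      2 * (-1) ^ j / (π * (2 * j + 1)) * (-Complex.I * (-1) ^ j) ^ m := by
  rw [funext (phaseSign_eq_phaseSign_one_nsmul n m),
    fourierCoeff_comp_nsmul hn (measurable_phaseSign 1 m)]
  induction m with
  | zero => rw [pow_zero, mul_one, fourierCoeff_phaseSign_one_zero]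
  | succ m ih =>
    have hI : fourier ((1 : ℕ) : ℤ) ((π / 2 : ℝ) : AddCircle (2 * π)) =
        ((1 : ℤˣ) : ℤ) * Complex.I := by
      simpa using fourier_pi_div_two 0
    have hshift := fourierCoeff_comp_add_right (phaseSign (T := 2 * π) 1 m) (π / 2 : ℝ) (2 * j + 1)
    simp only [phaseSign_add_of_fourier_eq_I m hI] at hshift
    rw [fourierCoeff.const_mul, ih, fourier_pi_div_two] at hshift
    push_cast at hshift
    rw [smul_eq_mul] at hshift
    linear_combination -hshift

theorem fourierCoeff_phaseSign_neg (hn : n ≠ 0) (j : ℤ) :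
    fourierCoeff (phaseSign (T := 2 * π) n m) (-((2 * j + 1) * n)) =
      2 * (-1) ^ j / (π * (2 * j + 1)) * (Complex.I * (-1) ^ j) ^ m := by
  have hneg : (-1 : ℂ) ^ (-j - 1) = -(-1) ^ j := by
    rw [zpow_sub_one₀ (by norm_num), zpow_neg, ← inv_zpow, inv_neg_one, mul_neg_one]
  rw [show -((2 * j + 1) * n) = (2 * (-j - 1) + 1) * n by ring, fourierCoeff_phaseSign m hn, hneg,
    ← neg_div_neg_eq, neg_mul_neg]
  push_cast
  ring_nf

end PhaseWave

section Poisson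

variable {T : ℝ} {r : ℝ}

theorem norm_ofReal_mul_fourier_lt_one (hr : 0 ≤ r) (hr1 : r < 1) (l : ℤ) (x : AddCircle T) :
    ‖(r : ℂ) * fourier l x‖ < 1 := by
  rwa [norm_mul, norm_fourier_apply, mul_one, Complex.norm_of_nonneg hr]

theorem poissonKernel_zero_fourier_one (hr : 0 ≤ r) (hr1 : r < 1) (x : AddCircle T) :
    (poissonKernel 0 r (fourier 1 x) : ℂ) = (1 - r * fourier 1 x)⁻¹ +
      r * fourier (-1) x * (1 - r * fourier (-1) x)⁻¹ := by
  have hnum : ‖fourier 1 x‖ ^ 2 - ‖(r : ℂ)‖ ^ 2 = 1 - r ^ 2 := by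
    rw [norm_fourier_apply, Complex.norm_real, Real.norm_eq_abs, sq_abs, one_pow]
  have hden : ((‖fourier 1 x - r‖ ^ 2 : ℝ) : ℂ) = (fourier 1 x - r) * (fourier (-1) x - r) := by
    rw [Complex.ofReal_pow, ← Complex.mul_conj', map_sub, Complex.conj_ofReal, fourier_neg]
  have hinv : fourier 1 x * fourier (-1) x = 1 := by
    rw [← fourier_add, add_neg_cancel, fourier_zero]
  have ne_of_lt {w : ℂ} (hw : ‖w‖ < 1) : 1 - w ≠ 0 := fun h => by
    rw [← sub_eq_zero.mp h, norm_one] at hw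
    exact lt_irrefl _ hw
  have hpos : 1 - (r : ℂ) * fourier 1 x ≠ 0 := ne_of_lt (norm_ofReal_mul_fourier_lt_one hr hr1 1 x)
  have hneg : 1 - (r : ℂ) * fourier (-1) x ≠ 0 :=
    ne_of_lt (norm_ofReal_mul_fourier_lt_one hr hr1 (-1) x)
  have hden_eq : (fourier 1 x - r) * (fourier (-1) x - r) =
      (1 - r * fourier 1 x) * (1 - r * fourier (-1) x) := by
    linear_combination (1 - (r : ℂ) ^ 2) * hinv
  rw [poissonKernel, sub_zero, sub_zero, hnum, Complex.ofReal_div, hden, hden_eq]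
  field_simp
  push_cast
  linear_combination (r : ℂ) ^ 2 * hinv

theorem fourier_natCast_mul (l : ℤ) (k : ℕ) (x : AddCircle T) :
    fourier (k * l) x = fourier l x ^ k := by
  rw [fourier_apply, mul_zsmul, natCast_zsmul, toCircle_nsmul, Circle.coe_pow, fourier_apply]

theorem hasSum_fourier_poissonKernel (hr : 0 ≤ r) (hr1 : r < 1) (x : AddCircle T) :
    HasSum (fun l : ℤ => (r : ℂ) ^ l.natAbs * fourier l x)
      (poissonKernel 0 r (fourier 1 x) : ℂ) := by
  have hpow (l : ℤ) (k : ℕ) : (r * fourier l x) ^ k = r ^ k * fourier (k * l) x := by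
    rw [mul_pow, fourier_natCast_mul]
  rw [poissonKernel_zero_fourier_one hr hr1]
  refine .of_nat_of_neg_add_one ?_ ?_
  · simpa only [hpow, mul_one, Int.natAbs_natCast] using
      hasSum_geometric_of_norm_lt_one (norm_ofReal_mul_fourier_lt_one hr hr1 1 x)
  · refine ((hasSum_geometric_of_norm_lt_one
      (norm_ofReal_mul_fourier_lt_one hr hr1 (-1) x)).mul_left
      (r * fourier (-1) x)).congr_fun fun k => ?_
    rw [← pow_succ', hpow, show (-(k + 1) : ℤ).natAbs = k + 1 by omega, mul_neg_one, Nat.cast_succ]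

theorem summable_pow_natAbs (hr : 0 ≤ r) (hr1 : r < 1) : Summable fun l : ℤ => r ^ l.natAbs := by
  have hgeom := summable_geometric_of_lt_one hr hr1
  exact .of_nat_of_neg (by simpa using hgeom) (by simpa using hgeom)

theorem poissonKernel_zero_nonneg {w z : ℂ} (h : ‖w‖ ≤ ‖z‖) : 0 ≤ poissonKernel 0 w z := by
  rw [poissonKernel, sub_zero, sub_zero]
  have := pow_le_pow_left₀ (norm_nonneg w) h 2
  exact div_nonneg (sub_nonneg.mpr this) (sq_nonneg _)

end Poisson

section NagyKernel

variable {T : ℝ} (n m : ℕ)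

/-- The product of the Poisson kernel of radius `r` and a cosine wave of frequency `n`, which
therefore changes sign exactly with the wave. It is normalized so that its Fourier coefficients of
order at least `n` are those of the Poisson kernel, up to the phase `(-i sign l)^m`. -/
noncomputable def nagyKernel (r : ℝ) (x : AddCircle T) : ℝ :=
  2 * r ^ n / (1 + (-1) ^ m * r ^ (2 * n)) * poissonKernel 0 r (fourier 1 x) * phaseCos n m x

/-- The `l`-th Fourier coefficient of `nagyKernel n m r`. -/
noncomputable def nagyCoeff (r : ℝ) (l : ℤ) : ℂ :=
  (r : ℂ) ^ n / (1 + (-1) ^ m * r ^ (2 * n)) *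
    ((-Complex.I) ^ m * r ^ (l - n).natAbs + Complex.I ^ m * r ^ (l + n).natAbs)

theorem two_mul_phaseCos (x : AddCircle T) :
    (2 * phaseCos n m x : ℂ) = (-Complex.I) ^ m * fourier n x + Complex.I ^ m * fourier (-n) x := by
  rw [phaseCos, Complex.re_eq_add_conj]
  simp only [map_mul, map_pow, map_neg, Complex.conj_I, neg_neg, fourier_neg]
  ring

theorem one_add_neg_one_pow_mul_pos {q : ℝ} (hq : 0 ≤ q) (hq1 : q < 1) : 0 < 1 + (-1) ^ m * q := by
  rcases neg_one_pow_eq_or ℝ m with h | h <;> rw [h] <;> linarith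

variable {n} {r : ℝ}

theorem nagyCoeff_of_le_abs (hn : n ≠ 0) (hr : 0 ≤ r) (hr1 : r < 1) {l : ℤ} (hl : (n : ℤ) ≤ |l|) :
    nagyCoeff n m r l = (-Complex.I * l.sign) ^ m * r ^ l.natAbs := by
  have hden : (1 + (-1) ^ m * r ^ (2 * n) : ℂ) ≠ 0 := mod_cast
    (one_add_neg_one_pow_mul_pos m (pow_nonneg hr _) (pow_lt_one₀ hr hr1 (by omega))).ne'
  have hI : Complex.I ^ m = (-1) ^ m * (-Complex.I) ^ m := by rw [← mul_pow, neg_one_mul, neg_neg]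
  have hsq : ((-1 : ℂ) ^ m) ^ 2 = 1 := by rw [pow_right_comm, neg_one_sq, one_pow]
  rw [nagyCoeff, hI, div_mul_eq_mul_div, div_eq_iff hden]
  rcases le_abs.mp hl with hpos | hneg
  · obtain ⟨k, rfl⟩ := Int.le.dest hpos
    rw [Int.sign_eq_one_of_pos (by omega), show (n + k - n : ℤ).natAbs = k by omega,
      show (n + k + n : ℤ).natAbs = k + 2 * n by omega, show (n + k : ℤ).natAbs = k + n by omega]
    push_cast
    ring
  · obtain ⟨k, hk⟩ := Int.le.dest hneg
    obtain rfl : l = -(n + k) := by omega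
    rw [Int.sign_eq_neg_one_of_neg (by omega), show (-(n + k) - n : ℤ).natAbs = k + 2 * n by omega,
      show (-(n + k) + n : ℤ).natAbs = k by omega, show (-(n + k) : ℤ).natAbs = k + n by omega,
      Int.cast_neg, Int.cast_one, mul_comm, mul_pow (-Complex.I)]
    linear_combination -(-Complex.I) ^ m * r ^ (3 * n + k) * hsq

theorem summable_norm_nagyCoeff (hr : 0 ≤ r) (hr1 : r < 1) :
    Summable fun l => ‖nagyCoeff n m r l‖ := by
  have hpow : Summable fun l : ℤ => ‖(r : ℂ) ^ l.natAbs‖ := by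
    simpa [abs_of_nonneg hr] using summable_pow_natAbs hr hr1
  have hshift (a : ℤ) (c : ℂ) : Summable fun l : ℤ => ‖c * (r : ℂ) ^ (l + a).natAbs‖ := by
    simpa only [norm_mul, Function.comp_def, Equiv.coe_addRight] using
      (hpow.comp_injective (Equiv.addRight a).injective).mul_left ‖c‖
  simp only [nagyCoeff, norm_mul]
  exact (Summable.of_nonneg_of_le (fun _ => norm_nonneg _) (fun _ => norm_add_le _ _)
    ((hshift (-n) _).add (hshift n _))).mul_left _

theorem hasSum_fourier_nagyKernel (hr : 0 ≤ r) (hr1 : r < 1) (x : AddCircle T) :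
    HasSum (fun l => nagyCoeff n m r l * fourier l x) (nagyKernel n m r x : ℂ) := by
  have hshift (a : ℤ) : HasSum (fun l : ℤ => (r : ℂ) ^ (l + a).natAbs * fourier l x)
      (fourier (-a) x * (poissonKernel 0 r (fourier 1 x) : ℂ)) := by
    refine ((Equiv.addRight a).hasSum_iff.mpr
      (hasSum_fourier_poissonKernel hr hr1 x)).mul_left (fourier (-a) x) |>.congr_fun fun l => ?_
    have : fourier l x = fourier (-a) x * fourier (l + a) x := by
      rw [← fourier_add, neg_add_cancel_comm_assoc]
    simp only [Function.comp_apply, Equiv.coe_addRight, this]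
    ring
  have hwaves := (((hshift (-n)).mul_left ((-Complex.I) ^ m)).add
    ((hshift n).mul_left (Complex.I ^ m))).mul_left ((r : ℂ) ^ n / (1 + (-1) ^ m * r ^ (2 * n)))
  have hvalue : (nagyKernel n m r x : ℂ) = r ^ n / (1 + (-1) ^ m * r ^ (2 * n)) *
      ((2 * phaseCos n m x : ℂ) * poissonKernel 0 r (fourier 1 x)) := by
    unfold nagyKernel
    push_cast
    ring
  rw [hvalue, two_mul_phaseCos, add_mul, mul_assoc, mul_assoc]
  rw [neg_neg] at hwaves
  refine hwaves.congr_fun fun l => ?_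
  unfold nagyCoeff
  rw [sub_eq_add_neg]
  ring

theorem abs_nagyKernel (hn : n ≠ 0) (hr : 0 ≤ r) (hr1 : r < 1) (x : AddCircle T) :
    |nagyKernel n m r x| = 2 * r ^ n / (1 + (-1) ^ m * r ^ (2 * n)) *
      poissonKernel 0 r (fourier 1 x) * |phaseCos n m x| := by
  have hden := one_add_neg_one_pow_mul_pos m (pow_nonneg hr (2 * n)) (pow_lt_one₀ hr hr1 (by omega))
  have hpoisson : 0 ≤ poissonKernel 0 r (fourier 1 x) := by
    refine poissonKernel_zero_nonneg ?_
    rw [norm_fourier_apply, Complex.norm_of_nonneg hr]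
    exact hr1.le
  rw [nagyKernel, abs_mul, abs_of_nonneg (by positivity)]

theorem nagyKernel_mul_phaseSign (hn : n ≠ 0) (hr : 0 ≤ r) (hr1 : r < 1) (x : AddCircle T) :
    nagyKernel n m r x * phaseSign n m x = ((|nagyKernel n m r x| : ℝ) : ℂ) := by
  rw [abs_nagyKernel m hn hr hr1, nagyKernel, Complex.ofReal_mul, mul_assoc,
    phaseCos_mul_phaseSign, ← Complex.ofReal_mul]

theorem nagyCoeff_mul_fourierCoeff_phaseSign_add_neg (hn : n ≠ 0) (hr : 0 ≤ r) (hr1 : r < 1)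
    (j : ℕ) :
    nagyCoeff n m r ((2 * j + 1) * n) *
        fourierCoeff (phaseSign (T := 2 * π) n m) (-((2 * j + 1) * n)) +
      nagyCoeff n m r (-((2 * j + 1) * n)) *
        fourierCoeff (phaseSign (T := 2 * π) n m) ((2 * j + 1) * n) =
      4 / (π * (2 * j + 1)) * ((-1) ^ j) ^ (m + 1) * r ^ ((2 * j + 1) * n) := by
  have hl : (0 : ℤ) < (2 * j + 1) * n := by positivity
  have hl_abs : (n : ℤ) ≤ |((2 * j + 1) * n : ℤ)| := by
    rw [abs_of_pos hl]
    exact le_mul_of_one_le_left (by positivity) (by omega)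
  have hphase : (-Complex.I) ^ m * (Complex.I * (-1) ^ j) ^ m = ((-1) ^ j) ^ m := by
    rw [← mul_pow, ← mul_assoc, neg_mul, Complex.I_mul_I, neg_neg, one_mul]
  have hphase_neg : Complex.I ^ m * (-Complex.I * (-1) ^ j) ^ m = ((-1) ^ j) ^ m := by
    rw [← mul_pow, ← mul_assoc, mul_neg, Complex.I_mul_I, neg_neg, one_mul]
  rw [nagyCoeff_of_le_abs m hn hr hr1 hl_abs, nagyCoeff_of_le_abs m hn hr hr1 (by rwa [abs_neg]),
    fourierCoeff_phaseSign m hn, fourierCoeff_phaseSign_neg m hn, Int.sign_neg,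
    Int.sign_eq_one_of_pos hl, Int.natAbs_neg, Int.natAbs_mul]
  push_cast
  rw [zpow_natCast, mul_one, mul_neg_one, neg_neg, Int.natAbs_natCast,
    show (2 * j + 1 : ℤ).natAbs = 2 * j + 1 by omega, pow_succ _ m]
  linear_combination (2 * (-1) ^ j / (π * (2 * j + 1)) * r ^ ((2 * j + 1) * n) : ℂ) *
    (hphase + hphase_neg)

theorem hasSum_integral_abs_nagyKernel (hn : n ≠ 0) (hr : 0 ≤ r) (hr1 : r < 1) :
    HasSum (fun j : ℕ => 4 / (π * (2 * j + 1)) * ((-1) ^ j) ^ (m + 1) * r ^ ((2 * j + 1) * n))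
      (∫ x : AddCircle (2 * π), |nagyKernel n m r x| ∂haarAddCircle) := by
  have hint : ∫ x : AddCircle (2 * π), (nagyKernel n m r x : ℂ) * phaseSign n m x ∂haarAddCircle =
      (∫ x : AddCircle (2 * π), |nagyKernel n m r x| ∂haarAddCircle : ℝ) := by
    simp only [nagyKernel_mul_phaseSign m hn hr hr1, integral_complex_ofReal]
  have hsum := hasSum_integral_mul_of_hasSum_fourier (summable_norm_nagyCoeff (n := n) m hr hr1)
    (hasSum_fourier_nagyKernel m hr hr1) (integrable_phaseSign (T := 2 * π) n m)
  have hodd_injective : Function.Injective fun j : ℤ => (2 * j + 1) * (n : ℤ) := fun i j hij => by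
    have := mul_right_cancel₀ (mod_cast hn) hij
    omega
  rw [hint, ← hodd_injective.hasSum_iff fun l hl => by
    rw [fourierCoeff_phaseSign_eq_zero m hn fun j hj => hl ⟨-j - 1, by linear_combination -hj⟩,
      mul_zero]] at hsum
  refine Complex.hasSum_ofReal.mp (hsum.nat_add_neg_add_one.congr_fun fun j => ?_)
  simp only [Function.comp_apply]
  rw [show (2 * -(j + 1) + 1 : ℤ) * n = -((2 * j + 1) * n) by ring, neg_neg,
    nagyCoeff_mul_fourierCoeff_phaseSign_add_neg m hn hr hr1]
  push_cast
  rfl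

end NagyKernel

section FavardConstant

theorem integrable_and_hasSum_integral_of_hasSum {α ι E : Type*} [MeasurableSpace α]
    [NormedAddCommGroup E] [NormedSpace ℝ E] [Countable ι] {μ : Measure α} {F : ι → α → E}
    {f : α → E} (hF : ∀ i, Integrable (F i) μ) (hF_sum : Summable fun i => ∫ a, ‖F i a‖ ∂μ)
    (hf : ∀ᵐ a ∂μ, HasSum (F · a) (f a)) :
    Integrable f μ ∧ HasSum (fun i => ∫ a, F i a ∂μ) (∫ a, f a ∂μ) := by
  have hmeas : AEStronglyMeasurable f μ := by
    refine aestronglyMeasurable_of_tendsto_ae atTop (fun S : Finset ι => ?_) hf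
    exact Finset.aestronglyMeasurable_fun_sum S fun i _ => (hF i).aestronglyMeasurable
  have henorm (i : ι) : ∫⁻ a, ‖F i a‖ₑ ∂μ = ENNReal.ofReal (∫ a, ‖F i a‖ ∂μ) := by
    rw [ofReal_integral_norm_eq_lintegral_enorm (hF i)]
  refine ⟨⟨hmeas, ?_⟩, ?_⟩
  · calc ∫⁻ a, ‖f a‖ₑ ∂μ ≤ ∫⁻ a, ∑' i, ‖F i a‖ₑ ∂μ :=
          lintegral_mono_ae (hf.mono fun a ha => ha.tsum_eq ▸ enorm_tsum_le_tsum_enorm)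
      _ = ∑' i, ENNReal.ofReal (∫ a, ‖F i a‖ ∂μ) := by
          rw [lintegral_tsum fun i => (hF i).aestronglyMeasurable.enorm]
          simp only [henorm]
      _ < ⊤ := hF_sum.tsum_ofReal_lt_top
  · rw [integral_congr_ae (hf.mono fun a ha => ha.tsum_eq.symm)]
    exact hasSum_integral_of_summable_integral_norm hF hF_sum

theorem integral_pow_div_factorial_mul_exp (M : ℕ) {a : ℝ} (ha : 0 < a) :
    ∫ t in Set.Ioi (0 : ℝ), t ^ M / M.factorial * Real.exp (-(a * t)) = 1 / a ^ (M + 1) := by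
  have hgamma := Real.integral_rpow_mul_exp_neg_mul_Ioi (a := (M : ℝ) + 1) (by positivity) ha
  rw [Real.Gamma_nat_eq_factorial, ← Nat.cast_succ, Real.rpow_natCast] at hgamma
  simp only [Nat.cast_succ, add_sub_cancel_right, Real.rpow_natCast] at hgamma
  simp only [div_mul_eq_mul_div, integral_div, hgamma]
  rw [mul_div_cancel_right₀ _ (by positivity), one_div_pow]

theorem integrableOn_pow_div_factorial_mul_exp (M : ℕ) {a : ℝ} (ha : 0 < a) :
    IntegrableOn (fun t : ℝ => t ^ M / M.factorial * Real.exp (-(a * t))) (Set.Ioi 0) := by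
  refine .of_integral_ne_zero ?_
  rw [integral_pow_div_factorial_mul_exp M ha]
  positivity

theorem integrableOn_and_hasSum_laplace {ι : Type*} [Countable ι] (M : ℕ) {a b : ι → ℝ} {f : ℝ → ℝ}
    (hb : ∀ i, 0 < b i) (ha : Summable fun i => ‖a i / b i ^ (M + 1)‖)
    (hf : ∀ t, 0 < t → HasSum (fun i => a i * Real.exp (-(b i * t))) (f t)) :
    IntegrableOn (fun t => t ^ M / M.factorial * f t) (Set.Ioi 0) ∧
      HasSum (fun i => a i / b i ^ (M + 1))
        (∫ t in Set.Ioi 0, t ^ M / M.factorial * f t) := by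
  have hterm (c : ℝ) (i : ι) : ∫ t in Set.Ioi (0 : ℝ), c *
      (t ^ M / M.factorial * Real.exp (-(b i * t))) = c / b i ^ (M + 1) := by
    rw [integral_const_mul, integral_pow_div_factorial_mul_exp M (hb i), mul_one_div]
  have hnorm (i : ι) : ∫ t in Set.Ioi (0 : ℝ), ‖a i *
      (t ^ M / M.factorial * Real.exp (-(b i * t)))‖ = ‖a i / b i ^ (M + 1)‖ := by
    rw [norm_div, Real.norm_of_nonneg (pow_nonneg (hb i).le _), ← hterm]
    refine setIntegral_congr_fun measurableSet_Ioi fun t (ht : 0 < t) => ?_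
    have hweight : 0 ≤ t ^ M / M.factorial * Real.exp (-(b i * t)) := by positivity
    simp only [norm_mul (a i), Real.norm_of_nonneg hweight]
  have hseries := integrable_and_hasSum_integral_of_hasSum
    (fun i => (integrableOn_pow_div_factorial_mul_exp M (hb i)).const_mul (a i))
    (by simpa only [hnorm] using ha)
    (ae_restrict_of_forall_mem measurableSet_Ioi fun t ht =>
      ((hf t ht).mul_left (t ^ M / M.factorial)).congr_fun fun i => mul_left_comm ..)
  simp only [hterm] at hseries
  exact hseries

theorem tsum_eq_tsum_even_add_odd {f : ℕ → ℝ} (hf : Summable f) :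
    ∑' j, f j = ∑' k, (f (2 * k) + f (2 * k + 1)) := by
  have heven : Summable fun k => f (2 * k) :=
    hf.comp_injective (mul_right_injective₀ two_ne_zero)
  have hodd : Summable fun k => f (2 * k + 1) :=
    hf.comp_injective fun i j hij => by simpa using hij
  rw [← tsum_even_add_odd heven hodd, heven.tsum_add hodd]

theorem summable_odd_pow (m : ℕ) :
    Summable fun j : ℕ => 1 / (2 * (j : ℝ) + 1) ^ (m + 2) := by
  have hinj : Function.Injective fun j : ℕ => 2 * j + 1 := fun i j hij => by
    simpa using hij
  simpa [Function.comp_def] using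
    ((Real.summable_one_div_nat_pow (p := m + 2)).mpr (by omega)).comp_injective hinj

theorem summable_favard (M : ℕ) :
    Summable fun j : ℕ => ((-1 : ℝ) ^ j) ^ (M + 2) / (2 * j + 1) ^ (M + 2) := by
  refine .of_norm ((summable_odd_pow M).congr fun j => ?_)
  rw [norm_div, norm_pow, norm_pow, norm_neg, norm_one, one_pow, one_pow,
    Real.norm_of_nonneg (by positivity)]

theorem hasSum_favardK (M : ℕ) :
    HasSum (fun j : ℕ => 4 / π * (((-1) ^ j) ^ (M + 2) / (2 * j + 1) ^ (M + 2)))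
      (favardK (M + 1)) := by
  have htsum := tsum_eq_tsum_even_add_odd (summable_favard M)
  have hpair (k : ℕ) : ((-1 : ℝ) ^ (2 * k)) ^ (M + 2) / (2 * (2 * k : ℕ) + 1) ^ (M + 2) +
      ((-1) ^ (2 * k + 1)) ^ (M + 2) / (2 * (2 * k + 1 : ℕ) + 1) ^ (M + 2) =
      1 / (4 * (k : ℝ) + 1) ^ (M + 2) + (-1) ^ (M + 2) / (4 * (k : ℝ) + 3) ^ (M + 2) := by
    rw [pow_succ (-1 : ℝ) (2 * k), (even_two_mul k).neg_one_pow, one_pow, one_mul]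
    push_cast
    ring_nf
  simp only [hpair] at htsum
  rw [favardK, ← htsum]
  exact (summable_favard M).hasSum.mul_left _

end FavardConstant

section FavardKernel

variable {T : ℝ} (n M : ℕ)

/-- The integrand of `favardKernel`: the `nagyKernel` of radius `e^{-t}`, weighted by the density
`t^M / M!` whose Laplace transform is `a ↦ a^{-(M+1)}`. -/
noncomputable def favardDensity (t : ℝ) (x : AddCircle T) : ℝ :=
  t ^ M / M.factorial * nagyKernel n (M + 1) (Real.exp (-t)) x

/-- The extremal kernel of Favard's theorem: up to a trigonometric polynomial of degree less than
`n` it is the periodic Bernoulli kernel `∑_{l ≠ 0} (il)^{-(M+1)} e^{ilθ}`, and its sign is that of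
`cos (nθ - (M+1)π/2)`. -/
noncomputable def favardKernel (x : AddCircle T) : ℝ := ∫ t in Set.Ioi 0, favardDensity n M t x

theorem measurable_favardDensity :
    Measurable fun p : ℝ × AddCircle T => favardDensity n M p.1 p.2 := by
  unfold favardDensity nagyKernel poissonKernel phaseCos
  fun_prop

variable {n}

theorem exp_neg_lt_one {t : ℝ} (ht : 0 < t) : Real.exp (-t) < 1 :=
  Real.exp_lt_one_iff.mpr (neg_neg_iff_pos.mpr ht)

theorem favardDensity_mul_phaseSign (hn : n ≠ 0) {t : ℝ} (ht : 0 < t) (x : AddCircle T) :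
    favardDensity n M t x * phaseSign n (M + 1) x = ((|favardDensity n M t x| : ℝ) : ℂ) := by
  rw [favardDensity, abs_mul, abs_of_nonneg (by positivity), Complex.ofReal_mul, mul_assoc,
    nagyKernel_mul_phaseSign (M + 1) hn (Real.exp_pos _).le (exp_neg_lt_one ht),
    Complex.ofReal_mul]

theorem hasSum_integral_abs_nagyKernel_exp_neg (m : ℕ) (hn : n ≠ 0) {t : ℝ} (ht : 0 < t) :
    HasSum (fun j : ℕ => 4 / (π * (2 * j + 1)) * ((-1) ^ j) ^ (m + 1) *
        Real.exp (-((2 * j + 1) * n * t)))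
      (∫ x : AddCircle (2 * π), |nagyKernel n m (Real.exp (-t)) x| ∂haarAddCircle) := by
  refine (hasSum_integral_abs_nagyKernel m hn (Real.exp_pos _).le (exp_neg_lt_one ht)).congr_fun
    fun j => ?_
  rw [← Real.exp_nat_mul]
  push_cast
  ring_nf

theorem integrableOn_and_integral_integral_abs_favardDensity (hn : n ≠ 0) :
    IntegrableOn (fun t => ∫ x : AddCircle (2 * π), |favardDensity n M t x| ∂haarAddCircle)
      (Set.Ioi 0) ∧
    ∫ t in Set.Ioi (0 : ℝ), ∫ x : AddCircle (2 * π), |favardDensity n M t x| ∂haarAddCircle =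
      favardK (M + 1) / n ^ (M + 1) := by
  have hterm (j : ℕ) : 4 / (π * (2 * j + 1)) * ((-1) ^ j) ^ (M + 2) / ((2 * j + 1) * n) ^ (M + 1) =
      4 / π * (((-1) ^ j) ^ (M + 2) / (2 * j + 1) ^ (M + 2)) / n ^ (M + 1) := by
    rw [mul_pow, pow_succ (2 * j + 1 : ℝ) (M + 1)]
    field_simp
  have hsum := (hasSum_favardK M).div_const ((n : ℝ) ^ (M + 1))
  simp only [← hterm] at hsum
  obtain ⟨hint, hvalue⟩ := integrableOn_and_hasSum_laplace M (fun j => by positivity)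
    hsum.summable.norm fun t ht => hasSum_integral_abs_nagyKernel_exp_neg (M + 1) hn ht
  have hdensity : Set.EqOn
      (fun t => ∫ x : AddCircle (2 * π), |favardDensity n M t x| ∂haarAddCircle)
      (fun t => t ^ M / M.factorial *
        ∫ x : AddCircle (2 * π), |nagyKernel n (M + 1) (Real.exp (-t)) x| ∂haarAddCircle)
      (Set.Ioi 0) := fun t (ht : 0 < t) => by
    have hweight : 0 ≤ t ^ M / M.factorial := by positivity
    simp only [favardDensity, abs_mul, abs_of_nonneg hweight, integral_const_mul]
  exact ⟨hint.congr_fun hdensity.symm measurableSet_Ioi,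
    (setIntegral_congr_fun measurableSet_Ioi hdensity).trans (hvalue.unique hsum)⟩

theorem integrable_favardDensity (hn : n ≠ 0) :
    Integrable (fun p : ℝ × AddCircle (2 * π) => (favardDensity n M p.1 p.2 : ℂ))
      ((volume.restrict (Set.Ioi 0)).prod haarAddCircle) := by
  refine (integrable_prod_iff
    (measurable_favardDensity n M).complex_ofReal.aestronglyMeasurable).mpr ⟨?_, ?_⟩
  · refine ae_restrict_of_forall_mem measurableSet_Ioi fun t (ht : 0 < t) => ?_
    simp only [favardDensity, Complex.ofReal_mul]
    have hr := (Real.exp_pos (-t)).le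
    have hr1 := exp_neg_lt_one ht
    exact (integrable_of_hasSum_fourier (summable_norm_nagyCoeff (M + 1) hr hr1)
      (hasSum_fourier_nagyKernel (M + 1) hr hr1)).const_mul _
  · simp only [Complex.norm_real, Real.norm_eq_abs]
    exact (integrableOn_and_integral_integral_abs_favardDensity M hn).1

theorem ofReal_favardKernel (x : AddCircle T) :
    (favardKernel n M x : ℂ) = ∫ t in Set.Ioi 0, (favardDensity n M t x : ℂ) :=
  integral_complex_ofReal.symm

theorem integrable_favardKernel (hn : n ≠ 0) :
    Integrable (fun x : AddCircle (2 * π) => (favardKernel n M x : ℂ)) haarAddCircle := by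
  simp only [ofReal_favardKernel]
  exact (integrable_favardDensity M hn).integral_prod_right

theorem integral_favardKernel_mul (hn : n ≠ 0) {u : AddCircle (2 * π) → ℂ} (hu : Measurable u)
    (hu_le : ∀ x, ‖u x‖ ≤ 1) :
    ∫ x, favardKernel n M x * u x ∂haarAddCircle =
      ∫ t in Set.Ioi 0, ∫ x, favardDensity n M t x * u x ∂haarAddCircle := by
  simp only [ofReal_favardKernel, ← integral_mul_const]
  refine (integral_integral_swap ?_).symm
  exact (integrable_favardDensity M hn).mul_bdd
    (hu.comp measurable_snd).aestronglyMeasurable (.of_forall fun p => hu_le p.2)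

theorem integral_favardKernel_mul_phaseSign (hn : n ≠ 0) :
    ∫ x : AddCircle (2 * π), favardKernel n M x * phaseSign n (M + 1) x ∂haarAddCircle =
      (favardK (M + 1) / n ^ (M + 1) : ℝ) := by
  rw [integral_favardKernel_mul M hn (measurable_phaseSign n _) (norm_phaseSign_le_one n _),
    ← (integrableOn_and_integral_integral_abs_favardDensity M hn).2, ← integral_complex_ofReal]
  refine setIntegral_congr_fun measurableSet_Ioi fun t ht => ?_
  simp only [favardDensity_mul_phaseSign M hn ht, integral_complex_ofReal]

theorem integral_norm_favardKernel_le (hn : n ≠ 0) :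
    ∫ x : AddCircle (2 * π), ‖(favardKernel n M x : ℂ)‖ ∂haarAddCircle ≤
      favardK (M + 1) / n ^ (M + 1) := by
  have hdensity : Integrable (fun p : ℝ × AddCircle (2 * π) => |favardDensity n M p.1 p.2|)
      ((volume.restrict (Set.Ioi 0)).prod haarAddCircle) := by
    simpa using (integrable_favardDensity M hn).norm
  simp only [Complex.norm_real, Real.norm_eq_abs]
  calc ∫ x : AddCircle (2 * π), |favardKernel n M x| ∂haarAddCircle
      ≤ ∫ x : AddCircle (2 * π), (∫ t in Set.Ioi 0, |favardDensity n M t x|) ∂haarAddCircle :=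
        integral_mono_of_nonneg (.of_forall fun _ => abs_nonneg _) hdensity.integral_prod_right
          (.of_forall fun _ => abs_integral_le_integral_abs)
    _ = ∫ t in Set.Ioi 0, ∫ x : AddCircle (2 * π), |favardDensity n M t x| ∂haarAddCircle :=
        (integral_integral_swap hdensity).symm
    _ = favardK (M + 1) / n ^ (M + 1) :=
        (integrableOn_and_integral_integral_abs_favardDensity M hn).2

theorem fourierCoeff_favardDensity (hn : n ≠ 0) {t : ℝ} (ht : 0 < t) {l : ℤ}
    (hl : (n : ℤ) ≤ |l|) :
    fourierCoeff (fun x : AddCircle (2 * π) => (favardDensity n M t x : ℂ)) l =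
      (-Complex.I * l.sign) ^ (M + 1) *
        (t ^ M / M.factorial * Real.exp (-(l.natAbs * t)) : ℝ) := by
  have hr := (Real.exp_pos (-t)).le
  have hr1 := exp_neg_lt_one ht
  simp only [favardDensity, Complex.ofReal_mul]
  rw [fourierCoeff.const_mul, fourierCoeff_eq_of_hasSum_fourier
      (summable_norm_nagyCoeff (M + 1) hr hr1) (hasSum_fourier_nagyKernel (M + 1) hr hr1),
    nagyCoeff_of_le_abs (M + 1) hn hr hr1 hl, mul_left_comm, ← Complex.ofReal_pow,
    ← Real.exp_nat_mul, mul_neg]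

theorem fourierCoeff_favardKernel (hn : n ≠ 0) {l : ℤ} (hl : (n : ℤ) ≤ |l|) :
    fourierCoeff (fun x : AddCircle (2 * π) => (favardKernel n M x : ℂ)) l =
      1 / (Complex.I * l) ^ (M + 1) := by
  have hl0 : l ≠ 0 := fun hzero => hn (by simpa [hzero] using hl)
  have hsign : (-Complex.I * l.sign) * (Complex.I * l) = l.natAbs := by
    have : (l.sign * l : ℂ) = l.natAbs := by
      rw [← Int.cast_mul, Int.sign_mul_self_eq_natAbs, Int.cast_natCast]
    linear_combination this - (l.sign * l : ℂ) * Complex.I_mul_I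
  have hswap := integral_favardKernel_mul M hn (fourier (T := 2 * π) (-l)).continuous.measurable
    fun x => (norm_fourier_apply _ x).le
  have hcoeff (t : ℝ) (ht : t ∈ Set.Ioi 0) := fourierCoeff_favardDensity M hn ht hl
  simp only [fourierCoeff, smul_eq_mul, mul_comm (fourier (-l) _)] at hcoeff ⊢
  rw [hswap, setIntegral_congr_fun measurableSet_Ioi hcoeff, integral_const_mul,
    integral_complex_ofReal, integral_pow_div_factorial_mul_exp M (by positivity),
    eq_div_iff (by simp [hl0]), mul_right_comm, ← mul_pow, hsign]
  push_cast
  rw [one_div, mul_inv_cancel₀ (by simp [hl0])]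

end FavardKernel

section CentralDifference

variable {T : ℝ}

/-- The central difference `x ↦ (f (x + y) - f (x - y)) / 2` with step `y`. -/
noncomputable def centralDiff (y : AddCircle T) (f : AddCircle T → ℂ) (x : AddCircle T) : ℂ :=
  (f (x + y) - f (x - y)) / 2

theorem centralDiff_phaseSign {n : ℕ} {y : AddCircle T} {ε : ℤˣ}
    (hy : fourier n y = (ε : ℤ) * Complex.I) (m : ℕ) :
    centralDiff y (phaseSign n m) = fun x => -(ε : ℤ) * phaseSign n (m + 1) x := by
  have hy_neg : fourier n (-y) = ((-ε : ℤˣ) : ℤ) * Complex.I := by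
    rw [fourier_apply_neg, fourier_neg, hy]
    simp
  ext x
  rw [centralDiff, sub_eq_add_neg x, phaseSign_add_of_fourier_eq_I m hy,
    phaseSign_add_of_fourier_eq_I m hy_neg]
  push_cast
  ring

variable [Fact (0 < T)] (y : AddCircle T) {f : AddCircle T → ℂ}

theorem integrable_iterate_centralDiff (hf : Integrable f haarAddCircle) (k : ℕ) :
    Integrable ((centralDiff y)^[k] f) haarAddCircle := by
  induction k with
  | zero => exact hf
  | succ k ih =>
    rw [Function.iterate_succ_apply']
    exact ((ih.comp_add_right y).sub (ih.comp_sub_right y)).div_const 2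

theorem integral_norm_iterate_centralDiff_le (hf : Integrable f haarAddCircle) (k : ℕ) :
    ∫ x, ‖(centralDiff y)^[k] f x‖ ∂haarAddCircle ≤ ∫ x, ‖f x‖ ∂haarAddCircle := by
  induction k with
  | zero => exact le_rfl
  | succ k ih =>
    have hg := (integrable_iterate_centralDiff y hf k).norm
    rw [Function.iterate_succ_apply']
    set g := (centralDiff y)^[k] f
    calc ∫ x, ‖centralDiff y g x‖ ∂haarAddCircle
        ≤ ∫ x, (‖g (x + y)‖ + ‖g (x - y)‖) / 2 ∂haarAddCircle := by
          refine integral_mono_of_nonneg (.of_forall fun _ => norm_nonneg _)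
            (((hg.comp_add_right y).add (hg.comp_sub_right y)).div_const 2)
            (.of_forall fun x => ?_)
          simp only [centralDiff, norm_div, RCLike.norm_ofNat]
          gcongr
          exact norm_sub_le _ _
      _ = ∫ x, ‖g x‖ ∂haarAddCircle := by
          rw [integral_div, integral_add (hg.comp_add_right y) (hg.comp_sub_right y),
            integral_add_right_eq_self (fun x => ‖g x‖),
            integral_sub_right_eq_self (fun x => ‖g x‖), add_self_div_two]
      _ ≤ ∫ x, ‖f x‖ ∂haarAddCircle := ih

theorem fourierCoeff_centralDiff (hf : Integrable f haarAddCircle) (l : ℤ) :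
    fourierCoeff (centralDiff y f) l = (fourier l y - fourier (-l) y) / 2 * fourierCoeff f l := by
  unfold centralDiff
  simp only [div_eq_inv_mul, sub_eq_add_neg _ y]
  rw [fourierCoeff.const_mul, fourierCoeff_sub (hf.comp_add_right y) (hf.comp_add_right (-y)),
    fourierCoeff_comp_add_right, fourierCoeff_comp_add_right, fourier_apply_neg,
    smul_eq_mul, smul_eq_mul, ← sub_mul, mul_assoc]

theorem fourierCoeff_iterate_centralDiff (hf : Integrable f haarAddCircle) (k : ℕ) (l : ℤ) :
    fourierCoeff ((centralDiff y)^[k] f) l =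
      ((fourier l y - fourier (-l) y) / 2) ^ k * fourierCoeff f l := by
  induction k with
  | zero => rw [Function.iterate_zero_apply, pow_zero, one_mul]
  | succ k ih =>
    rw [Function.iterate_succ_apply', pow_succ', mul_assoc, ← ih,
      fourierCoeff_centralDiff y (integrable_iterate_centralDiff y hf k)]

theorem integral_centralDiff_mul (hf : Integrable f haarAddCircle) {u : AddCircle T → ℂ}
    (hu : Measurable u) {c : ℝ} (hu_le : ∀ x, ‖u x‖ ≤ c) :
    ∫ x, centralDiff y f x * u x ∂haarAddCircle = -∫ x, f x * centralDiff y u x ∂haarAddCircle := by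
  have hmul {g v : AddCircle T → ℂ} (hg : Integrable g haarAddCircle) (hv : Measurable v)
      (hv_le : ∀ x, ‖v x‖ ≤ c) : Integrable (fun x => g x * v x) haarAddCircle :=
    hg.mul_bdd hv.aestronglyMeasurable (.of_forall hv_le)
  have hright : ∫ x, f (x + y) * u x ∂haarAddCircle = ∫ x, f x * u (x - y) ∂haarAddCircle := by
    simpa using integral_add_right_eq_self (fun x => f x * u (x - y)) y
  have hleft : ∫ x, f (x - y) * u x ∂haarAddCircle = ∫ x, f x * u (x + y) ∂haarAddCircle := by
    simpa using integral_sub_right_eq_self (fun x => f x * u (x + y)) y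
  simp only [centralDiff, div_mul_eq_mul_div, mul_div_assoc', sub_mul, mul_sub, integral_div]
  rw [integral_sub (hmul (hf.comp_add_right y) hu hu_le) (hmul (hf.comp_sub_right y) hu hu_le),
    integral_sub (hmul hf (by fun_prop) fun _ => hu_le _) (hmul hf (by fun_prop) fun _ => hu_le _),
    hright, hleft]
  ring

variable {y}

theorem integral_iterate_centralDiff_mul_phaseSign {n : ℕ} {ε : ℤˣ}
    (hy : fourier n y = (ε : ℤ) * Complex.I) (hf : Integrable f haarAddCircle) (k m : ℕ) :
    ∫ x, (centralDiff y)^[k] f x * phaseSign n m x ∂haarAddCircle =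
      (ε : ℤ) ^ k * ∫ x, f x * phaseSign n (m + k) x ∂haarAddCircle := by
  induction k generalizing m with
  | zero => simp
  | succ k ih =>
    rw [Function.iterate_succ_apply', integral_centralDiff_mul y
      (integrable_iterate_centralDiff y hf k) (measurable_phaseSign n m)
      (norm_phaseSign_le_one n m), centralDiff_phaseSign hy]
    simp only [neg_mul, mul_neg, integral_neg, neg_neg, mul_left_comm _ ((ε : ℤ) : ℂ)]
    rw [integral_const_mul, ih, ← mul_assoc, ← pow_succ', Nat.add_right_comm, add_assoc]

end CentralDifference

section BoxKernelApproximation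

variable (n : ℕ) (h : ℝ) (M : ℕ)

/-- The error of best `L¹` approximation of `boxKernelConv h M` by trigonometric polynomials of
degree less than `n`, for the steps `h` with `cos (nπh) = 0`. Since
`sin (πhl) / (πhl) = (i sin (πhl)) / (πh · il)`, it is the central difference of step `πh` of the
extremal kernel of Favard's theorem. -/
noncomputable def boxErrorKernel (x : AddCircle (2 * π)) : ℂ :=
  (((π * h) ^ (M + 1))⁻¹ : ℝ) *
    (centralDiff (π * h : ℝ))^[M + 1] (fun x => (favardKernel n M x : ℂ)) x

variable {n} {h}

theorem integrable_boxErrorKernel (hn : n ≠ 0) :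
    Integrable (boxErrorKernel n h M) haarAddCircle :=
  (integrable_iterate_centralDiff _ (integrable_favardKernel M hn) _).const_mul _

theorem fourierCoeff_boxErrorKernel (hn : n ≠ 0) (h_pos : 0 < h) (h_lt : h < 1) {l : ℤ}
    (hl : (n : ℤ) ≤ |l|) :
    fourierCoeff (boxErrorKernel n h M) l = fourierCoeff (boxKernelConv h M) l := by
  have hl0 : l ≠ 0 := fun hzero => hn (by simpa [hzero] using hl)
  have hsin : (fourier l ((π * h : ℝ) : AddCircle (2 * π)) - fourier (-l) ((π * h : ℝ) :
      AddCircle (2 * π))) / 2 = Complex.I * Complex.sin (π * h * l) := by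
    rw [fourier_two_pi_coe, fourier_two_pi_coe, Complex.sin]
    push_cast
    ring_nf
    rw [Complex.I_sq]
    ring_nf
  unfold boxErrorKernel
  rw [fourierCoeff.const_mul, fourierCoeff_iterate_centralDiff _ (integrable_favardKernel M hn),
    hsin, fourierCoeff_favardKernel M hn hl, fourierCoeff_boxKernelConv h_pos h_lt M hl0]
  push_cast
  simp only [mul_pow, div_pow]
  field_simp

theorem integral_norm_boxErrorKernel_le (hn : n ≠ 0) (h_pos : 0 < h) :
    ∫ x, ‖boxErrorKernel n h M x‖ ∂haarAddCircle ≤ favardK (M + 1) / (π * h * n) ^ (M + 1) := by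
  have hscale : ‖((((π * h) ^ (M + 1))⁻¹ : ℝ) : ℂ)‖ = ((π * h) ^ (M + 1))⁻¹ :=
    Complex.norm_of_nonneg (by positivity)
  simp only [boxErrorKernel, norm_mul, hscale, integral_const_mul]
  rw [mul_pow (π * h), mul_comm ((π * h) ^ (M + 1)), ← div_div, div_eq_inv_mul]
  gcongr
  exact (integral_norm_iterate_centralDiff_le _ (integrable_favardKernel M hn) _).trans
    (integral_norm_favardKernel_le M hn)

theorem norm_integral_boxErrorKernel_mul_phaseSign (hn : n ≠ 0) (h_pos : 0 < h) {ε : ℤˣ}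
    (hy : fourier n ((π * h : ℝ) : AddCircle (2 * π)) = (ε : ℤ) * Complex.I) :
    ‖∫ x, boxErrorKernel n h M x * phaseSign n 0 x ∂haarAddCircle‖ =
      favardK (M + 1) / (π * h * n) ^ (M + 1) := by
  have hfavard : 0 ≤ favardK (M + 1) / n ^ (M + 1) :=
    (integral_nonneg fun _ => norm_nonneg _).trans (integral_norm_favardKernel_le M hn)
  have hscale : ‖((((π * h) ^ (M + 1))⁻¹ : ℝ) : ℂ)‖ = ((π * h) ^ (M + 1))⁻¹ :=
    Complex.norm_of_nonneg (by positivity)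
  have hε : ‖((ε : ℤ) : ℂ)‖ = 1 := by
    rcases Int.units_eq_one_or ε with rfl | rfl <;> simp
  simp only [boxErrorKernel, mul_assoc]
  rw [integral_const_mul,
    integral_iterate_centralDiff_mul_phaseSign hy (integrable_favardKernel M hn), zero_add,
    integral_favardKernel_mul_phaseSign M hn, norm_mul, norm_mul, norm_pow, hε, one_pow, one_mul,
    Complex.norm_of_nonneg hfavard, hscale]
  field_simp
  ring

theorem bestApprox_boxKernelConv (hn : n ≠ 0) (h_pos : 0 < h) (h_lt : h < 1) {ε : ℤˣ}
    (hy : fourier n ((π * h : ℝ) : AddCircle (2 * π)) = (ε : ℤ) * Complex.I) :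
    bestApprox (n - 1) (fun θ : ℝ => boxKernelConv h M θ) =
      favardK (M + 1) / (π * h * n) ^ (M + 1) := by
  have hle := integral_norm_boxErrorKernel_le M hn h_pos
  have hdual := norm_integral_boxErrorKernel_mul_phaseSign M hn h_pos hy
  have hint := integrable_boxErrorKernel (h := h) M hn
  have hsign := (measurable_phaseSign (T := 2 * π) n 0).aestronglyMeasurable (μ := haarAddCircle)
  have horth (l : ℤ) (hl : l ∈ Finset.Icc (-((n - 1 : ℕ) : ℤ)) (n - 1 : ℕ)) :
      fourierCoeff (phaseSign (T := 2 * π) n 0) (-l) = 0 := by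
    rw [Finset.mem_Icc] at hl
    exact fourierCoeff_phaseSign_eq_zero_of_abs_lt 0 (by rw [abs_neg, abs_lt]; omega)
  have hge := norm_integral_mul_le_integral_norm_of_fourierCoeff_eq hint hint (fun _ _ => rfl)
    hsign (norm_phaseSign_le_one n 0) horth
  rw [hdual] at hge
  rw [hge.antisymm hle]
  refine bestApprox_eq_integral_norm_of_dual (integrable_boxKernelConv h M) hint (fun l hl => ?_)
    hsign (norm_phaseSign_le_one n 0) horth (hle.trans_eq hdual.symm)
  rw [Finset.mem_Icc] at hl
  exact (fourierCoeff_boxErrorKernel M hn h_pos h_lt (by rw [le_abs]; omega)).symm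

theorem fourier_pi_mul_odd_div (hn : n ≠ 0) (j : ℕ) :
    fourier n ((π * ((2 * j + 1) / (2 * n)) : ℝ) : AddCircle (2 * π)) =
      (((-1) ^ j : ℤˣ) : ℤ) * Complex.I := by
  have hphase : ((n : ℤ) : ℂ) * ((π * ((2 * j + 1) / (2 * n)) : ℝ) : ℂ) * Complex.I =
      (2 * j + 1 : ℤ) * (π / 2 : ℝ) * Complex.I := by
    push_cast
    field_simp
  rw [fourier_two_pi_coe, hphase, ← fourier_two_pi_coe, fourier_pi_div_two, mul_comm]
  simp

end BoxKernelApproximation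

/-- For `h ∈ {1/(2n), 3/(2n), …, (2n−1)/(2n)}` and any `m ≥ 1`,
`E_{n−1}(χ_h^m)_{L¹} = K_m/(πhn)^m` exactly. -/
theorem bestApprox_chiConv_eq (n m : ℕ) (hn : 1 ≤ n) (hm : 1 ≤ m) (k : ℕ)
    (hk1 : 1 ≤ k) (hkn : k ≤ n) (h : ℝ) (hh : h = (2 * (k:ℝ) - 1) / (2 * (n:ℝ))) :
    bestApprox (n - 1) (fun θ => (chiConv h m θ : ℂ)) =
      favardK m / (Real.pi * h * n) ^ m := by
  have : (0 : ℝ) < n := by exact_mod_cast hn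
  obtain ⟨j, rfl⟩ := Nat.exists_eq_add_of_le' hk1
  obtain ⟨M, rfl⟩ := Nat.exists_eq_add_of_le' hm
  have hodd : h = (2 * j + 1) / (2 * n) := by
    rw [hh]
    push_cast
    ring
  have h_pos : 0 < h := hodd ▸ by positivity
  have h_lt : h < 1 := by
    have : (j : ℝ) + 1 ≤ n := by exact_mod_cast hkn
    rw [hodd, div_lt_one (by positivity)]
    linarith
  have hy : fourier n ((π * h : ℝ) : AddCircle (2 * π)) = (((-1) ^ j : ℤˣ) : ℤ) * Complex.I :=
    hodd ▸ fourier_pi_mul_odd_div (by omega) j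
  simp only [ofReal_chiConv_succ]
  exact bestApprox_boxKernelConv M (by omega) h_pos h_lt hy
end

section
/- The identity B_1(θ)cos θ = (1/2)sin θ + Σ_{r=0}^∞ ((−1)^r B_{2r+1}(θ) − 2 sin θ) holds for all θ ∈ 𝕋, θ ≠ 0, where B_m are the Bernoulli kernels and the series converges absolutely and uniformly. -/
noncomputable def Bern (m : ℕ) (θ : ℝ) : ℂ :=
  if m = 1 then
    ((Real.pi - θ + 2 * Real.pi * (⌊θ / (2 * Real.pi)⌋ : ℤ) : ℝ) : ℂ)
  else
    ∑' k : ℤ, if k = 0 then 0 else Complex.exp (k * θ * Complex.I) / (Complex.I * k) ^ m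

/-!
Formally, `B_1(θ) = 2 ∑_{n ≥ 1} sin(nθ)/n`, so the coefficient of `sin(nθ)` in `B_1(θ) cos θ` is
`1/(n - 1) + 1/(n + 1) = ∑_{r ≥ 0} 2/n^(2r+1)` for `n ≥ 2` and `1/2` for `n = 1`; the inner sums
are the coefficients of `(-1)^r B_{2r+1}(θ)`. The term `r = 0` converges only conditionally, so it
is set aside. The terms `r ≥ 1` form an absolutely convergent double series, and summing over `r`
first leaves `∑_{n ≥ 2} 2 sin(nθ)/((n - 1)n(n + 1))`. This is the imaginary part of
`e^{-iθ} ∑_n 2 z^(n+1)/((n - 1)n(n + 1))` at `z = e^{iθ}`, a power series which is a combination of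
shifts of the one of `-log(1 - z)` and extends continuously to the closed unit disc.
-/

open Complex Filter Set Topology

section Series

theorem hasSum_of_mem_closure {ι X E : Type*} [TopologicalSpace X] [NormedAddCommGroup E]
    [CompleteSpace E] {f : ι → X → E} {g : X → E} {u : ι → ℝ} {s : Set X} {x : X}
    (hx : x ∈ closure s) (hu : Summable u) (hf : ∀ i, ContinuousWithinAt (f i) s x)
    (hfu : ∀ i, ∀ y ∈ s, ‖f i y‖ ≤ u i) (hfg : ∀ y ∈ s, HasSum (f · y) (g y))
    (hg : ContinuousWithinAt g s x) : HasSum (f · x) (g x) := by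
  have : (𝓝[s] x).NeBot := mem_closure_iff_nhdsWithin_neBot.1 hx
  have hfu_x (i : ι) : ‖f i x‖ ≤ u i :=
    le_of_tendsto (hf i).norm (eventually_nhdsWithin_of_forall (hfu i))
  have htsum : Tendsto (fun y ↦ ∑' i, f i y) (𝓝[s] x) (𝓝 (∑' i, f i x)) :=
    tendsto_tsum_of_dominated_convergence hu hf
      (eventually_nhdsWithin_of_forall fun y hy i ↦ hfu i y hy)
  have hg' : Tendsto (fun y ↦ ∑' i, f i y) (𝓝[s] x) (𝓝 (g x)) :=
    hg.congr' (eventually_nhdsWithin_of_forall fun y hy ↦ (hfg y hy).tsum_eq.symm)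
  exact tendsto_nhds_unique htsum hg' ▸ (Summable.of_norm_bounded hu hfu_x).hasSum

theorem hasSum_comm_of_summable {α β E : Type*} [AddCommMonoid E] [TopologicalSpace E]
    [ContinuousAdd E] [T3Space E] {f : α × β → E} {g : α → E} {h : β → E} {s : E}
    (hf : Summable f) (hg : ∀ a, HasSum (fun b ↦ f (a, b)) (g a))
    (hh : ∀ b, HasSum (fun a ↦ f (a, b)) (h b)) (hs : HasSum g s) : HasSum h s := by
  have hfs : HasSum f s := (hf.hasSum.prod_fiberwise hg).unique hs ▸ hf.hasSum
  exact ((Equiv.prodComm β α).hasSum_iff.2 hfs).prod_fiberwise hh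

theorem hasSum_one_div_pow_odd {𝕜 : Type*} [NormedField 𝕜] {x : 𝕜} (hx : 1 < ‖x‖) :
    HasSum (fun r : ℕ ↦ 1 / x ^ (2 * (r + 1) + 1)) (1 / ((x - 1) * x * (x + 1))) := by
  have hx0 : x ≠ 0 := norm_pos_iff.1 (zero_lt_one.trans hx)
  have hx_sub : x - 1 ≠ 0 := sub_ne_zero.2 (by rintro rfl; simp at hx)
  have hx_add : x + 1 ≠ 0 := fun h ↦ by simp [eq_neg_of_add_eq_zero_left h] at hx
  have hx_sq : x ^ 2 - 1 ≠ 0 := by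
    rw [show x ^ 2 - 1 = (x - 1) * (x + 1) by ring]
    exact mul_ne_zero hx_sub hx_add
  have hratio : ‖(x ^ 2)⁻¹‖ < 1 := by
    rw [norm_inv, norm_pow]
    exact inv_lt_one_of_one_lt₀ (one_lt_pow₀ hx two_ne_zero)
  have hgeom := (hasSum_geometric_of_norm_lt_one hratio).mul_left (1 / x ^ 3)
  convert! hgeom using 1
  · ext r
    rw [inv_pow, ← pow_mul]
    field_simp
    ring
  · field_simp
    ring

theorem summable_one_div_add_one_mul_add_two_mul_add_three :
    Summable (fun n : ℕ ↦ 1 / (((n : ℝ) + 1) * (n + 2) * (n + 3))) := by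
  have hsq : Summable (fun n : ℕ ↦ 1 / ((n + 1 : ℕ) : ℝ) ^ 2) :=
    (summable_nat_add_iff 1).2 (Real.summable_one_div_nat_pow.2 one_lt_two)
  refine hsq.of_nonneg_of_le (fun n ↦ by positivity) fun n ↦ ?_
  push_cast
  gcongr
  nlinarith [n.cast_nonneg (α := ℝ)]

theorem hasSum_one_div_add_two_pow_odd (n : ℕ) :
    HasSum (fun r : ℕ ↦ 1 / ((n : ℝ) + 2) ^ (2 * (r + 1) + 1))
      (1 / (((n : ℝ) + 1) * (n + 2) * (n + 3))) := by
  have hnorm : 1 < ‖(n : ℝ) + 2‖ := by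
    rw [Real.norm_of_nonneg (by positivity)]
    linarith [n.cast_nonneg (α := ℝ)]
  convert! hasSum_one_div_pow_odd hnorm using 2
  ring

theorem summable_one_div_add_two_pow_odd :
    Summable (fun p : ℕ × ℕ ↦ 1 / ((p.1 : ℝ) + 2) ^ (2 * (p.2 + 1) + 1)) := by
  refine (summable_prod_of_nonneg fun p ↦ by positivity).2
    ⟨fun n ↦ (hasSum_one_div_add_two_pow_odd n).summable, ?_⟩
  simpa only [(hasSum_one_div_add_two_pow_odd _).tsum_eq]
    using summable_one_div_add_one_mul_add_two_mul_add_three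

end Series

section Logarithm

theorem one_sub_mem_slitPlane {z : ℂ} (hz : ‖z‖ ≤ 1) (hz1 : z ≠ 1) : 1 - z ∈ slitPlane := by
  by_contra hmem
  simp only [mem_slitPlane_iff, sub_re, one_re, sub_im, one_im, zero_sub, neg_ne_zero, not_or,
    not_lt, not_not, sub_nonpos] at hmem
  exact hz1 (Complex.ext (((re_le_norm z).trans hz).antisymm hmem.1) hmem.2)

theorem hasSum_pow_add_three_div_of_norm_lt_one {z : ℂ} (hz : ‖z‖ < 1) :
    HasSum (fun n : ℕ ↦ z ^ (n + 3) / (((n : ℂ) + 1) * (n + 2) * (n + 3)))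
      ((-log (1 - z) * (1 - z) ^ 2 - z + 3 / 2 * z ^ 2) / 2) := by
  have hlog := hasSum_taylorSeries_neg_log hz
  have hlog_shift (k : ℕ) := (hasSum_nat_add_iff' k).2 hlog
  -- `2 / ((n + 1) (n + 2) (n + 3)) = 1 / (n + 1) - 2 / (n + 2) + 1 / (n + 3)`
  have hcomb := ((((hlog_shift 1).mul_left (z ^ 2)).sub ((hlog_shift 2).mul_left (2 * z))).add
    (hlog_shift 3)).div_const 2
  convert! hcomb using 1
  · ext n
    have h1 : (n : ℂ) + 1 ≠ 0 := by exact_mod_cast n.succ_ne_zero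
    have h2 : (n : ℂ) + 2 ≠ 0 := by exact_mod_cast Nat.succ_ne_zero (n + 1)
    have h3 : (n : ℂ) + 3 ≠ 0 := by exact_mod_cast Nat.succ_ne_zero (n + 2)
    push_cast
    field_simp
    ring
  · simp only [Finset.sum_range_succ, Finset.sum_range_zero]
    push_cast
    ring

theorem hasSum_pow_add_three_div {z : ℂ} (hz : ‖z‖ ≤ 1) (hz1 : z ≠ 1) :
    HasSum (fun n : ℕ ↦ z ^ (n + 3) / (((n : ℂ) + 1) * (n + 2) * (n + 3)))
      ((-log (1 - z) * (1 - z) ^ 2 - z + 3 / 2 * z ^ 2) / 2) := by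
  refine hasSum_of_mem_closure
    (f := fun (n : ℕ) (y : ℂ) ↦ y ^ (n + 3) / (((n : ℂ) + 1) * (n + 2) * (n + 3)))
    (g := fun y ↦ (-log (1 - y) * (1 - y) ^ 2 - y + 3 / 2 * y ^ 2) / 2)
    (s := Metric.ball 0 1) ?_ summable_one_div_add_one_mul_add_two_mul_add_three
    (fun n ↦ by fun_prop) (fun n y hy ↦ ?_)
    (fun y hy ↦ hasSum_pow_add_three_div_of_norm_lt_one (mem_ball_zero_iff.1 hy)) ?_
  · rwa [closure_ball _ one_ne_zero, mem_closedBall_zero_iff]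
  · have hdenom : ‖((n : ℂ) + 1) * (n + 2) * (n + 3)‖ = ((n : ℝ) + 1) * (n + 2) * (n + 3) := by
      exact_mod_cast norm_natCast ((n + 1) * (n + 2) * (n + 3))
    rw [norm_div, hdenom, norm_pow]
    gcongr
    exact pow_le_one₀ (norm_nonneg y) (mem_ball_zero_iff.1 hy).le
  · have hlog : ContinuousAt (fun y ↦ log (1 - y)) z :=
      (continuousAt_const.sub continuousAt_id).clog (one_sub_mem_slitPlane hz hz1)
    exact ContinuousAt.continuousWithinAt (by fun_prop)

end Logarithm

section Trigonometric

theorem one_sub_exp_mul_I (z : ℂ) :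
    1 - exp (z * I) = 2 * sin (z / 2) * exp ((z - Real.pi) / 2 * I) := by
  have hhalf : exp (-(z / 2) * I) * exp (z / 2 * I) = 1 := by
    rw [← exp_add, neg_mul, neg_add_cancel, exp_zero]
  have hsq : exp (z * I) = exp (z / 2 * I) * exp (z / 2 * I) := by
    rw [← exp_add]
    ring_nf
  have hshift : exp ((z - Real.pi) / 2 * I) = exp (z / 2 * I) * -I := by
    rw [← exp_neg_pi_div_two_mul_I, ← exp_add]
    ring_nf
  rw [hsq, hshift, sin]
  linear_combination (-1 : ℂ) * hhalf +
    (exp (-(z / 2) * I) - exp (z / 2 * I)) * exp (z / 2 * I) * I_sq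

theorem sin_half_pos {θ : ℝ} (h0 : 0 < θ) (h2π : θ < 2 * Real.pi) : 0 < Real.sin (θ / 2) :=
  Real.sin_pos_of_pos_of_lt_pi (by linarith) (by linarith)

theorem exp_ofReal_mul_I_ne_one {θ : ℝ} (h0 : 0 < θ) (h2π : θ < 2 * Real.pi) :
    exp (θ * I) ≠ 1 := by
  have hsin : sin ((θ : ℂ) / 2) ≠ 0 := by exact_mod_cast (sin_half_pos h0 h2π).ne'
  refine (sub_ne_zero.1 ?_).symm
  rw [one_sub_exp_mul_I]
  exact mul_ne_zero (mul_ne_zero two_ne_zero hsin) (exp_ne_zero _)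

theorem arg_one_sub_exp_ofReal_mul_I {θ : ℝ} (h0 : 0 < θ) (h2π : θ < 2 * Real.pi) :
    arg (1 - exp (θ * I)) = (θ - Real.pi) / 2 := by
  have hpolar : 1 - exp (θ * I) = ((2 * Real.sin (θ / 2) : ℝ) : ℂ) *
      (cos ((θ - Real.pi) / 2 : ℝ) + sin ((θ - Real.pi) / 2 : ℝ) * I) := by
    rw [one_sub_exp_mul_I, exp_mul_I]
    push_cast
    rfl
  rw [hpolar]
  exact arg_mul_cos_add_sin_mul_I (mul_pos two_pos (sin_half_pos h0 h2π))
    ⟨by linarith [Real.pi_pos], by linarith⟩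

theorem hasSum_exp_add_two_mul_I_div {θ : ℝ} (h0 : 0 < θ) (h2π : θ < 2 * Real.pi) :
    HasSum (fun n : ℕ ↦
        exp ((((n : ℝ) + 2) * θ : ℝ) * I) / ((((n : ℝ) + 1) * (n + 2) * (n + 3) : ℝ) : ℂ))
      (((1 - Real.cos θ : ℝ) : ℂ) * log (1 - exp (θ * I)) - (1 / 2 : ℝ) +
        (3 / 4 : ℝ) * exp (θ * I)) := by
  have hsum := (hasSum_pow_add_three_div (norm_exp_ofReal_mul_I θ).le
    (exp_ofReal_mul_I_ne_one h0 h2π)).mul_left (exp (-θ * I))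
  have hinv : exp (-θ * I) * exp (θ * I) = 1 := by
    rw [← exp_add, neg_mul, neg_add_cancel, exp_zero]
  convert! hsum using 1
  · ext n
    have hpow : exp ((((n : ℝ) + 2) * θ : ℝ) * I) = exp (θ * I) ^ (n + 2) := by
      rw [← exp_nat_mul]
      push_cast
      ring_nf
    push_cast at hpow ⊢
    rw [hpow]
    linear_combination
      (-exp (θ * I) ^ (n + 2) / (((n : ℂ) + 1) * (n + 2) * (n + 3))) * hinv
  · push_cast
    rw [cos]
    linear_combination
      (log (1 - exp (θ * I)) * (exp (θ * I) / 2 - 1) + 1 / 2 - 3 / 4 * exp (θ * I)) * hinv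

theorem hasSum_sin_add_two_mul_div {θ : ℝ} (h0 : 0 < θ) (h2π : θ < 2 * Real.pi) :
    HasSum (fun n : ℕ ↦
        Real.sin (((n : ℝ) + 2) * θ) / (((n : ℝ) + 1) * (n + 2) * (n + 3)))
      (((Real.pi - θ) * (Real.cos θ - 1) + 3 / 2 * Real.sin θ) / 2) := by
  convert! hasSum_im (hasSum_exp_add_two_mul_I_div h0 h2π) using 1
  · ext n
    rw [div_ofReal_im, exp_ofReal_mul_I_im]
  · rw [add_im, sub_im, im_ofReal_mul, im_ofReal_mul, log_im, arg_one_sub_exp_ofReal_mul_I h0 h2π,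
      exp_ofReal_mul_I_im, ofReal_im]
    ring

end Trigonometric

section Bernoulli

theorem bern_one_of_mem_Ico {θ : ℝ} (hθ : θ ∈ Ico 0 (2 * Real.pi)) :
    Bern 1 θ = (Real.pi - θ : ℝ) := by
  have hfloor : ⌊θ / (2 * Real.pi)⌋ = 0 :=
    Int.floor_eq_zero_iff.2
      ⟨div_nonneg hθ.1 Real.two_pi_pos.le, (div_lt_one Real.two_pi_pos).2 hθ.2⟩
  rw [Bern, if_pos rfl, hfloor, Int.cast_zero, mul_zero, add_zero]

-- Division by zero makes the summand at `k = 0` vanish, as the `if` in `Bern` does explicitly.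
theorem hasSum_bern {m : ℕ} (hm : 1 < m) (θ : ℝ) :
    HasSum (fun k : ℤ ↦ exp (k * θ * I) / (I * k) ^ m) (Bern m θ) := by
  have hsummable : Summable (fun k : ℤ ↦ exp (k * θ * I) / (I * k) ^ m) := by
    refine Summable.of_norm_bounded (Real.summable_one_div_int_pow.2 hm).norm fun k ↦ le_of_eq ?_
    have hexp : ‖exp (k * θ * I)‖ = 1 := by exact_mod_cast norm_exp_ofReal_mul_I (k * θ)
    simp only [norm_div, norm_pow, norm_mul, hexp, norm_I, one_mul, norm_intCast, norm_one,
      Real.norm_eq_abs]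
  have hbern : Bern m θ = ∑' k : ℤ, exp (k * θ * I) / (I * k) ^ m := by
    rw [Bern, if_neg hm.ne']
    refine tsum_congr fun k ↦ ite_eq_right_iff.2 ?_
    rintro rfl
    simp [(zero_lt_one.trans hm).ne']
  exact hbern ▸ hsummable.hasSum

theorem exp_div_add_exp_neg_div_eq_sin (r : ℕ) (x θ : ℂ) :
    (-1) ^ r * (exp (x * θ * I) / (I * x) ^ (2 * r + 1) +
      exp (-x * θ * I) / (I * -x) ^ (2 * r + 1)) = 2 * sin (x * θ) / x ^ (2 * r + 1) := by
  have hI : I ^ (2 * r + 1) = (-1) ^ r * I := by rw [pow_succ, pow_mul, I_sq]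
  have hunit : (-1 : ℂ) ^ r / ((-1) ^ r * I) = -I := by
    rw [div_mul_cancel_left₀ (by simp), inv_I]
  rw [mul_neg, (odd_two_mul_add_one r).neg_pow, mul_pow, hI, sin, neg_mul x θ]
  linear_combination
    ((exp (x * θ * I) - exp (-(x * θ) * I)) / x ^ (2 * r + 1)) * hunit

theorem hasSum_sin_div_pow_bern {r : ℕ} (hr : r ≠ 0) (θ : ℝ) :
    HasSum (fun n : ℕ ↦ ((2 * Real.sin (n * θ) / (n : ℝ) ^ (2 * r + 1) : ℝ) : ℂ))
      ((-1) ^ r * Bern (2 * r + 1) θ) := by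
  have hpair := (hasSum_bern (m := 2 * r + 1) (by lia) θ).nat_add_neg.mul_left ((-1) ^ r)
  convert! hpair using 1
  · ext n
    push_cast
    exact (exp_div_add_exp_neg_div_eq_sin r n θ).symm
  · simp

theorem hasSum_sin_add_two_mul_div_pow_bern {r : ℕ} (hr : r ≠ 0) (θ : ℝ) :
    HasSum (fun n : ℕ ↦
        ((2 * Real.sin (((n : ℝ) + 2) * θ) / ((n : ℝ) + 2) ^ (2 * r + 1) : ℝ) : ℂ))
      ((-1) ^ r * Bern (2 * r + 1) θ - 2 * (Real.sin θ : ℂ)) := by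
  convert! (hasSum_nat_add_iff' 2).2 (hasSum_sin_div_pow_bern hr θ) using 1
  · push_cast
    rfl
  · simp [Finset.sum_range_succ]

theorem summable_sin_add_two_mul_div_pow (θ : ℝ) :
    Summable (fun p : ℕ × ℕ ↦
      2 * Real.sin (((p.1 : ℝ) + 2) * θ) / ((p.1 : ℝ) + 2) ^ (2 * (p.2 + 1) + 1)) := by
  refine Summable.of_norm_bounded (summable_one_div_add_two_pow_odd.mul_left 2) fun p ↦ ?_
  have hsin : ‖2 * Real.sin (((p.1 : ℝ) + 2) * θ)‖ ≤ 2 := by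
    rw [norm_mul, Real.norm_two]
    exact mul_le_of_le_one_right zero_le_two (Real.abs_sin_le_one _)
  rw [norm_div, Real.norm_of_nonneg (r := (_ : ℝ) ^ _) (by positivity), mul_one_div]
  gcongr

theorem hasSum_bern_succ_sub_two_mul_sin {θ : ℝ} (h0 : 0 < θ) (h2π : θ < 2 * Real.pi) :
    HasSum (fun r : ℕ ↦ (-1) ^ (r + 1) * Bern (2 * (r + 1) + 1) θ - 2 * (Real.sin θ : ℂ))
      ((Real.pi - θ) * (Real.cos θ - 1) + 3 / 2 * Real.sin θ : ℝ) := by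
  refine hasSum_comm_of_summable (summable_ofReal.2 (summable_sin_add_two_mul_div_pow θ))
    (g := fun n : ℕ ↦ ((2 * (Real.sin (((n : ℝ) + 2) * θ) /
      (((n : ℝ) + 1) * (n + 2) * (n + 3))) : ℝ) : ℂ))
    (fun n ↦ hasSum_ofReal.2 ?_)
    (fun r ↦ hasSum_sin_add_two_mul_div_pow_bern r.succ_ne_zero θ) (hasSum_ofReal.2 ?_)
  · convert! (hasSum_one_div_add_two_pow_odd n).mul_left (2 * Real.sin (((n : ℝ) + 2) * θ)) using 1
    · simp only [mul_one_div]
    · ring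
  · convert! (hasSum_sin_add_two_mul_div h0 h2π).mul_left 2 using 1
    ring

end Bernoulli

/-- `B_1(θ)cos θ = (1/2)sin θ + Σ_{r≥0} ((−1)^r B_{2r+1}(θ) − 2 sin θ)` for `θ ≠ 0` on `𝕋`,
with absolute convergence of the series. -/
theorem quasiBernoulli_K1_series (θ : ℝ) (h1 : 0 < θ) (h2 : θ < 2 * Real.pi) :
    Summable (fun r : ℕ =>
      ‖(-1 : ℂ) ^ r * Bern (2 * r + 1) θ - 2 * (Real.sin θ : ℂ)‖) ∧
    Bern 1 θ * (Real.cos θ : ℂ) =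
      (1 / 2) * (Real.sin θ : ℂ) +
        ∑' r : ℕ, ((-1 : ℂ) ^ r * Bern (2 * r + 1) θ - 2 * (Real.sin θ : ℂ)) := by
  have hsum := (hasSum_nat_add_iff
    (f := fun r : ℕ ↦ (-1 : ℂ) ^ r * Bern (2 * r + 1) θ - 2 * (Real.sin θ : ℂ)) 1).1
    (hasSum_bern_succ_sub_two_mul_sin h1 h2)
  refine ⟨hsum.summable.norm, ?_⟩
  rw [hsum.tsum_eq, Finset.sum_range_one, mul_zero, zero_add, pow_zero, one_mul,
    bern_one_of_mem_Ico ⟨h1.le, h2⟩]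
  push_cast
  ring
end
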